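/- There exist absolute constants c > 0 and C > 0 such that for every integer N ≥ 2 and every set A ⊆ {1,…,N} containing no non-trivial three-term arithmetic progression, one has |A| ≤ C·N/(log N)^{1+c}. -/

import Mathlib

/-!
The argument is that of Kelley and Meka, run on Bohr sets of a finite abelian group of odd order.

Let `A` be free of three-term progressions and of density `2⁻ⁿ`. Then `A` restricted to a regular
Bohr set has far too few solutions of `x + y = 2 z`, so by Hölder the autocorrelation of its
balanced function has a large `p`-th moment with `p` of order `n`. Positive definiteness of
autocorrelations turns this into a large moment of the autocorrelation of `A` itself, which must
come from differences represented more often in `A` than expected. Sifting (intersecting random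
translates of `A`) finds sets `A₁`, `A₂` of density at least `2^(-O(n²))` almost all of whose
differences are popular in this sense. Croot–Sisask almost periodicity, followed by Chang's theorem
for the large spectrum, smooths the average over `A₁ - A₂` by a Bohr set whose rank is larger by a
polynomial in `n`; on a translate of this Bohr set the density of `A` grows by a constant factor.
After `O(n)` steps the density would exceed `1` unless the group is small, and this forces
`log |G| = O(n ^ 19)`. The case of intervals follows by embedding `{1, …, N}` in `ℤ / (2N + 1)`.
-/

open Finset

namespace KelleyMeka

/-! ### Bohr sets -/

section BohrSets

variable {G : Type*} [AddCommGroup G]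

lemma norm_map_sub_sub_one [Finite G] (γ : AddChar G ℂ) (x y : G) :
    ‖γ (x - y) - 1‖ = ‖γ x - γ y‖ := by
  have factor : γ x - γ y = γ y * (γ (x - y) - 1) := by
    rw [mul_sub, ← AddChar.map_add_eq_mul, add_sub_cancel, mul_one]
  rw [factor, norm_mul, AddChar.norm_apply, one_mul]

open Classical in
/-- The frequencies of `Γ` precomposed with `φ`; its Bohr sets are the preimages under `φ` of those
of `Γ`. With `φ` the halving map this describes the dilate `2 • bohrSet Γ ρ`. -/
noncomputable def precomp (φ : G →+ G) (Γ : Finset (AddChar G ℂ)) : Finset (AddChar G ℂ) :=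
  Γ.image fun γ ↦ γ.compAddMonoidHom φ

lemma card_precomp_le (φ : G →+ G) (Γ : Finset (AddChar G ℂ)) : #(precomp φ Γ) ≤ #Γ :=
  card_image_le

lemma half_add_self {half : G →+ G} (half_add_half : ∀ x, half x + half x = x) (x : G) :
    half (x + x) = x := by
  rw [map_add, half_add_half]

variable [Fintype G] {Γ Δ : Finset (AddChar G ℂ)} {ρ δ ε : ℝ} {x y : G}

open Classical in
/-- The Bohr set with frequency set `Γ` and radius `ρ`, a substitute for a subspace in a general
finite abelian group. The distance of `γ x` to `1` is measured in `ℂ`, so radius `2` is no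
constraint. -/
noncomputable def bohrSet (Γ : Finset (AddChar G ℂ)) (ρ : ℝ) : Finset G :=
  {x | ∀ γ ∈ Γ, ‖γ x - 1‖ ≤ ρ}

lemma mem_bohrSet : x ∈ bohrSet Γ ρ ↔ ∀ γ ∈ Γ, ‖γ x - 1‖ ≤ ρ := by
  simp [bohrSet]

lemma zero_mem_bohrSet (hρ : 0 ≤ ρ) : (0 : G) ∈ bohrSet Γ ρ := by
  simp [mem_bohrSet, hρ]

@[simp]
lemma neg_mem_bohrSet : -x ∈ bohrSet Γ ρ ↔ x ∈ bohrSet Γ ρ := by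
  have norm_neg (γ : AddChar G ℂ) : ‖γ (-x) - 1‖ = ‖γ x - 1‖ := by
    rw [← zero_sub, norm_map_sub_sub_one, AddChar.map_zero_eq_one, norm_sub_rev]
  simp only [mem_bohrSet, norm_neg]

lemma add_mem_bohrSet (hx : x ∈ bohrSet Γ ρ) (hy : y ∈ bohrSet Γ δ) :
    x + y ∈ bohrSet Γ (ρ + δ) := by
  rw [mem_bohrSet] at *
  intro γ hγ
  calc ‖γ (x + y) - 1‖ = ‖γ x * (γ y - 1) + (γ x - 1)‖ := by
        rw [AddChar.map_add_eq_mul]; ring_nf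
    _ ≤ ‖γ x * (γ y - 1)‖ + ‖γ x - 1‖ := norm_add_le _ _
    _ = ‖γ y - 1‖ + ‖γ x - 1‖ := by rw [norm_mul, AddChar.norm_apply, one_mul]
    _ ≤ ρ + δ := by linarith [hx γ hγ, hy γ hγ]

lemma sub_mem_bohrSet (hx : x ∈ bohrSet Γ ρ) (hy : y ∈ bohrSet Γ δ) :
    x - y ∈ bohrSet Γ (ρ + δ) := by
  rw [sub_eq_add_neg]
  exact add_mem_bohrSet hx (neg_mem_bohrSet.2 hy)

lemma sum_mem_bohrSet {j : ℕ} {s : Fin j → G} (hs : ∀ i, s i ∈ bohrSet Γ ρ) :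
    ∑ i, s i ∈ bohrSet Γ (j * ρ) := by
  induction j with
  | zero => simp [zero_mem_bohrSet]
  | succ j ih =>
    rw [Fin.sum_univ_castSucc, Nat.cast_succ, add_one_mul]
    exact add_mem_bohrSet (ih fun i ↦ hs i.castSucc) (hs _)

lemma bohrSet_mono (h : ρ ≤ δ) : bohrSet Γ ρ ⊆ bohrSet Γ δ := fun _ hx ↦
  mem_bohrSet.2 fun γ hγ ↦ (mem_bohrSet.1 hx γ hγ).trans h

lemma bohrSet_anti (h : Γ ⊆ Δ) : bohrSet Δ ρ ⊆ bohrSet Γ ρ := fun _ hx ↦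
  mem_bohrSet.2 fun γ hγ ↦ mem_bohrSet.1 hx γ (h hγ)

lemma bohrSet_nonempty (Γ : Finset (AddChar G ℂ)) (hρ : 0 ≤ ρ) : (bohrSet Γ ρ).Nonempty :=
  ⟨0, zero_mem_bohrSet hρ⟩

lemma card_bohrSet_pos (Γ : Finset (AddChar G ℂ)) (hρ : 0 ≤ ρ) : (0 : ℝ) < #(bohrSet Γ ρ) := by
  exact_mod_cast (bohrSet_nonempty Γ hρ).card_pos

lemma bohrSet_two : bohrSet Γ 2 = univ := by
  refine eq_univ_of_forall fun x ↦ mem_bohrSet.2 fun γ _ ↦ (norm_sub_le _ _).trans ?_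
  rw [AddChar.norm_apply, norm_one, one_add_one_eq_two]

/-- The cell containing `(γ x)_{γ ∈ Γ}` when each copy of `ℂ` is cut into squares of side `r`. -/
noncomputable def gridCell (Γ : Finset (AddChar G ℂ)) (r : ℝ) (x : G) : Γ → ℤ × ℤ :=
  fun γ ↦ (⌊(γ.1 x - 1).re / r⌋, ⌊(γ.1 x - 1).im / r⌋)

lemma gridCell_mem_piFinset {r : ℝ} (hr : 0 < r) {n : ℕ} (hx : x ∈ bohrSet Γ (n * r)) :
    gridCell Γ r x ∈ Fintype.piFinset fun _ : Γ ↦ Icc (-n : ℤ) n ×ˢ Icc (-n : ℤ) n := by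
  have floor_mem {t : ℝ} (ht : |t| ≤ n * r) : ⌊t / r⌋ ∈ Icc (-n : ℤ) n := by
    rw [abs_le] at ht
    rw [mem_Icc, Int.le_floor, ← Int.lt_add_one_iff, Int.floor_lt, le_div_iff₀ hr, div_lt_iff₀ hr]
    push_cast
    constructor <;> linarith
  rw [Fintype.mem_piFinset]
  intro γ
  have hγ := mem_bohrSet.1 hx γ.1 γ.2
  exact mem_product.2 ⟨floor_mem ((Complex.abs_re_le_norm _).trans hγ),
    floor_mem ((Complex.abs_im_le_norm _).trans hγ)⟩

lemma sub_mem_bohrSet_of_gridCell_eq {r : ℝ} (hr : 0 < r) (h : gridCell Γ r x = gridCell Γ r y) :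
    x - y ∈ bohrSet Γ (2 * r) := by
  have close {s t : ℝ} (hst : ⌊s / r⌋ = ⌊t / r⌋) : |s - t| ≤ r := by
    have := Int.abs_sub_lt_one_of_floor_eq_floor hst
    rw [← sub_div, abs_div, abs_of_pos hr, div_lt_one hr] at this
    exact this.le
  refine mem_bohrSet.2 fun γ hγ ↦ ?_
  obtain ⟨hre, him⟩ := Prod.mk.inj (congrFun h ⟨γ, hγ⟩)
  replace hre := close hre
  replace him := close him
  rw [← Complex.sub_re, sub_sub_sub_cancel_right] at hre
  rw [← Complex.sub_im, sub_sub_sub_cancel_right] at him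
  rw [norm_map_sub_sub_one]
  linarith [Complex.norm_le_abs_re_add_abs_im (γ x - γ y)]

lemma card_bohrSet_two_mul_le (Γ : Finset (AddChar G ℂ)) (hρ : 0 < ρ) :
    #(bohrSet Γ (2 * ρ)) ≤ 81 ^ #Γ * #(bohrSet Γ ρ) := by
  classical
  set cells := Fintype.piFinset fun _ : Γ ↦ Icc (-4 : ℤ) 4 ×ˢ Icc (-4 : ℤ) 4 with cells_def
  have card_cells : #cells = 81 ^ #Γ := by
    simp [cells_def, Fintype.card_piFinset]
  have maps_to : ∀ x ∈ bohrSet Γ (2 * ρ), gridCell Γ (ρ / 2) x ∈ cells := fun x hx ↦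
    gridCell_mem_piFinset (n := 4) (half_pos hρ) (by convert hx using 2; push_cast; ring)
  have fiber_le (c) (_ : c ∈ cells) :
      #{x ∈ bohrSet Γ (2 * ρ) | gridCell Γ (ρ / 2) x = c} ≤ #(bohrSet Γ ρ) := by
    obtain h | ⟨x₀, hx₀⟩ := {x ∈ bohrSet Γ (2 * ρ) | gridCell Γ (ρ / 2) x = c}.eq_empty_or_nonempty
    · simp [h]
    refine card_le_card_of_injOn (· - x₀) (fun x hx ↦ ?_) sub_left_injective.injOn
    have := sub_mem_bohrSet_of_gridCell_eq (half_pos hρ)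
      ((mem_filter.1 hx).2.trans (mem_filter.1 hx₀).2.symm)
    rwa [mul_div_cancel₀ _ two_ne_zero] at this
  have := card_le_mul_card_image_of_maps_to maps_to _ fiber_le
  rwa [card_cells, mul_comm #(bohrSet Γ ρ)] at this

lemma card_le_mul_card_bohrSet_half_pow (Γ : Finset (AddChar G ℂ)) (j : ℕ) :
    Fintype.card G ≤ 81 ^ (#Γ * (j + 1)) * #(bohrSet Γ ((1 / 2) ^ j)) := by
  induction j with
  | zero =>
    have := card_bohrSet_two_mul_le Γ one_pos
    rw [mul_one, bohrSet_two, card_univ] at this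
    simpa using this
  | succ j ih =>
    have doubling := card_bohrSet_two_mul_le Γ (show 0 < (1 / 2 : ℝ) ^ (j + 1) by positivity)
    rw [show 2 * (1 / 2 : ℝ) ^ (j + 1) = (1 / 2) ^ j by ring] at doubling
    calc Fintype.card G ≤ 81 ^ (#Γ * (j + 1)) * #(bohrSet Γ ((1 / 2) ^ j)) := ih
      _ ≤ 81 ^ (#Γ * (j + 1)) * (81 ^ #Γ * #(bohrSet Γ ((1 / 2) ^ (j + 1)))) := by gcongr
      _ = 81 ^ (#Γ * (j + 1 + 1)) * #(bohrSet Γ ((1 / 2) ^ (j + 1))) := by ring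

/-- Enlarging the radius `ρ` by `δ` enlarges the Bohr set by a factor at most `1 + ε`: Bourgain's
regularity at one scale. -/
def BohrRegular (Γ : Finset (AddChar G ℂ)) (ρ δ ε : ℝ) : Prop :=
  (#(bohrSet Γ (ρ + δ)) : ℝ) ≤ (1 + ε) * #(bohrSet Γ ρ)

lemma BohrRegular.mono {δ' ε' : ℝ} (h : BohrRegular Γ ρ δ ε) (hδ : δ' ≤ δ) (hε : ε ≤ ε') :
    BohrRegular Γ ρ δ' ε' :=
  calc (#(bohrSet Γ (ρ + δ')) : ℝ) ≤ #(bohrSet Γ (ρ + δ)) := by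
        exact_mod_cast card_le_card (bohrSet_mono (by gcongr))
    _ ≤ (1 + ε) * #(bohrSet Γ ρ) := h
    _ ≤ (1 + ε') * #(bohrSet Γ ρ) := by gcongr

lemma BohrRegular.card_le_two_mul {δ' : ℝ} (h : BohrRegular Γ ρ δ ε) (hε : ε ≤ 1) (hδ : δ' ≤ δ) :
    (#(bohrSet Γ (ρ + δ')) : ℝ) ≤ 2 * #(bohrSet Γ ρ) := by
  rw [← one_add_one_eq_two]
  exact h.mono hδ hε

lemma exists_apply_add_div_le_mul (f : ℝ → ℝ) {r q : ℝ} (hr : 0 ≤ r) (hq : 0 ≤ q) {J : ℕ}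
    (hJ : J ≠ 0) (hf : f (2 * r) < q ^ J * f r) :
    ∃ ρ ∈ Set.Icc r (2 * r), f (ρ + r / J) ≤ q * f ρ := by
  by_contra! growth
  have iterated (j : ℕ) (hj : j ≤ J) : q ^ j * f r ≤ f (r + j * (r / J)) := by
    induction j with
    | zero => simp
    | succ j ih =>
      have hjr : j * (r / J) ≤ r := by
        rw [mul_div_left_comm]
        exact mul_le_of_le_one_right hr (div_le_one_of_le₀ (mod_cast by lia) (by positivity))
      have hstep := growth (r + j * (r / J)) ⟨le_add_of_nonneg_right (by positivity), by linarith⟩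
      calc q ^ (j + 1) * f r = q * (q ^ j * f r) := by ring
        _ ≤ q * f (r + j * (r / J)) := by gcongr; exact ih (by lia)
        _ ≤ f (r + j * (r / J) + r / J) := hstep.le
        _ = f (r + (j + 1 : ℕ) * (r / J)) := by push_cast; ring_nf
  have := iterated J le_rfl
  rw [mul_div_cancel₀ _ (by exact_mod_cast hJ), ← two_mul] at this
  exact absurd hf this.not_gt

lemma two_le_one_add_one_div_pow {K : ℕ} (hK : K ≠ 0) : 2 ≤ (1 + 1 / (K : ℝ)) ^ K := by
  have one_div_nonneg : 0 ≤ 1 / (K : ℝ) := by positivity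
  have bernoulli := one_add_mul_le_pow (a := 1 / (K : ℝ)) (by linarith) K
  rw [mul_one_div_cancel (by exact_mod_cast hK)] at bernoulli
  linarith

lemma exists_bohrRegular {d K : ℕ} (hΓ : #Γ ≤ d) (hK : K ≠ 0) (hρ : 0 < ρ) :
    ∃ r, ρ / 2 ≤ r ∧ r ≤ ρ ∧ BohrRegular Γ r (1 / (14 * (d + 1) * K) * r) (1 / K) := by
  have doubling : (#(bohrSet Γ (2 * (ρ / 2))) : ℝ) ≤ 81 ^ #Γ * #(bohrSet Γ (ρ / 2)) := by
    exact_mod_cast card_bohrSet_two_mul_le Γ (half_pos hρ)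
  have many_steps : (81 : ℝ) ^ #Γ < (1 + 1 / K) ^ (7 * (d + 1) * K) :=
    calc (81 : ℝ) ^ #Γ < 128 ^ (d + 1) :=
          pow_lt_pow_left₀ (by norm_num) (by norm_num) (by lia) |>.trans_le' <|
            pow_le_pow_right₀ (by norm_num) (by lia)
      _ = 2 ^ (7 * (d + 1)) := by rw [pow_mul]; norm_num
      _ ≤ ((1 + 1 / (K : ℝ)) ^ K) ^ (7 * (d + 1)) := by gcongr; exact two_le_one_add_one_div_pow hK
      _ = (1 + 1 / K) ^ (7 * (d + 1) * K) := by rw [← pow_mul]; ring_nf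
  obtain ⟨r, hr, hgrowth⟩ := exists_apply_add_div_le_mul (fun s ↦ #(bohrSet Γ s))
    (half_pos hρ).le (show (0 : ℝ) ≤ 1 + 1 / K by positivity)
    (show 7 * (d + 1) * K ≠ 0 by positivity)
    (doubling.trans_lt (mul_lt_mul_of_pos_right many_steps (card_bohrSet_pos Γ (half_pos hρ).le)))
  rw [mul_div_cancel₀ _ two_ne_zero] at hr
  refine ⟨r, hr.1, hr.2, BohrRegular.mono (δ := ρ / 2 / (7 * (d + 1) * K : ℕ)) hgrowth ?_ le_rfl⟩
  calc 1 / (14 * (d + 1) * K) * r ≤ 1 / (14 * (d + 1) * K) * ρ := by gcongr; exact hr.2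
    _ = ρ / 2 / (7 * (d + 1) * K : ℕ) := by push_cast; field_simp; norm_num

lemma BohrRegular.card_filter_add_notMem_le [DecidableEq G] (h : BohrRegular Γ ρ δ ε) (hδ : 0 ≤ δ)
    (hy : y ∈ bohrSet Γ δ) :
    (#{x ∈ bohrSet Γ ρ | x + y ∉ bohrSet Γ ρ} : ℝ) ≤ ε * #(bohrSet Γ ρ) := by
  have injects : #{x ∈ bohrSet Γ ρ | x + y ∉ bohrSet Γ ρ} ≤ #(bohrSet Γ (ρ + δ) \ bohrSet Γ ρ) := by
    refine card_le_card_of_injOn (· + y) (fun x hx ↦ ?_) (add_left_injective y).injOn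
    obtain ⟨hx, hxy⟩ := mem_filter.1 hx
    exact mem_sdiff.2 ⟨add_mem_bohrSet hx hy, hxy⟩
  have card_shell := card_sdiff_add_card_eq_card
    (bohrSet_mono (Γ := Γ) (show ρ ≤ ρ + δ from le_add_of_nonneg_right hδ))
  have regular : (#(bohrSet Γ (ρ + δ)) : ℝ) ≤ (1 + ε) * #(bohrSet Γ ρ) := h
  rify at injects card_shell
  linarith

lemma mem_bohrSet_precomp {φ : G →+ G} : x ∈ bohrSet (precomp φ Γ) ρ ↔ φ x ∈ bohrSet Γ ρ := by
  simp [mem_bohrSet, precomp]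

lemma bohrSet_precomp_half_subset {half : G →+ G} (half_add_half : ∀ x, half x + half x = x) :
    bohrSet (precomp half Γ) ρ ⊆ bohrSet Γ (2 * ρ) := by
  intro x hx
  rw [mem_bohrSet_precomp] at hx
  rw [← half_add_half x, two_mul]
  exact add_mem_bohrSet hx hx

lemma card_bohrSet_precomp_half {half : G →+ G} (half_add_half : ∀ x, half x + half x = x)
    (Γ : Finset (AddChar G ℂ)) (ρ : ℝ) : #(bohrSet (precomp half Γ) ρ) = #(bohrSet Γ ρ) := by
  refine card_nbij' half (fun x ↦ x + x) (fun x hx ↦ mem_bohrSet_precomp.1 hx) (fun x hx ↦ ?_)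
    (fun x _ ↦ half_add_half x) (fun x _ ↦ half_add_self half_add_half x)
  rwa [mem_coe, mem_bohrSet_precomp, half_add_self half_add_half]

end BohrSets

/-! ### Moments of autocorrelations -/

section Moments

variable {G ι : Type*} [AddCommGroup G] [Fintype G]

/-- The unnormalised autocorrelation `f ∘ f` of a real function `f`. -/
def autocorr (f : G → ℝ) (x : G) : ℝ := ∑ z, f z * f (z + x)

/-- The unnormalised self-convolution `f ∗ f` of a real function `f`. -/
def selfConv (f : G → ℝ) (x : G) : ℝ := ∑ z, f z * f (x - z)

lemma autocorr_sub (f : G → ℝ) (b b' : G) :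
    autocorr f (b - b') = ∑ z, f (z + b) * f (z + b') := by
  rw [autocorr, ← Equiv.sum_comp (Equiv.addRight b')]
  refine sum_congr rfl fun z _ ↦ ?_
  rw [Equiv.coe_addRight, mul_comm, add_assoc, add_sub_cancel]

lemma selfConv_add_sub (f : G → ℝ) (z b b' : G) :
    selfConv f (z + b - b') = ∑ y, f (y + b) * f (z - b' - y) := by
  rw [selfConv, ← Equiv.sum_comp (Equiv.addRight b)]
  refine sum_congr rfl fun y _ ↦ ?_
  rw [Equiv.coe_addRight, show z + b - b' - (y + b) = z - b' - y by abel]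

lemma sum_mul_autocorr_pow (f : G → ℝ) (E : Finset G) (w : G → G → ℝ) (k : ℕ) :
    ∑ b ∈ E, ∑ b' ∈ E, w b b' * autocorr f (b - b') ^ k =
      ∑ y : Fin k → G, ∑ b ∈ E, ∑ b' ∈ E,
        w b b' * ((∏ i, f (y i + b)) * ∏ i, f (y i + b')) := by
  symm
  rw [sum_comm]
  refine sum_congr rfl fun b _ ↦ ?_
  rw [sum_comm]
  refine sum_congr rfl fun b' _ ↦ ?_
  simp only [autocorr_sub, Fintype.sum_pow, mul_sum, prod_mul_distrib]

lemma sum_autocorr_pow (f : G → ℝ) (E : Finset G) (k : ℕ) :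
    ∑ b ∈ E, ∑ b' ∈ E, autocorr f (b - b') ^ k =
      ∑ y : Fin k → G, (∑ b ∈ E, ∏ i, f (y i + b)) ^ 2 := by
  simpa only [one_mul, sq, sum_mul_sum] using sum_mul_autocorr_pow f E (fun _ _ ↦ 1) k

lemma sum_autocorr_pow_nonneg (f : G → ℝ) (E : Finset G) (k : ℕ) :
    0 ≤ ∑ b ∈ E, ∑ b' ∈ E, autocorr f (b - b') ^ k := by
  rw [sum_autocorr_pow]
  positivity

lemma sum_selfConv_pow (f : G → ℝ) (E : Finset G) (k : ℕ) (z : G) :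
    ∑ b ∈ E, ∑ b' ∈ E, selfConv f (z + b - b') ^ k =
      ∑ y : Fin k → G, (∑ b ∈ E, ∏ i, f (y i + b)) * ∑ b ∈ E, ∏ i, f (z - b - y i) := by
  simp only [sum_mul_sum]
  symm
  rw [sum_comm]
  refine sum_congr rfl fun b _ ↦ ?_
  rw [sum_comm]
  refine sum_congr rfl fun b' _ ↦ ?_
  simp only [selfConv_add_sub, Fintype.sum_pow, prod_mul_distrib]

lemma sum_sq_sum_prod_reflect (f : G → ℝ) {E : Finset G} (hE : ∀ x ∈ E, -x ∈ E) (k : ℕ) (z : G) :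
    ∑ y : Fin k → G, (∑ b ∈ E, ∏ i, f (z - b - y i)) ^ 2 =
      ∑ y : Fin k → G, (∑ b ∈ E, ∏ i, f (y i + b)) ^ 2 := by
  rw [← Equiv.sum_comp (Equiv.piCongrRight fun _ : Fin k ↦ Equiv.subLeft z)]
  refine sum_congr rfl fun y _ ↦ congrArg (· ^ 2) ?_
  refine sum_nbij' Neg.neg Neg.neg hE hE (by simp) (by simp) fun b _ ↦ prod_congr rfl fun i _ ↦ ?_
  simp only [Equiv.piCongrRight_apply, Pi.map_apply, Equiv.subLeft_apply]
  congr 1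
  abel

/-- Positive definiteness of `f ∘ f` lets its moments dominate those of any translate of `f ∗ f`. -/
lemma sum_selfConv_pow_le_sum_autocorr_pow (f : G → ℝ) {E : Finset G} (hE : ∀ x ∈ E, -x ∈ E)
    (k : ℕ) (z : G) :
    ∑ b ∈ E, ∑ b' ∈ E, selfConv f (z + b - b') ^ k ≤
      ∑ b ∈ E, ∑ b' ∈ E, autocorr f (b - b') ^ k := by
  rw [sum_selfConv_pow, sum_autocorr_pow]
  set u : (Fin k → G) → ℝ := fun y ↦ ∑ b ∈ E, ∏ i, f (y i + b)
  set v : (Fin k → G) → ℝ := fun y ↦ ∑ b ∈ E, ∏ i, f (z - b - y i)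
  have reflect : ∑ y, v y ^ 2 = ∑ y, u y ^ 2 := sum_sq_sum_prod_reflect f hE k z
  calc ∑ y, u y * v y ≤ ∑ y, (u y ^ 2 + v y ^ 2) / 2 :=
        sum_le_sum fun y _ ↦ by linarith [two_mul_le_add_sq (u y) (v y)]
    _ = ∑ y, u y ^ 2 := by rw [← sum_div, sum_add_distrib, reflect, add_self_div_two]

/-! ### Unbalancing -/

lemma one_add_div_mul_pow_sub_one_le {p k : ℕ} (hp : Even p) (hp₀ : 0 < p) (hk : Even k)
    (hpk : p ≤ k) (x : ℝ) : 1 + (k / p : ℝ) * (x ^ p - 1) ≤ x ^ k := by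
  have hp' : (0 : ℝ) < p := mod_cast hp₀
  have bernoulli := one_add_mul_self_le_rpow_one_add (s := x ^ p - 1)
    (by linarith [hp.pow_nonneg x]) (p := (k / p : ℝ))
    (by rw [le_div_iff₀ hp', one_mul]; exact_mod_cast hpk)
  refine bernoulli.trans_eq ?_
  rw [add_sub_cancel, ← hp.pow_abs, ← hk.pow_abs, ← Real.rpow_natCast, ← Real.rpow_natCast,
    ← Real.rpow_mul (abs_nonneg _), mul_div_cancel₀ _ hp'.ne']

lemma card_mul_pow_le_sum_pow_of_le (I : Finset ι) (g : ι → ℝ) {c : ℝ} (hc : 0 < c) {p k : ℕ}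
    (hp : Even p) (hp₀ : 0 < p) (hk : Even k) (hpk : p ≤ k)
    (hbig : #I * c ^ p ≤ ∑ i ∈ I, g i ^ p) : #I * c ^ k ≤ ∑ i ∈ I, g i ^ k := by
  have pointwise : ∑ i ∈ I, (1 + (k / p : ℝ) * ((g i / c) ^ p - 1)) ≤ ∑ i ∈ I, (g i / c) ^ k :=
    sum_le_sum fun i _ ↦ one_add_div_mul_pow_sub_one_le hp hp₀ hk hpk _
  have excess : 0 ≤ (k / p : ℝ) * ((∑ i ∈ I, g i ^ p) / c ^ p - #I) :=
    mul_nonneg (by positivity) (sub_nonneg.2 ((le_div_iff₀ (by positivity)).2 hbig))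
  rw [sum_add_distrib, ← mul_sum, sum_sub_distrib] at pointwise
  simp only [div_pow, ← sum_div, sum_const, nsmul_eq_mul, mul_one] at pointwise
  rw [← le_div_iff₀ (by positivity)]
  linarith

lemma one_add_pow_eq_sum_choose_mul (x : ℝ) (q : ℕ) :
    (1 + x) ^ q = ∑ k ∈ range (q + 1), (q.choose k : ℝ) * x ^ k := by
  rw [add_comm, add_pow]
  simp only [one_pow, mul_one, mul_comm]

/-- The right-hand side is chosen as a combination of geometric progressions, so that it can be
summed against binomial coefficients; its last term absorbs the moments of order below `p`. -/
lemma card_mul_le_sum_pow_of_moments_nonneg (I : Finset ι) (g : ι → ℝ) {p : ℕ} (hp : Even p)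
    (hp₀ : 0 < p) (hnonneg : ∀ k, 0 ≤ ∑ i ∈ I, g i ^ k)
    (hbig : #I * (1 / 4) ^ p ≤ ∑ i ∈ I, g i ^ p) (k : ℕ) :
    #I * (((1 / 4) ^ k + (-1 / 4) ^ k) / 2 - 2 ^ p * (1 / 8) ^ k) ≤ ∑ i ∈ I, g i ^ k := by
  have low_nonneg : (0 : ℝ) ≤ 2 ^ p * (1 / 8) ^ k := by positivity
  obtain hk | hk := k.even_or_odd
  · have main : ((1 / 4 : ℝ) ^ k + (-1 / 4) ^ k) / 2 = (1 / 4) ^ k := by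
      rw [neg_div, hk.neg_pow, add_self_div_two]
    rw [main]
    obtain hpk | hpk := le_or_gt p k
    · refine le_trans ?_ (card_mul_pow_le_sum_pow_of_le I g (by norm_num) hp hp₀ hk hpk hbig)
      gcongr
      linarith
    · refine (mul_nonpos_of_nonneg_of_nonpos (by positivity) (sub_nonpos.2 ?_)).trans (hnonneg k)
      calc (1 / 4 : ℝ) ^ k = 2 ^ k * (1 / 8) ^ k := by rw [← mul_pow]; norm_num
        _ ≤ 2 ^ p * (1 / 8) ^ k := by gcongr; norm_num
  · have main : ((1 / 4 : ℝ) ^ k + (-1 / 4) ^ k) / 2 = 0 := by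
      rw [neg_div, hk.neg_pow, add_neg_cancel, zero_div]
    refine (mul_nonpos_of_nonneg_of_nonpos (by positivity) ?_).trans (hnonneg k)
    linarith

lemma two_pow_mul_pow_le_quarter_mul_pow {p q : ℕ} (hp₀ : 0 < p) (hq : 20 * p ≤ q) :
    (2 : ℝ) ^ p * (1 + 1 / 8) ^ q ≤ 1 / 4 * (1 + 1 / 4) ^ q := by
  have eight_pow_le : (8 : ℝ) ^ p ≤ (10 / 9) ^ q :=
    calc (8 : ℝ) ^ p ≤ ((10 / 9) ^ 20) ^ p := by gcongr; norm_num
      _ = (10 / 9) ^ (20 * p) := by rw [pow_mul]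
      _ ≤ (10 / 9) ^ q := pow_le_pow_right₀ (by norm_num) hq
  have four_le : (4 : ℝ) ≤ 4 ^ p := le_self_pow₀ (by norm_num) hp₀.ne'
  calc (2 : ℝ) ^ p * (1 + 1 / 8) ^ q = 1 / 4 * (4 * 2 ^ p) * (1 + 1 / 8) ^ q := by ring
    _ ≤ 1 / 4 * (4 ^ p * 2 ^ p) * (1 + 1 / 8) ^ q := by gcongr
    _ = 1 / 4 * 8 ^ p * (1 + 1 / 8) ^ q := by rw [← mul_pow]; norm_num
    _ ≤ 1 / 4 * (10 / 9) ^ q * (1 + 1 / 8) ^ q := by gcongr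
    _ = 1 / 4 * (1 + 1 / 4) ^ q := by rw [mul_assoc, ← mul_pow]; norm_num

lemma card_mul_le_sum_one_add_pow (I : Finset ι) (g : ι → ℝ) {p q : ℕ} (hp : Even p) (hp₀ : 0 < p)
    (hq : 20 * p ≤ q) (hnonneg : ∀ k, 0 ≤ ∑ i ∈ I, g i ^ k)
    (hbig : #I * (1 / 4) ^ p ≤ ∑ i ∈ I, g i ^ p) :
    #I * (1 / 4 * (5 / 4) ^ q) ≤ ∑ i ∈ I, (1 + g i) ^ q := by
  have numeric : (1 / 4 : ℝ) * (5 / 4) ^ q ≤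
      ((1 + 1 / 4) ^ q + (1 + -1 / 4) ^ q) / 2 - 2 ^ p * (1 + 1 / 8) ^ q := by
    have nonneg : (0 : ℝ) ≤ (3 / 4) ^ q := by positivity
    have absorb := two_pow_mul_pow_le_quarter_mul_pow hp₀ hq
    norm_num at absorb ⊢
    linarith
  calc (#I : ℝ) * (1 / 4 * (5 / 4) ^ q)
      ≤ #I * (((1 + 1 / 4) ^ q + (1 + -1 / 4) ^ q) / 2 - 2 ^ p * (1 + 1 / 8) ^ q) := by gcongr
    _ = ∑ k ∈ range (q + 1), (q.choose k : ℝ) *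
          (#I * (((1 / 4) ^ k + (-1 / 4) ^ k) / 2 - 2 ^ p * (1 / 8) ^ k)) := by
        simp only [one_add_pow_eq_sum_choose_mul, ← sum_add_distrib, sum_div, mul_sum,
          ← sum_sub_distrib]
        exact sum_congr rfl fun k _ ↦ by ring
    _ ≤ ∑ k ∈ range (q + 1), (q.choose k : ℝ) * ∑ i ∈ I, g i ^ k := by
        gcongr
        exact card_mul_le_sum_pow_of_moments_nonneg I g hp hp₀ hnonneg hbig _
    _ = ∑ i ∈ I, (1 + g i) ^ q := by
        simp only [one_add_pow_eq_sum_choose_mul, mul_sum]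
        rw [sum_comm]

lemma add_pow_le_mul_pow_add_pow {s h : ℝ} (hs : 0 ≤ s) (hh : 0 ≤ h) (q : ℕ) :
    (h + s) ^ q ≤ (1 + s) ^ q * h ^ q + (1 + s) ^ q := by
  obtain hh₁ | hh₁ := le_total 1 h
  · rw [← mul_pow]
    have : (h + s) ^ q ≤ ((1 + s) * h) ^ q := by gcongr; nlinarith
    linarith [show 0 ≤ (1 + s) ^ q by positivity]
  · have : (h + s) ^ q ≤ (1 + s) ^ q := by gcongr
    linarith [show 0 ≤ (1 + s) ^ q * h ^ q by positivity]

lemma pow_mul_pow_add_pow_le_quarter_mul_pow {q : ℕ} (hq : 100 ≤ q) :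
    (1 + 1 / 100 : ℝ) ^ q * (6 / 5) ^ q + (1 + 1 / 100) ^ q ≤ 1 / 4 * (5 / 4) ^ q := by
  have eight_le : (8 : ℝ) ≤ (625 / 606) ^ q :=
    calc (8 : ℝ) ≤ (625 / 606) ^ 100 := by norm_num
      _ ≤ (625 / 606) ^ q := pow_le_pow_right₀ (by norm_num) hq
  have one_le : (1 : ℝ) ≤ (6 / 5) ^ q := one_le_pow₀ (by norm_num)
  calc (1 + 1 / 100 : ℝ) ^ q * (6 / 5) ^ q + (1 + 1 / 100) ^ q
      ≤ (1 + 1 / 100) ^ q * (6 / 5) ^ q + (1 + 1 / 100) ^ q * (6 / 5) ^ q := by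
        gcongr
        exact le_mul_of_one_le_right (by positivity) one_le
    _ = 1 / 4 * (8 * ((1 + 1 / 100) ^ q * (6 / 5) ^ q)) := by ring
    _ ≤ 1 / 4 * ((625 / 606) ^ q * ((1 + 1 / 100) ^ q * (6 / 5) ^ q)) := by gcongr
    _ = 1 / 4 * (5 / 4) ^ q := by rw [← mul_pow, ← mul_pow]; norm_num

lemma card_mul_pow_le_sum_pow_of_abs_one_add_le (I : Finset ι) (g h : ι → ℝ) {q : ℕ}
    (hq : 100 ≤ q) (hh : ∀ i ∈ I, 0 ≤ h i) (hgh : ∀ i ∈ I, |1 + g i| ≤ h i + 1 / 100)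
    (hbig : #I * (1 / 4 * (5 / 4) ^ q) ≤ ∑ i ∈ I, (1 + g i) ^ q) :
    #I * (6 / 5) ^ q ≤ ∑ i ∈ I, h i ^ q := by
  have pointwise : ∑ i ∈ I, (1 + g i) ^ q ≤
      ∑ i ∈ I, ((1 + 1 / 100) ^ q * h i ^ q + (1 + 1 / 100) ^ q) :=
    sum_le_sum fun i hi ↦ calc
      (1 + g i) ^ q ≤ |1 + g i| ^ q := (le_abs_self _).trans_eq (abs_pow _ _)
      _ ≤ (h i + 1 / 100) ^ q := by gcongr; exact hgh i hi
      _ ≤ _ := add_pow_le_mul_pow_add_pow (by norm_num) (hh i hi) q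
  rw [sum_add_distrib, ← mul_sum, sum_const, nsmul_eq_mul] at pointwise
  have numeric := mul_le_mul_of_nonneg_left (pow_mul_pow_add_pow_le_quarter_mul_pow hq)
    (Nat.cast_nonneg (α := ℝ) #I)
  have hpos : (0 : ℝ) < (1 + 1 / 100) ^ q := by positivity
  refine le_of_mul_le_mul_left ?_ hpos
  linarith

end Moments

/-! ### Sifting -/

section Sifting

variable {G : Type*}

/-- The real-valued indicator function of a finite set. -/
noncomputable def ind (A : Finset G) : G → ℝ := (A : Set G).indicator 1

lemma ind_apply [DecidableEq G] (A : Finset G) (x : G) : ind A x = if x ∈ A then 1 else 0 := by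
  simp [ind, Set.indicator_apply]

lemma ind_nonneg (A : Finset G) (x : G) : 0 ≤ ind A x :=
  Set.indicator_nonneg (fun _ _ ↦ zero_le_one) x

lemma ind_le_one (A : Finset G) (x : G) : ind A x ≤ 1 :=
  Set.indicator_le_self' (fun _ _ ↦ zero_le_one) x

variable [AddCommGroup G] {A E Y : Finset G} {q : ℕ}

section

variable [DecidableEq G]

/-- The intersection of `E` with the translates `A - y i`; sifting replaces `E` by such a set for a
well chosen tuple `y`. -/
def siftSet (A E : Finset G) (y : Fin q → G) : Finset G := {b ∈ E | ∀ i, y i + b ∈ A}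

lemma siftSet_subset (y : Fin q → G) : siftSet A E y ⊆ E := filter_subset _ _

lemma siftSet_eq_empty (hY : ∀ a ∈ A, ∀ b ∈ E, a - b ∈ Y) {y : Fin q → G}
    (hy : y ∉ Fintype.piFinset fun _ ↦ Y) : siftSet A E y = ∅ := by
  refine filter_eq_empty_iff.2 fun b hb hA ↦ hy (Fintype.mem_piFinset.2 fun i ↦ ?_)
  simpa only [add_sub_cancel_right] using hY _ (hA i) b hb

lemma prod_ind_add (y : Fin q → G) (b : G) :
    ∏ i, ind A (y i + b) = if ∀ i, y i + b ∈ A then (1 : ℝ) else 0 := by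
  simp only [ind_apply, prod_ite_zero, mem_univ, true_imp_iff, prod_const_one]

variable [Fintype G]

lemma sum_mul_autocorr_ind_pow (A E : Finset G) (w : G → G → ℝ) (q : ℕ) :
    ∑ b ∈ E, ∑ b' ∈ E, w b b' * autocorr (ind A) (b - b') ^ q =
      ∑ y : Fin q → G, ∑ b ∈ siftSet A E y, ∑ b' ∈ siftSet A E y, w b b' := by
  simp only [sum_mul_autocorr_pow, prod_ind_add, siftSet, sum_filter, mul_ite, mul_one,
    mul_zero]
  refine sum_congr rfl fun y _ ↦ sum_congr rfl fun b _ ↦ ?_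
  split_ifs <;> simp

lemma exists_sum_le_card_pow_mul_sum_siftSet (hY : ∀ a ∈ A, ∀ b ∈ E, a - b ∈ Y) (hY₀ : Y.Nonempty)
    (w : G → G → ℝ) (q : ℕ) :
    ∃ y : Fin q → G, ∑ b ∈ E, ∑ b' ∈ E, w b b' * autocorr (ind A) (b - b') ^ q ≤
      #Y ^ q * ∑ b ∈ siftSet A E y, ∑ b' ∈ siftSet A E y, w b b' := by
  set s : (Fin q → G) → ℝ := fun y ↦ ∑ b ∈ siftSet A E y, ∑ b' ∈ siftSet A E y, w b b'
  have support : ∑ y, s y = ∑ y ∈ Fintype.piFinset fun _ ↦ Y, s y :=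
    (sum_subset (subset_univ _) fun y _ hy ↦ by
      simp only [s, siftSet_eq_empty hY hy, sum_empty]).symm
  obtain ⟨y, -, hy⟩ := exists_max_image (Fintype.piFinset fun _ : Fin q ↦ Y) s
    (Fintype.piFinset_nonempty.2 fun _ ↦ hY₀)
  refine ⟨y, ?_⟩
  rw [sum_mul_autocorr_ind_pow, support]
  refine (sum_le_card_nsmul _ _ _ hy).trans_eq ?_
  rw [Fintype.card_piFinset_const, nsmul_eq_mul, Nat.cast_pow]

end

lemma hundred_mul_pow_le_half_mul_pow {M : ℝ} (hM : 0 ≤ M) (hq : 100 ≤ q) :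
    100 * (11 / 10 * M) ^ q ≤ (6 / 5) ^ q * M ^ q / 2 := by
  have pow_le : (11 / 12 : ℝ) ^ q ≤ 1 / 200 :=
    calc (11 / 12 : ℝ) ^ q ≤ (11 / 12) ^ 100 :=
          pow_le_pow_of_le_one (by norm_num) (by norm_num) hq
      _ ≤ 1 / 200 := by norm_num
  calc 100 * (11 / 10 * M) ^ q = 100 * ((11 / 12) ^ q * ((6 / 5) ^ q * M ^ q)) := by
        rw [← mul_pow, ← mul_pow]; ring_nf
    _ ≤ 100 * (1 / 200 * ((6 / 5) ^ q * M ^ q)) := by gcongr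
    _ = (6 / 5) ^ q * M ^ q / 2 := by ring

lemma exists_subset_sum_le_card_sq [Fintype G] (hY : ∀ a ∈ A, ∀ b ∈ E, a - b ∈ Y)
    (hY₀ : Y.Nonempty) (hq : 100 ≤ q) {M : ℝ} (hM : 0 ≤ M) {w : G → ℝ} (hw : ∀ x, 0 ≤ w x)
    (hw_le : ∀ x, w x * autocorr (ind A) x ^ q ≤ (11 / 10 * M) ^ q)
    (hbig : #E ^ 2 * ((6 / 5) ^ q * M ^ q) ≤ ∑ b ∈ E, ∑ b' ∈ E, autocorr (ind A) (b - b') ^ q) :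
    ∃ A' ⊆ E, #E ^ 2 * (M / #Y) ^ q ≤ 2 * (#A' : ℝ) ^ 2 ∧
      100 * ∑ b ∈ A', ∑ b' ∈ A', w (b - b') ≤ (#A' : ℝ) ^ 2 := by
  classical
  have weighted : ∑ b ∈ E, ∑ b' ∈ E, w (b - b') * autocorr (ind A) (b - b') ^ q ≤
      #E ^ 2 * (11 / 10 * M) ^ q := by
    calc _ ≤ ∑ b ∈ E, ∑ b' ∈ E, (11 / 10 * M) ^ q := by gcongr; exact hw_le _
      _ = #E ^ 2 * (11 / 10 * M) ^ q := by simp only [sum_const, nsmul_eq_mul]; ring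
  obtain ⟨y, hy⟩ := exists_sum_le_card_pow_mul_sum_siftSet hY hY₀
    (fun b b' ↦ 1 - 100 * w (b - b')) q
  refine ⟨siftSet A E y, siftSet_subset y, ?_⟩
  set A' := siftSet A E y
  have bad_nonneg : 0 ≤ ∑ b ∈ A', ∑ b' ∈ A', w (b - b') :=
    sum_nonneg fun b _ ↦ sum_nonneg fun b' _ ↦ hw _
  simp only [sub_mul, one_mul, mul_assoc, sum_sub_distrib, ← mul_sum, sum_const, nsmul_eq_mul,
    mul_one, ← sq] at hy
  have gain : #E ^ 2 * (M / #Y) ^ q ≤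
      2 * ((#A' : ℝ) ^ 2 - 100 * ∑ b ∈ A', ∑ b' ∈ A', w (b - b')) := by
    have one_le : (1 : ℝ) ≤ (6 / 5) ^ q := one_le_pow₀ (by norm_num)
    have drop : #E ^ 2 * M ^ q ≤ #E ^ 2 * ((6 / 5) ^ q * M ^ q) := by
      gcongr
      exact le_mul_of_one_le_left (by positivity) one_le
    rw [div_pow, mul_div_assoc', div_le_iff₀ (pow_pos (mod_cast hY₀.card_pos) q)]
    have decay := mul_le_mul_of_nonneg_left (hundred_mul_pow_le_half_mul_pow hM hq)
      (sq_nonneg (#E : ℝ))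
    linarith
  have : 0 ≤ #E ^ 2 * (M / #Y) ^ q := by positivity
  constructor <;> linarith

end Sifting

section Localisation

variable {G : Type*} [AddCommGroup G] {A B E : Finset G}

lemma sum_sum_filter_sub_mem [DecidableEq G] (hE : ∀ a ∈ A, ∀ b ∈ B, a - b ∈ E) (φ : G → ℝ) :
    ∑ y ∈ E, ∑ a ∈ A with a - y ∈ B, φ a = #B * ∑ a ∈ A, φ a := by
  have card_fiber (a) (ha : a ∈ A) : #{y ∈ E | a - y ∈ B} = #B :=
    card_nbij' (a - ·) (a - ·) (fun y hy ↦ (mem_filter.1 hy).2)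
      (fun b hb ↦ mem_filter.2 ⟨hE a ha b hb, by rwa [sub_sub_cancel]⟩)
      (fun y _ ↦ sub_sub_cancel a y) fun b _ ↦ sub_sub_cancel a b
  simp only [sum_filter]
  rw [sum_comm, mul_sum]
  refine sum_congr rfl fun a ha ↦ ?_
  rw [← sum_filter, sum_const, nsmul_eq_mul, card_fiber a ha]

lemma exists_subset_translate_sum_le (hE : ∀ a ∈ A, ∀ b ∈ B, a - b ∈ E) (hA : A.Nonempty)
    (hB : B.Nonempty) {w : G → ℝ} (hw : ∀ x, 0 ≤ w x) {s : ℝ} (hs : 0 < s) (hsize : s * #E ≤ #A)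
    (hbad : 100 * ∑ b ∈ A, ∑ b' ∈ A, w (b - b') ≤ (#A : ℝ) ^ 2) :
    ∃ y, ∃ A₂ ⊆ A, (∀ a ∈ A₂, a - y ∈ B) ∧ s / 2 * #B ≤ #A₂ ∧ A₂.Nonempty ∧
      50 * ∑ b ∈ A, ∑ b' ∈ A₂, w (b - b') ≤ (#A : ℝ) * #A₂ := by
  classical
  have hA_pos : (0 : ℝ) < #A := mod_cast hA.card_pos
  have hE₀ : E.Nonempty := ⟨_, hE _ hA.choose_spec _ hB.choose_spec⟩
  set φ : G → ℝ := fun b' ↦ #A - 50 * ∑ b ∈ A, w (b - b') with hφ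
  have sum_φ (S : Finset G) :
      ∑ b' ∈ S, φ b' = #A * #S - 50 * ∑ b ∈ A, ∑ b' ∈ S, w (b - b') := by
    rw [hφ, sum_sub_distrib, ← mul_sum, sum_const, nsmul_eq_mul, sum_comm, mul_comm (#S : ℝ)]
  have average : ∑ y ∈ E, s / 2 * #B * #A ≤ ∑ y ∈ E, ∑ b' ∈ A with b' - y ∈ B, φ b' := by
    rw [sum_sum_filter_sub_mem hE, sum_const, nsmul_eq_mul, sum_φ]
    calc #E * (s / 2 * #B * #A) = #B * (s * #E * #A / 2) := by ring
      _ ≤ #B * (#A * #A / 2) := by gcongr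
      _ ≤ _ := by gcongr; linarith
  obtain ⟨y, -, hy⟩ := exists_le_of_sum_le hE₀ average
  set A₂ := {b' ∈ A | b' - y ∈ B}
  rw [sum_φ] at hy
  have bad_nonneg : 0 ≤ ∑ b ∈ A, ∑ b' ∈ A₂, w (b - b') :=
    sum_nonneg fun b _ ↦ sum_nonneg fun b' _ ↦ hw _
  have card_A₂ : s / 2 * #B ≤ #A₂ := le_of_mul_le_mul_right (by linarith) hA_pos
  have hA₂_pos : (0 : ℝ) < #A₂ :=
    lt_of_lt_of_le (mul_pos (half_pos hs) (mod_cast hB.card_pos)) card_A₂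
  have : 0 ≤ s / 2 * #B * #A := by positivity
  exact ⟨y, A₂, filter_subset _ _, fun a ha ↦ (mem_filter.1 ha).2, card_A₂,
    card_pos.1 (mod_cast hA₂_pos), by linarith⟩

end Localisation

/-! ### Almost periodicity -/

section Hoeffding

variable {α : Type*} {A : Finset α} {u : α → ℝ} {ε : ℝ}

lemma sum_piFinset_exp_le (hu : ∀ a ∈ A, |u a| ≤ 1) (hsum : ∑ a ∈ A, u a = 0) (m : ℕ) (ε : ℝ) :
    ∑ a ∈ Fintype.piFinset fun _ : Fin m ↦ A, Real.exp (ε * ∑ i, u (a i)) ≤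
      #A ^ m * Real.exp (m * ε ^ 2 / 2) := by
  have one_coordinate : ∑ a ∈ A, Real.exp (ε * u a) ≤ #A * Real.exp (ε ^ 2 / 2) :=
    calc ∑ a ∈ A, Real.exp (ε * u a) ≤ ∑ a ∈ A, (Real.cosh ε + u a * Real.sinh ε) :=
          sum_le_sum fun a ha ↦ by
            rw [mul_comm]; exact Real.exp_mul_le_cosh_add_mul_sinh (hu a ha) ε
      _ = #A * Real.cosh ε := by
          rw [sum_add_distrib, ← sum_mul, hsum, zero_mul, add_zero, sum_const, nsmul_eq_mul]
      _ ≤ #A * Real.exp (ε ^ 2 / 2) := by gcongr; exact Real.cosh_le_exp_half_sq ε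
  calc ∑ a ∈ Fintype.piFinset fun _ : Fin m ↦ A, Real.exp (ε * ∑ i, u (a i))
      = (∑ a ∈ A, Real.exp (ε * u a)) ^ m := by
        simp only [mul_sum, Real.exp_sum, sum_pow']
    _ ≤ (#A * Real.exp (ε ^ 2 / 2)) ^ m := by gcongr
    _ = #A ^ m * Real.exp (m * ε ^ 2 / 2) := by
        rw [mul_pow, ← Real.exp_nat_mul, mul_div_assoc]

lemma card_filter_mul_lt_sum_le (hu : ∀ a ∈ A, |u a| ≤ 1) (hsum : ∑ a ∈ A, u a = 0) (m : ℕ)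
    (hε : 0 ≤ ε) :
    (#{a ∈ Fintype.piFinset fun _ : Fin m ↦ A | ε * m < ∑ i, u (a i)} : ℝ) ≤
      Real.exp (-(m * ε ^ 2 / 2)) * #A ^ m := by
  set F := {a ∈ Fintype.piFinset fun _ : Fin m ↦ A | ε * m < ∑ i, u (a i)}
  have markov : #F * Real.exp (m * ε ^ 2) ≤ #A ^ m * Real.exp (m * ε ^ 2 / 2) :=
    calc #F * Real.exp (m * ε ^ 2) = ∑ a ∈ F, Real.exp (m * ε ^ 2) := by
          rw [sum_const, nsmul_eq_mul]
      _ ≤ ∑ a ∈ F, Real.exp (ε * ∑ i, u (a i)) := by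
          refine sum_le_sum fun a ha ↦ Real.exp_le_exp.2 ?_
          nlinarith [(mem_filter.1 ha).2]
      _ ≤ ∑ a ∈ Fintype.piFinset fun _ : Fin m ↦ A, Real.exp (ε * ∑ i, u (a i)) :=
          sum_le_sum_of_subset_of_nonneg (filter_subset _ _) fun _ _ _ ↦ (Real.exp_pos _).le
      _ ≤ #A ^ m * Real.exp (m * ε ^ 2 / 2) := sum_piFinset_exp_le hu hsum m ε
  rw [← le_div_iff₀ (Real.exp_pos _), mul_div_assoc, ← Real.exp_sub] at markov
  refine markov.trans_eq ?_
  rw [mul_comm]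
  ring_nf

lemma card_filter_mul_lt_abs_sum_le (hu : ∀ a ∈ A, |u a| ≤ 1) (hsum : ∑ a ∈ A, u a = 0) (m : ℕ)
    (hε : 0 ≤ ε) :
    (#{a ∈ Fintype.piFinset fun _ : Fin m ↦ A | ε * m < |∑ i, u (a i)|} : ℝ) ≤
      2 * Real.exp (-(m * ε ^ 2 / 2)) * #A ^ m := by
  classical
  have upper := card_filter_mul_lt_sum_le hu hsum m hε
  have lower := card_filter_mul_lt_sum_le (u := fun a ↦ -u a) (by simpa only [abs_neg] using hu)
    (by rw [sum_neg_distrib, hsum, neg_zero]) m hε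
  simp only [lt_abs, filter_or, ← sum_neg_distrib]
  refine (Nat.cast_le.2 (card_union_le _ _)).trans ?_
  push_cast
  linarith

end Hoeffding

section DoubleCounting

variable {α β : Type*}

lemma card_le_two_mul_card_filter_card_filter_le (P : Finset α) (D : Finset β) (bad : α → β → Prop)
    [∀ a x, Decidable (bad a x)] {κ : ℝ} (hκ : 0 < κ)
    (hbad : ∀ x ∈ D, (#{a ∈ P | bad a x} : ℝ) ≤ κ / 2 * #P) :
    (#P : ℝ) ≤ 2 * #{a ∈ P | (#{x ∈ D | bad a x} : ℝ) ≤ κ * #D} := by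
  obtain rfl | hD := D.eq_empty_or_nonempty
  · simp only [filter_empty, card_empty, Nat.cast_zero, mul_zero, le_refl, filter_true]
    linarith [Nat.cast_nonneg (α := ℝ) #P]
  have hD_pos : 0 < κ * #D := mul_pos hκ (mod_cast hD.card_pos)
  set B := {a ∈ P | ¬ (#{x ∈ D | bad a x} : ℝ) ≤ κ * #D}
  have markov : #B * (κ * #D) ≤ #P / 2 * (κ * #D) :=
    calc #B * (κ * #D) = ∑ _a ∈ B, κ * #D := by rw [sum_const, nsmul_eq_mul]
      _ ≤ ∑ a ∈ B, (#{x ∈ D | bad a x} : ℝ) :=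
          sum_le_sum fun _ ha ↦ (not_le.1 (mem_filter.1 ha).2).le
      _ ≤ ∑ a ∈ P, (#{x ∈ D | bad a x} : ℝ) :=
          sum_le_sum_of_subset_of_nonneg (filter_subset _ _) fun _ _ _ ↦ Nat.cast_nonneg _
      _ = ∑ x ∈ D, (#{a ∈ P | bad a x} : ℝ) :=
          mod_cast sum_card_bipartiteAbove_eq_sum_card_bipartiteBelow bad
      _ ≤ ∑ _x ∈ D, κ / 2 * #P := sum_le_sum hbad
      _ = #P / 2 * (κ * #D) := by rw [sum_const, nsmul_eq_mul]; ring
  have split : (#{a ∈ P | (#{x ∈ D | bad a x} : ℝ) ≤ κ * #D} : ℝ) + #B = #P :=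
    mod_cast card_filter_add_card_filter_not _
  linarith [le_of_mul_le_mul_right markov hD_pos]

lemma exists_card_mul_card_le_card_mul_card_filter [AddCommGroup α] [DecidableEq α]
    {L Q : Finset α} {B : Finset β} {τ : β → α} (hQ : ∀ a ∈ L, ∀ t ∈ B, a + τ t ∈ Q)
    (hQ₀ : Q.Nonempty) : ∃ u, #L * #B ≤ #Q * #{t ∈ B | u - τ t ∈ L} := by
  have card_fiber (t) (ht : t ∈ B) : #{u ∈ Q | u - τ t ∈ L} = #L :=
    card_nbij' (· - τ t) (· + τ t) (fun u hu ↦ (mem_filter.1 hu).2)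
      (fun a ha ↦ mem_filter.2 ⟨hQ a ha t ht, by rwa [add_sub_cancel_right]⟩)
      (fun u _ ↦ sub_add_cancel u _) fun a _ ↦ add_sub_cancel_right a _
  have total : ∑ u ∈ Q, #{t ∈ B | u - τ t ∈ L} = #L * #B := by
    calc ∑ u ∈ Q, #{t ∈ B | u - τ t ∈ L} = ∑ t ∈ B, #{u ∈ Q | u - τ t ∈ L} :=
          sum_card_bipartiteAbove_eq_sum_card_bipartiteBelow fun u t ↦ u - τ t ∈ L
      _ = #L * #B := by rw [sum_congr rfl card_fiber, sum_const, smul_eq_mul, mul_comm]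
  obtain ⟨u, -, hu⟩ := exists_max_image Q (fun u ↦ #{t ∈ B | u - τ t ∈ L}) hQ₀
  exact ⟨u, total ▸ sum_le_card_nsmul _ _ _ hu⟩

end DoubleCounting

section AlmostPeriodicity

variable {G : Type*} [AddCommGroup G] {φ : G → ℝ} {A A₁ A₂ B D T W : Finset G} {ε κ : ℝ} {m : ℕ}

/-- The average of `φ` over `x - A`, that is, `φ` convolved with the normalised indicator function
of `A`. -/
noncomputable def avg (A : Finset G) (φ : G → ℝ) (x : G) : ℝ := (∑ a ∈ A, φ (x - a)) / #A

/-- The average of `φ` over `x - a` for `a` in a tuple of samples. -/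
noncomputable def sampleAvg (a : Fin m → G) (φ : G → ℝ) (x : G) : ℝ := (∑ i, φ (x - a i)) / m

lemma avg_mem_Icc (hφ : ∀ x, φ x ∈ Set.Icc 0 1) (A : Finset G) (x : G) :
    avg A φ x ∈ Set.Icc 0 1 := by
  refine ⟨div_nonneg (sum_nonneg fun a _ ↦ (hφ _).1) (Nat.cast_nonneg _),
    div_le_one_of_le₀ ?_ (Nat.cast_nonneg _)⟩
  simpa using sum_le_card_nsmul A (fun a ↦ φ (x - a)) 1 fun a _ ↦ (hφ _).2

lemma card_filter_lt_abs_avg_sub_sampleAvg_le (hφ : ∀ x, φ x ∈ Set.Icc 0 1) (hA : A.Nonempty)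
    (hm : m ≠ 0) (hε : 0 ≤ ε) (x : G) :
    (#{a ∈ Fintype.piFinset fun _ : Fin m ↦ A | ε < |avg A φ x - sampleAvg a φ x|} : ℝ) ≤
      2 * Real.exp (-(m * ε ^ 2 / 2)) * #A ^ m := by
  have hm_pos : (0 : ℝ) < m := mod_cast Nat.pos_of_ne_zero hm
  have hA_ne : (#A : ℝ) ≠ 0 := mod_cast hA.card_ne_zero
  have bounded (a) (_ : a ∈ A) : |φ (x - a) - avg A φ x| ≤ 1 :=
    abs_le.2 ⟨by linarith [(hφ (x - a)).1, (avg_mem_Icc hφ A x).2],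
      by linarith [(hφ (x - a)).2, (avg_mem_Icc hφ A x).1]⟩
  have centred : ∑ a ∈ A, (φ (x - a) - avg A φ x) = 0 := by
    rw [sum_sub_distrib, sum_const, nsmul_eq_mul, avg, mul_div_cancel₀ _ hA_ne, sub_self]
  have rescale (a : Fin m → G) :
      |∑ i, (φ (x - a i) - avg A φ x)| = |avg A φ x - sampleAvg a φ x| * m := by
    have : ∑ i, (φ (x - a i) - avg A φ x) = (sampleAvg a φ x - avg A φ x) * m := by
      rw [sub_mul, sampleAvg, div_mul_cancel₀ _ hm_pos.ne', sum_sub_distrib, sum_const,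
        nsmul_eq_mul, card_univ, Fintype.card_fin, mul_comm (m : ℝ)]
    rw [this, abs_mul, abs_of_pos hm_pos, abs_sub_comm]
  simpa only [rescale, mul_lt_mul_iff_left₀ hm_pos] using
    card_filter_mul_lt_abs_sum_le bounded centred m hε

/-- `f` agrees with the translate `x ↦ H (x + t)` up to `ε`, outside a proportion `κ` of `D`. -/
def ApproxTranslate (f H : G → ℝ) (D : Finset G) (ε κ : ℝ) (t : G) : Prop :=
  (#{x ∈ D | ε < |f x - H (x + t)|} : ℝ) ≤ κ * #D

/-- Croot–Sisask almost periodicity: for most tuples `a` of samples from `A` the function `avg A φ`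
is close to `sampleAvg a φ`, and many of these tuples are translates of a single one. -/
lemma exists_large_forall_approxTranslate_avg (hφ : ∀ x, φ x ∈ Set.Icc 0 1) (hA : A.Nonempty)
    (hW : ∀ a ∈ A, ∀ t ∈ B, a + t ∈ W) (hW₀ : W.Nonempty) (D : Finset G) (hm : m ≠ 0) (hε : 0 ≤ ε)
    (hκ₀ : 0 < κ) (hκ : 4 * Real.exp (-(m * ε ^ 2 / 2)) ≤ κ) :
    ∃ T ⊆ B, (#A : ℝ) ^ m * #B ≤ 2 * #W ^ m * #T ∧
      ∃ H : G → ℝ, ∀ t ∈ T, ApproxTranslate (avg A φ) H D ε κ t := by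
  classical
  set P := Fintype.piFinset fun _ : Fin m ↦ A
  set L := {a ∈ P | (#{x ∈ D | ε < |avg A φ x - sampleAvg a φ x|} : ℝ) ≤ κ * #D}
  have card_P : (#P : ℝ) = #A ^ m := by rw [Fintype.card_piFinset_const, Nat.cast_pow]
  have large_L : (#P : ℝ) ≤ 2 * #L := by
    refine card_le_two_mul_card_filter_card_filter_le P D _ hκ₀ fun x _ ↦ ?_
    refine (card_filter_lt_abs_avg_sub_sampleAvg_le hφ hA hm hε x).trans ?_
    rw [card_P]
    gcongr
    linarith
  have translate_mem (a) (ha : a ∈ L) (t) (ht : t ∈ B) :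
      a + Function.const (Fin m) t ∈ Fintype.piFinset fun _ : Fin m ↦ W :=
    Fintype.mem_piFinset.2 fun i ↦
      hW _ (Fintype.mem_piFinset.1 (mem_filter.1 ha).1 i) t ht
  obtain ⟨u, hu⟩ := exists_card_mul_card_le_card_mul_card_filter translate_mem
    (Fintype.piFinset_nonempty.2 fun _ ↦ hW₀)
  rw [Fintype.card_piFinset_const] at hu
  refine ⟨{t ∈ B | u - Function.const (Fin m) t ∈ L}, filter_subset _ _, ?_, sampleAvg u φ,
    fun t ht ↦ ?_⟩
  · calc (#A : ℝ) ^ m * #B ≤ 2 * #L * #B := by rw [← card_P]; gcongr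
      _ = 2 * (#L * #B) := mul_assoc _ _ _
      _ ≤ 2 * (#W ^ m * #{t ∈ B | u - Function.const (Fin m) t ∈ L}) :=
          mul_le_mul_of_nonneg_left (mod_cast hu) zero_le_two
      _ = _ := (mul_assoc _ _ _).symm
  · have shift (x : G) : sampleAvg (u - Function.const (Fin m) t) φ x = sampleAvg u φ (x + t) := by
      simp only [sampleAvg, Pi.sub_apply, Function.const_apply, sub_sub_eq_add_sub]
    simpa only [ApproxTranslate, shift] using (mem_filter.1 (mem_filter.1 ht).2).2

/-- The average of `φ` over `t + A₁ - A₂`, with multiplicity. -/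
noncomputable def shiftAvg (A₁ A₂ : Finset G) (φ : G → ℝ) (t : G) : ℝ :=
  (∑ x ∈ A₁, avg A₂ φ (x + t)) / #A₁

lemma sum_ite_add_mem_le [DecidableEq G] (A S : Finset G) (s : G) :
    ∑ x ∈ A, (if x + s ∈ S then (1 : ℝ) else 0) ≤ #S := by
  rw [sum_boole]
  exact_mod_cast card_le_card_of_injOn (· + s) (fun x hx ↦ (mem_filter.1 hx).2)
    (add_left_injective s).injOn

lemma le_shiftAvg_add_sub (hφ : ∀ x, φ x ∈ Set.Icc 0 1) (hA₁ : A₁.Nonempty) (hε : 0 ≤ ε)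
    {H : G → ℝ} {t t' v : G} (ht : ApproxTranslate (avg A₂ φ) H D ε κ t)
    (ht' : ApproxTranslate (avg A₂ φ) H D ε κ t') (hv : ∀ x ∈ A₁, x + v ∈ D)
    (hv' : ∀ x ∈ A₁, x + (v + (t - t')) ∈ D) :
    shiftAvg A₁ A₂ φ v - (2 * ε + 2 * κ * #D / #A₁) ≤ shiftAvg A₁ A₂ φ (v + (t - t')) := by
  classical
  have hA₁_pos : (0 : ℝ) < #A₁ := mod_cast hA₁.card_pos
  set bad : G → Finset G := fun s ↦ {x ∈ D | ε < |avg A₂ φ x - H (x + s)|}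
  have close {s x : G} (hx : x ∈ D) (hxs : x ∉ bad s) : |avg A₂ φ x - H (x + s)| ≤ ε :=
    not_lt.1 fun h ↦ hxs (mem_filter.2 ⟨hx, h⟩)
  have pointwise (x) (hx : x ∈ A₁) : avg A₂ φ (x + v) ≤ avg A₂ φ (x + (v + (t - t'))) + 2 * ε +
      ((if x + v ∈ bad t then 1 else 0) + if x + (v + (t - t')) ∈ bad t' then 1 else 0) := by
    have h₁ := avg_mem_Icc hφ A₂ (x + v)
    have h₂ := avg_mem_Icc hφ A₂ (x + (v + (t - t')))
    split_ifs with hbad hbad' hbad'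
    · linarith [h₁.2, h₂.1]
    · linarith [h₁.2, h₂.1]
    · linarith [h₁.2, h₂.1]
    · have e₁ := abs_le.1 (close (hv x hx) hbad)
      have e₂ := abs_le.1 (close (hv' x hx) hbad')
      rw [show x + (v + (t - t')) + t' = x + v + t by abel] at e₂
      linarith [e₁.2, e₂.1]
  have total := sum_le_sum pointwise
  rw [sum_add_distrib, sum_add_distrib, sum_add_distrib, sum_const, nsmul_eq_mul] at total
  have few : (#(bad t) : ℝ) ≤ κ * #D := ht
  have few' : (#(bad t') : ℝ) ≤ κ * #D := ht'
  rw [shiftAvg, shiftAvg, sub_le_iff_le_add, ← sub_le_iff_le_add', ← sub_div, div_le_iff₀ hA₁_pos,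
    add_mul, div_mul_cancel₀ _ hA₁_pos.ne']
  linarith [sum_ite_add_mem_le A₁ (bad t) v, sum_ite_add_mem_le A₁ (bad t') (v + (t - t'))]

lemma le_shiftAvg_sum_sub (hφ : ∀ x, φ x ∈ Set.Icc 0 1) (hA₁ : A₁.Nonempty) (hε : 0 ≤ ε)
    {H : G → ℝ} (hT : ∀ t ∈ T, ApproxTranslate (avg A₂ φ) H D ε κ t) {k : ℕ}
    (hD : ∀ j ≤ k, ∀ t t' : Fin j → G, (∀ i, t i ∈ T) → (∀ i, t' i ∈ T) →
      ∀ x ∈ A₁, x + ∑ i, (t i - t' i) ∈ D)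
    {t t' : Fin k → G} (ht : ∀ i, t i ∈ T) (ht' : ∀ i, t' i ∈ T) :
    shiftAvg A₁ A₂ φ 0 - k * (2 * ε + 2 * κ * #D / #A₁) ≤
      shiftAvg A₁ A₂ φ (∑ i, (t i - t' i)) := by
  induction k with
  | zero => simp
  | succ k ih =>
    have init := ih (fun j hj ↦ hD j (hj.trans k.le_succ)) (fun i ↦ ht i.castSucc)
      fun i ↦ ht' i.castSucc
    have last := le_shiftAvg_add_sub hφ hA₁ hε (hT _ (ht (Fin.last k))) (hT _ (ht' (Fin.last k)))
      (hD k k.le_succ _ _ (fun i ↦ ht i.castSucc) fun i ↦ ht' i.castSucc)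
      (by simpa only [Fin.sum_univ_castSucc] using hD (k + 1) le_rfl t t' ht ht')
    rw [Fin.sum_univ_castSucc]
    push_cast
    linarith

end AlmostPeriodicity

/-! ### Fourier smoothing -/

section Fourier

open scoped ComplexConjugate

variable {G : Type*} [AddCommGroup G]

/-- The character sum of `ψ` over `X`: the conjugate of the Fourier coefficient of `ind X` at `ψ`,
without normalisation. -/
noncomputable def charSum (X : Finset G) (ψ : AddChar G ℂ) : ℂ := ∑ x ∈ X, ψ x

lemma sum_piFinset_map_sum (T : Finset G) (k : ℕ) (ψ : AddChar G ℂ) :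
    ∑ t ∈ Fintype.piFinset fun _ : Fin k ↦ T, ψ (∑ i, t i) = charSum T ψ ^ k := by
  have map_sum (t : Fin k → G) : ψ (∑ i, t i) = ∏ i, ψ (t i) := by
    simpa only [← ofAdd_sum, AddChar.toMonoidHom_apply, toAdd_ofAdd] using
      _root_.map_prod ψ.toMonoidHom (fun i ↦ Multiplicative.ofAdd (t i)) univ
  rw [charSum, sum_pow']
  exact sum_congr rfl fun t _ ↦ map_sum t

section Finite

variable [Finite G]

lemma norm_charSum_le_card (X : Finset G) (ψ : AddChar G ℂ) : ‖charSum X ψ‖ ≤ #X :=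
  (norm_sum_le _ _).trans_eq <| by simp only [AddChar.norm_apply, sum_const, nsmul_one]

lemma conj_charSum (X : Finset G) (ψ : AddChar G ℂ) : conj (charSum X ψ) = ∑ x ∈ X, ψ (-x) := by
  simp only [charSum, map_sum, AddChar.map_neg_eq_conj]

lemma sum_piFinset_map_neg_sum (T : Finset G) (k : ℕ) (ψ : AddChar G ℂ) :
    ∑ t ∈ Fintype.piFinset fun _ : Fin k ↦ T, ψ (-∑ i, t i) = conj (charSum T ψ) ^ k := by
  simp only [← map_pow, ← sum_piFinset_map_sum, map_sum, AddChar.map_neg_eq_conj]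

end Finite

section Fintype

variable [Fintype G]

lemma sum_map_mul_conj_charSum (S : Finset G) (v : G) :
    ∑ ψ : AddChar G ℂ, ψ v * conj (charSum S ψ) = Fintype.card G * (ind S v : ℂ) := by
  classical
  simp only [conj_charSum, mul_sum, ← AddChar.map_add_eq_mul]
  rw [sum_comm]
  simp only [AddChar.sum_apply_eq_ite, ← sub_eq_add_neg, sub_eq_zero, sum_ite_eq, ind_apply]
  split_ifs <;> simp

lemma ind_eq_sum_charSum (S : Finset G) (v : G) :
    (ind S v : ℂ) = (∑ ψ : AddChar G ℂ, ψ v * conj (charSum S ψ)) / Fintype.card G := by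
  rw [sum_map_mul_conj_charSum, mul_div_cancel_left₀ _ (mod_cast Fintype.card_ne_zero)]

lemma sum_norm_charSum_sq (S : Finset G) :
    ∑ ψ : AddChar G ℂ, ‖charSum S ψ‖ ^ 2 = Fintype.card G * #S := by
  classical
  suffices ((∑ ψ : AddChar G ℂ, ‖charSum S ψ‖ ^ 2 : ℝ) : ℂ) = Fintype.card G * #S by
    exact_mod_cast this
  have expand (ψ : AddChar G ℂ) :
      (‖charSum S ψ‖ : ℂ) ^ 2 = ∑ v ∈ S, ψ v * conj (charSum S ψ) := by
    rw [← Complex.mul_conj', ← sum_mul, charSum]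
  push_cast
  simp only [expand]
  rw [sum_comm, sum_congr rfl fun v hv ↦ by
    rw [sum_map_mul_conj_charSum, ind_apply, if_pos hv, Complex.ofReal_one, mul_one]]
  rw [sum_const, nsmul_eq_mul, mul_comm]

/-- The sum of `shiftAvg A₁ A₂ (ind S)` over the translates of `s` by `k T - k T`, with
multiplicity. -/
noncomputable def smooth (A₁ A₂ S T : Finset G) (k : ℕ) (s : G) : ℝ :=
  ∑ t ∈ Fintype.piFinset fun _ : Fin k ↦ T, ∑ t' ∈ Fintype.piFinset fun _ : Fin k ↦ T,
    shiftAvg A₁ A₂ (ind S) (∑ i, (t i - t' i) + s)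

lemma shiftAvg_ind_eq_sum_charSum (A₁ A₂ S : Finset G) (u : G) :
    (shiftAvg A₁ A₂ (ind S) u : ℂ) =
      (∑ ψ : AddChar G ℂ, ψ u * (charSum A₁ ψ * conj (charSum A₂ ψ) * conj (charSum S ψ))) /
        (Fintype.card G * #A₁ * #A₂) := by
  have factor (ψ : AddChar G ℂ) :
      ψ u * (charSum A₁ ψ * conj (charSum A₂ ψ) * conj (charSum S ψ)) =
        ∑ x ∈ A₁, ∑ a ∈ A₂, ψ (x + u - a) * conj (charSum S ψ) := by
    rw [conj_charSum A₂, charSum]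
    simp only [sum_mul, mul_sum]
    rw [sum_comm]
    refine sum_congr rfl fun x _ ↦ sum_congr rfl fun a _ ↦ ?_
    rw [sub_eq_add_neg, AddChar.map_add_eq_mul, AddChar.map_add_eq_mul]
    ring
  simp only [factor, shiftAvg, avg]
  push_cast
  simp only [ind_eq_sum_charSum, ← sum_div, div_div]
  congr 1
  · rw [sum_comm (s := (univ : Finset (AddChar G ℂ)))]
    exact sum_congr rfl fun x _ ↦ sum_comm
  · ring

lemma smooth_eq_sum_charSum (A₁ A₂ S T : Finset G) (k : ℕ) (s : G) :
    (smooth A₁ A₂ S T k s : ℂ) =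
      (∑ ψ : AddChar G ℂ, ψ s * (charSum A₁ ψ * conj (charSum A₂ ψ) * conj (charSum S ψ) *
        (charSum T ψ ^ k * conj (charSum T ψ) ^ k))) / (Fintype.card G * #A₁ * #A₂) := by
  rw [smooth]
  push_cast
  simp only [shiftAvg_ind_eq_sum_charSum, ← sum_div]
  congr 1
  rw [sum_congr rfl fun _ _ ↦ sum_comm, sum_comm]
  refine sum_congr rfl fun ψ _ ↦ ?_
  rw [← sum_piFinset_map_sum, ← sum_piFinset_map_neg_sum]
  simp only [sum_mul, mul_sum]
  rw [sum_comm]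
  refine sum_congr rfl fun t _ ↦ sum_congr rfl fun t' _ ↦ ?_
  rw [sum_sub_distrib, AddChar.map_add_eq_mul, sub_eq_add_neg, AddChar.map_add_eq_mul]
  ring

end Fintype

lemma abs_smooth_sub_smooth_zero_le [Finite G] {A₁ A₂ : Finset G} (hA₁ : A₁.Nonempty)
    (hA₂ : A₂.Nonempty) (S T : Finset G) {k : ℕ} {s : G} {β : ℝ}
    (hβ : ∀ ψ : AddChar G ℂ, ‖ψ s - 1‖ * ‖charSum T ψ‖ ^ (2 * k) ≤ β * #T ^ (2 * k)) :
    |smooth A₁ A₂ S T k s - smooth A₁ A₂ S T k 0| ≤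
      β * #T ^ (2 * k) * ((#S + #A₁) / (2 * #A₁)) := by
  have := Fintype.ofFinite G
  have hA₁_pos : (0 : ℝ) < #A₁ := mod_cast hA₁.card_pos
  have hA₂_pos : (0 : ℝ) < #A₂ := mod_cast hA₂.card_pos
  have hG_pos : (0 : ℝ) < Fintype.card G := mod_cast Fintype.card_pos
  set c : AddChar G ℂ → ℂ := fun ψ ↦ charSum A₁ ψ * conj (charSum A₂ ψ) * conj (charSum S ψ) *
    (charSum T ψ ^ k * conj (charSum T ψ) ^ k) with hc
  have term_le (ψ : AddChar G ℂ) : ‖ψ s * c ψ - ψ 0 * c ψ‖ ≤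
      β * #T ^ (2 * k) * #A₂ * ((‖charSum S ψ‖ ^ 2 + ‖charSum A₁ ψ‖ ^ 2) / 2) := by
    have am_gm := two_mul_le_add_sq ‖charSum S ψ‖ ‖charSum A₁ ψ‖
    have hβ_nonneg : 0 ≤ β * #T ^ (2 * k) := le_trans (by positivity) (hβ ψ)
    calc ‖ψ s * c ψ - ψ 0 * c ψ‖ = ‖ψ s - 1‖ * ‖charSum T ψ‖ ^ (2 * k) * ‖charSum A₂ ψ‖ *
            (2 * ‖charSum S ψ‖ * ‖charSum A₁ ψ‖ / 2) := by
          rw [AddChar.map_zero_eq_one, ← sub_mul]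
          simp only [hc, norm_mul, norm_pow, RCLike.norm_conj]
          ring
      _ ≤ _ := by
          refine mul_le_mul (mul_le_mul (hβ ψ) (norm_charSum_le_card A₂ ψ) (norm_nonneg _)
            hβ_nonneg) (by linarith) (by positivity) (by positivity)
  have norm_denom : ‖(Fintype.card G * #A₁ * #A₂ : ℂ)‖ = Fintype.card G * #A₁ * #A₂ := by simp
  rw [← Real.norm_eq_abs, ← Complex.norm_real]
  push_cast
  rw [smooth_eq_sum_charSum, smooth_eq_sum_charSum, ← sub_div, ← sum_sub_distrib, norm_div,
    norm_denom, div_le_iff₀ (by positivity)]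
  refine (norm_sum_le_of_le _ fun ψ _ ↦ term_le ψ).trans_eq ?_
  rw [← mul_sum, ← sum_div, sum_add_distrib, sum_norm_charSum_sq, sum_norm_charSum_sq]
  field_simp

end Fourier

/-! ### Riesz products and Chang's theorem -/

section Riesz

open scoped ComplexConjugate
open Real (cosh sinh exp)

variable {G : Type*} [AddCommGroup G] {ι : Type*} [Fintype ι]

open Classical in
/-- The vectors with entries in `{-1, 0, 1}`, indexing the Fourier expansion of a Riesz product. -/
noncomputable def signVectors (ι : Type*) [Fintype ι] : Finset (ι → ℤ) :=
  Fintype.piFinset fun _ ↦ {-1, 0, 1}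

lemma mem_signVectors {e : ι → ℤ} :
    e ∈ signVectors ι ↔ ∀ i, e i ∈ ({-1, 0, 1} : Finset ℤ) := by
  simp only [signVectors, Fintype.mem_piFinset]

/-- The Riesz product of the characters `χ i` with phases `c i`. Each factor is the chord of
`t ↦ exp (t / 2)` over `[-1, 1]`, evaluated at the real part of `c i * χ i x`. -/
noncomputable def rieszProduct (χ : ι → AddChar G ℂ) (c : ι → ℂ) (x : G) : ℝ :=
  ∏ i, (cosh (1 / 2) + (c i * χ i x).re * sinh (1 / 2))

/-- The coefficient of `χ ^ e` in a factor of a Riesz product with phase `c`, for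
`e ∈ {-1, 0, 1}`. -/
noncomputable def rieszCoeff (c : ℂ) (e : ℤ) : ℂ :=
  if e = 0 then (cosh (1 / 2) : ℝ) else (sinh (1 / 2) : ℝ) / 2 * if e = 1 then c else conj c

variable {χ : ι → AddChar G ℂ} {c : ι → ℂ}

lemma sum_norm_rieszCoeff {c : ℂ} (hc : ‖c‖ = 1) :
    ∑ e ∈ ({-1, 0, 1} : Finset ℤ), ‖rieszCoeff c e‖ = exp (1 / 2) := by
  have sinh_nonneg : 0 ≤ sinh (1 / 2) := Real.sinh_nonneg_iff.2 (by norm_num)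
  have norm_zero : ‖rieszCoeff c 0‖ = cosh (1 / 2) := by
    rw [rieszCoeff, if_pos rfl, Complex.norm_of_nonneg (Real.cosh_pos _).le]
  have norm_half_sinh : ‖((sinh (1 / 2) : ℝ) : ℂ) / 2‖ = sinh (1 / 2) / 2 := by
    rw [norm_div, Complex.norm_of_nonneg sinh_nonneg, Complex.norm_ofNat]
  have norm_one : ‖rieszCoeff c 1‖ = sinh (1 / 2) / 2 := by
    rw [rieszCoeff, if_neg (by decide), if_pos rfl, norm_mul, hc, mul_one, norm_half_sinh]
  have norm_neg_one : ‖rieszCoeff c (-1)‖ = sinh (1 / 2) / 2 := by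
    rw [rieszCoeff, if_neg (by decide), if_neg (by decide), norm_mul, RCLike.norm_conj, hc, mul_one,
      norm_half_sinh]
  rw [sum_insert (by decide), sum_insert (by decide), sum_singleton, norm_zero, norm_one,
    norm_neg_one, ← Real.cosh_add_sinh]
  ring

lemma sum_signVectors_prod_norm_rieszCoeff (hc : ∀ i, ‖c i‖ = 1) :
    ∑ e ∈ signVectors ι, ∏ i, ‖rieszCoeff (c i) (e i)‖ = exp (1 / 2) ^ Fintype.card ι := by
  classical
  rw [signVectors, ← prod_univ_sum (fun _ ↦ ({-1, 0, 1} : Finset ℤ)) fun i e ↦ ‖rieszCoeff (c i) e‖]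
  simp only [sum_norm_rieszCoeff (hc _), prod_const, card_univ]

lemma card_pow_mul_sum_le_sum_sum_piFinset {T B X : Finset G} {n : ℕ} {F : G → ℝ}
    (hF : ∀ x, 0 ≤ F x) (hX : ∀ x ∈ T, ∀ s : Fin n → G, (∀ j, s j ∈ B) → x + ∑ j, s j ∈ X) :
    #B ^ n * ∑ x ∈ T, F x ≤
      ∑ y ∈ X, ∑ s ∈ Fintype.piFinset fun _ : Fin n ↦ B, F (y - ∑ j, s j) := by
  have card_P : (#(Fintype.piFinset fun _ : Fin n ↦ B) : ℝ) = #B ^ n := by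
    rw [Fintype.card_piFinset_const, Nat.cast_pow]
  rw [sum_comm, ← card_P, ← nsmul_eq_mul]
  refine card_nsmul_le_sum _ _ _ fun s hs ↦ ?_
  calc ∑ x ∈ T, F x = ∑ y ∈ T.map (addRightEmbedding (∑ j, s j)), F (y - ∑ j, s j) := by
        simp only [sum_map, addRightEmbedding_apply, add_sub_cancel_right]
    _ ≤ ∑ y ∈ X, F (y - ∑ j, s j) := by
        refine sum_le_sum_of_subset_of_nonneg (fun y hy ↦ ?_) fun _ _ _ ↦ hF _
        obtain ⟨x, hx, rfl⟩ := mem_map.1 hy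
        exact hX x hx s (Fintype.mem_piFinset.1 hs)

section Finite

variable [Finite G]

lemma abs_re_mul_apply_le_one {c : ℂ} (hc : ‖c‖ = 1) (ψ : AddChar G ℂ) (x : G) :
    |(c * ψ x).re| ≤ 1 :=
  (Complex.abs_re_le_norm _).trans_eq <| by rw [norm_mul, hc, AddChar.norm_apply, mul_one]

lemma exp_le_rieszProduct (hc : ∀ i, ‖c i‖ = 1) (x : G) :
    exp (1 / 2 * ∑ i, (c i * χ i x).re) ≤ rieszProduct χ c x := by
  rw [mul_sum, Real.exp_sum]
  refine prod_le_prod (fun _ _ ↦ (Real.exp_pos _).le) fun i _ ↦ ?_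
  rw [mul_comm]
  exact Real.exp_mul_le_cosh_add_mul_sinh (abs_re_mul_apply_le_one (hc i) _ _) _

lemma rieszProduct_nonneg (hc : ∀ i, ‖c i‖ = 1) (x : G) : 0 ≤ rieszProduct χ c x :=
  (Real.exp_pos _).le.trans (exp_le_rieszProduct hc x)

lemma card_mul_exp_le_sum_rieszProduct {T : Finset G} (hc : ∀ i, ‖c i‖ = 1)
    (hT : ∀ i, (#T : ℝ) / 2 ≤ ∑ x ∈ T, (c i * χ i x).re) :
    #T * exp (Fintype.card ι / 4) ≤ ∑ x ∈ T, rieszProduct χ c x := by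
  set M := (Fintype.card ι : ℝ)
  have tangent (x : G) :
      exp (M / 4) * (1 + (1 / 2 * ∑ i, (c i * χ i x).re - M / 4)) ≤ rieszProduct χ c x := by
    refine le_trans ?_ (exp_le_rieszProduct hc x)
    rw [← add_sub_cancel (M / 4) (1 / 2 * _), Real.exp_add, add_sub_cancel, add_comm 1]
    exact mul_le_mul_of_nonneg_left (Real.add_one_le_exp _) (Real.exp_pos _).le
  have sum_re : M * (#T / 2) ≤ ∑ x ∈ T, ∑ i, (c i * χ i x).re := by
    rw [sum_comm, ← nsmul_eq_mul]
    exact card_nsmul_le_sum univ _ _ fun i _ ↦ hT i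
  refine le_trans ?_ (sum_le_sum fun x _ ↦ tangent x)
  rw [← mul_sum, sum_add_distrib, sum_sub_distrib, ← mul_sum, sum_const, sum_const, nsmul_one,
    nsmul_eq_mul, mul_comm]
  exact mul_le_mul_of_nonneg_left (by linarith) (Real.exp_pos _).le

lemma rieszFactor_eq_sum (ψ : AddChar G ℂ) (c : ℂ) (x : G) :
    ((cosh (1 / 2) + (c * ψ x).re * sinh (1 / 2) : ℝ) : ℂ) =
      ∑ e ∈ ({-1, 0, 1} : Finset ℤ), rieszCoeff c e * (ψ ^ e) x := by
  rw [sum_insert (by decide), sum_insert (by decide), sum_singleton]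
  simp only [rieszCoeff, if_true, if_neg (by decide : (-1 : ℤ) ≠ 0),
    if_neg (by decide : (-1 : ℤ) ≠ 1), if_neg (by decide : (1 : ℤ) ≠ 0), zpow_neg_one,
    AddChar.inv_apply, AddChar.map_neg_eq_conj, zpow_zero, zpow_one, AddChar.one_apply,
    Complex.ofReal_add, Complex.ofReal_mul, Complex.re_eq_add_conj, map_mul]
  ring

lemma rieszProduct_eq_sum (x : G) :
    (rieszProduct χ c x : ℂ) =
      ∑ e ∈ signVectors ι, (∏ i, rieszCoeff (c i) (e i)) * (∏ i, χ i ^ e i) x := by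
  classical
  rw [rieszProduct, Complex.ofReal_prod]
  simp only [rieszFactor_eq_sum, prod_univ_sum, prod_mul_distrib, AddChar.prod_apply, signVectors]

lemma sum_piFinset_rieszProduct_eq_sum (B : Finset G) (n : ℕ) (y : G) :
    ((∑ s ∈ Fintype.piFinset fun _ : Fin n ↦ B, rieszProduct χ c (y - ∑ j, s j) : ℝ) : ℂ) =
      ∑ e ∈ signVectors ι, (∏ i, rieszCoeff (c i) (e i)) *
        ((∏ i, χ i ^ e i) y * conj (charSum B (∏ i, χ i ^ e i)) ^ n) := by
  rw [Complex.ofReal_sum]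
  simp only [rieszProduct_eq_sum, ← sum_piFinset_map_neg_sum, mul_sum, ← AddChar.map_add_eq_mul,
    sub_eq_add_neg]
  exact sum_comm

lemma norm_sum_rieszCoeff_zero_le (B : Finset G) (n : ℕ) (y : G) (ψ : AddChar G ℂ) :
    ‖(∏ i, rieszCoeff (c i) 0) * (ψ y * conj (charSum B ψ) ^ n)‖ ≤
      exp (Fintype.card ι / 8) * #B ^ n := by
  have cosh_pow_le : cosh (1 / 2) ^ Fintype.card ι ≤ exp (Fintype.card ι / 8) :=
    calc cosh (1 / 2) ^ Fintype.card ι ≤ exp ((1 / 2) ^ 2 / 2) ^ Fintype.card ι :=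
          pow_le_pow_left₀ (Real.cosh_pos _).le (Real.cosh_le_exp_half_sq _) _
      _ = exp (Fintype.card ι / 8) := by rw [← Real.exp_nat_mul]; ring_nf
  simp only [rieszCoeff, if_true, prod_const, card_univ, norm_mul, norm_pow, RCLike.norm_conj,
    AddChar.norm_apply, one_mul, Complex.norm_of_nonneg (Real.cosh_pos _).le]
  gcongr
  exact norm_charSum_le_card B ψ

lemma sum_norm_rieszCoeff_erase_zero_le {B : Finset G} {n : ℕ} (hn : 2 * Fintype.card ι ≤ n)
    (hc : ∀ i, ‖c i‖ = 1)
    (hB : ∀ e ∈ signVectors ι, e ≠ 0 → ‖charSum B (∏ i, χ i ^ e i)‖ ≤ #B / 2) (y : G) :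
    ∑ e ∈ signVectors ι with e ≠ 0, ‖(∏ i, rieszCoeff (c i) (e i)) *
      ((∏ i, χ i ^ e i) y * conj (charSum B (∏ i, χ i ^ e i)) ^ n)‖ ≤ (#B : ℝ) ^ n := by
  have term_le (e) (he : e ∈ {e ∈ signVectors ι | e ≠ 0}) :
      ‖(∏ i, rieszCoeff (c i) (e i)) *
        ((∏ i, χ i ^ e i) y * conj (charSum B (∏ i, χ i ^ e i)) ^ n)‖ ≤
      (∏ i, ‖rieszCoeff (c i) (e i)‖) * (#B / 2) ^ n := by
    rw [norm_mul, norm_mul, AddChar.norm_apply, one_mul, norm_pow, RCLike.norm_conj, norm_prod]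
    gcongr
    exact hB e (mem_filter.1 he).1 (mem_filter.1 he).2
  have exp_pow_le : exp (1 / 2) ^ Fintype.card ι ≤ 2 ^ n :=
    calc exp (1 / 2) ^ Fintype.card ι ≤ exp 1 ^ Fintype.card ι := by gcongr; norm_num
      _ ≤ (2 ^ 2) ^ Fintype.card ι := by gcongr; linarith [Real.exp_one_lt_d9]
      _ = 2 ^ (2 * Fintype.card ι) := (pow_mul _ _ _).symm
      _ ≤ 2 ^ n := pow_le_pow_right₀ one_le_two hn
  calc _ ≤ (∑ e ∈ signVectors ι with e ≠ 0, ∏ i, ‖rieszCoeff (c i) (e i)‖) * (#B / 2 : ℝ) ^ n := by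
        rw [sum_mul]; exact sum_le_sum term_le
    _ ≤ (∑ e ∈ signVectors ι, ∏ i, ‖rieszCoeff (c i) (e i)‖) * (#B / 2 : ℝ) ^ n := by
        gcongr
        exact filter_subset _ _
    _ ≤ 2 ^ n * (#B / 2 : ℝ) ^ n := by
        rw [sum_signVectors_prod_norm_rieszCoeff hc]; gcongr
    _ = #B ^ n := by rw [← mul_pow, mul_div_cancel₀ _ two_ne_zero]

lemma sum_piFinset_rieszProduct_le {B : Finset G} {n : ℕ} (hn : 2 * Fintype.card ι ≤ n)
    (hc : ∀ i, ‖c i‖ = 1)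
    (hB : ∀ e ∈ signVectors ι, e ≠ 0 → ‖charSum B (∏ i, χ i ^ e i)‖ ≤ #B / 2) (y : G) :
    ∑ s ∈ Fintype.piFinset fun _ : Fin n ↦ B, rieszProduct χ c (y - ∑ j, s j) ≤
      #B ^ n * (exp (Fintype.card ι / 8) + 1) := by
  classical
  have zero_mem : (0 : ι → ℤ) ∈ signVectors ι := mem_signVectors.2 fun _ ↦ by simp
  calc _ ≤ ‖((∑ s ∈ Fintype.piFinset fun _ : Fin n ↦ B,
            rieszProduct χ c (y - ∑ j, s j) : ℝ) : ℂ)‖ := by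
        rw [Complex.norm_real]; exact le_abs_self _
    _ ≤ exp (Fintype.card ι / 8) * #B ^ n + #B ^ n := by
        rw [sum_piFinset_rieszProduct_eq_sum, ← add_sum_erase _ _ zero_mem]
        exact (norm_add_le _ _).trans (add_le_add (norm_sum_rieszCoeff_zero_le B n y _)
          ((norm_sum_le _ _).trans (filter_ne' (signVectors ι) 0 ▸
            sum_norm_rieszCoeff_erase_zero_le hn hc hB y)))
    _ = _ := by ring

theorem card_mul_exp_le_of_dissociated {T B X : Finset G} {n : ℕ} (hn : 2 * Fintype.card ι ≤ n)
    (hB₀ : B.Nonempty) (hT : ∀ i, (#T : ℝ) / 2 ≤ ‖charSum T (χ i)‖)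
    (hX : ∀ x ∈ T, ∀ s : Fin n → G, (∀ j, s j ∈ B) → x + ∑ j, s j ∈ X)
    (hB : ∀ e ∈ signVectors ι, e ≠ 0 → ‖charSum B (∏ i, χ i ^ e i)‖ ≤ #B / 2) :
    #T * exp (Fintype.card ι / 8) ≤ 2 * #X := by
  choose c hc hphase using fun i ↦ Complex.exists_norm_eq_mul_self (charSum T (χ i))
  have sum_re (i : ι) : ∑ x ∈ T, (c i * χ i x).re = ‖charSum T (χ i)‖ := by
    rw [← Complex.re_sum, ← mul_sum, ← charSum, ← hphase, Complex.ofReal_re]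
  have hB_pos : (0 : ℝ) < #B := mod_cast hB₀.card_pos
  set E := exp (Fintype.card ι / 8)
  have one_le_E : 1 ≤ E := Real.one_le_exp (by positivity)
  have sq_E : exp (Fintype.card ι / 4) = E * E := by rw [← Real.exp_add]; ring_nf
  have upper : #B ^ n * ∑ x ∈ T, rieszProduct χ c x ≤ #B ^ n * (#X * (E + 1)) :=
    calc _ ≤ _ := card_pow_mul_sum_le_sum_sum_piFinset (rieszProduct_nonneg hc) hX
      _ ≤ #X • (#B ^ n * (E + 1)) :=
          sum_le_card_nsmul _ _ _ fun y _ ↦ sum_piFinset_rieszProduct_le hn hc hB y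
      _ = _ := by rw [nsmul_eq_mul]; ring
  have lower := card_mul_exp_le_sum_rieszProduct hc fun i ↦ (hT i).trans_eq (sum_re i).symm
  refine le_of_mul_le_mul_right ?_ (one_pos.trans_le one_le_E)
  calc #T * E * E = #T * exp (Fintype.card ι / 4) := by rw [sq_E, mul_assoc]
    _ ≤ #X * (E + 1) := lower.trans (le_of_mul_le_mul_left upper (by positivity))
    _ ≤ #X * (2 * E) := by gcongr; linarith
    _ = 2 * #X * E := by ring

end Finite

end Riesz

section LargeSpectrum

variable {G : Type*} [AddCommGroup G]

/-- A set of characters is dissociated relative to `B` when no nontrivial product of them with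
exponents in `{-1, 0, 1}` has a large character sum over `B`; for a subgroup `B` this says that no
such product is trivial on `B`. -/
def Dissociated (B : Finset G) (Λ : Finset (AddChar G ℂ)) : Prop :=
  ∀ e : AddChar G ℂ → ℤ, (∀ χ ∈ Λ, e χ ∈ ({-1, 0, 1} : Finset ℤ)) → (∃ χ ∈ Λ, e χ ≠ 0) →
    ‖charSum B (∏ χ ∈ Λ, χ ^ e χ)‖ ≤ #B / 2

variable {B T X : Finset G} {Λ : Finset (AddChar G ℂ)}

lemma dissociated_empty (B : Finset G) : Dissociated B ∅ := fun _ _ ⟨_, h, _⟩ ↦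
  absurd h (notMem_empty _)

lemma Dissociated.norm_charSum_prod_coe_le (h : Dissociated B Λ) {e : Λ → ℤ}
    (he : e ∈ signVectors Λ) (hne : e ≠ 0) : ‖charSum B (∏ χ : Λ, χ.1 ^ e χ)‖ ≤ #B / 2 := by
  classical
  set e' : AddChar G ℂ → ℤ := fun χ ↦ if hχ : χ ∈ Λ then e ⟨χ, hχ⟩ else 0
  have e'_coe (χ : Λ) : e' χ = e χ := dif_pos χ.2
  obtain ⟨χ, hχ⟩ := Function.ne_iff.1 hne
  have := h e' (fun χ hχ ↦ e'_coe ⟨χ, hχ⟩ ▸ mem_signVectors.1 he ⟨χ, hχ⟩)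
    ⟨χ, χ.2, by rwa [e'_coe]⟩
  rw [← prod_coe_sort] at this
  simpa only [e'_coe] using this

section Finite

variable [Finite G]

lemma Dissociated.card_le {M : ℕ} {τ : ℝ} (h : Dissociated B Λ) (hΛ : #Λ ≤ M + 1)
    (hΛT : ∀ χ ∈ Λ, (#T : ℝ) / 2 ≤ ‖charSum T χ‖) (hB₀ : B.Nonempty) (hT₀ : T.Nonempty)
    (hX : ∀ x ∈ T, ∀ s : Fin (2 * (M + 1)) → G, (∀ j, s j ∈ B) → x + ∑ j, s j ∈ X)
    (hτ : τ * #X ≤ #T) (hM : 2 < τ * Real.exp ((M + 1) / 8)) : #Λ ≤ M := by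
  by_contra! hcon
  have card_eq : #Λ = M + 1 := hΛ.antisymm hcon
  have chang := card_mul_exp_le_of_dissociated (χ := fun χ : Λ ↦ χ.1) (n := 2 * (M + 1))
    (by rw [Fintype.card_coe, card_eq]) hB₀ (fun χ ↦ hΛT χ χ.2) hX
    fun _ ↦ h.norm_charSum_prod_coe_le
  rw [Fintype.card_coe, card_eq] at chang
  push_cast at chang
  obtain ⟨x, hx⟩ := hT₀
  obtain ⟨b, hb⟩ := hB₀
  have hX_pos : (0 : ℝ) < #X := mod_cast card_pos.2 ⟨_, hX x hx (fun _ ↦ b) fun _ ↦ hb⟩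
  have := mul_le_mul_of_nonneg_right hτ (Real.exp_pos ((M + 1) / 8)).le
  nlinarith

lemma norm_mul_apply_sub_one_le (χ ψ : AddChar G ℂ) (s : G) :
    ‖(χ * ψ) s - 1‖ ≤ ‖χ s - 1‖ + ‖ψ s - 1‖ :=
  calc ‖(χ * ψ) s - 1‖ = ‖χ s * (ψ s - 1) + (χ s - 1)‖ := by rw [AddChar.mul_apply]; ring_nf
    _ ≤ ‖χ s * (ψ s - 1)‖ + ‖χ s - 1‖ := norm_add_le _ _
    _ = ‖χ s - 1‖ + ‖ψ s - 1‖ := by rw [norm_mul, AddChar.norm_apply, one_mul, add_comm]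

lemma norm_inv_apply_sub_one (χ : AddChar G ℂ) (s : G) : ‖χ⁻¹ s - 1‖ = ‖χ s - 1‖ := by
  rw [AddChar.inv_apply, AddChar.map_neg_eq_conj, ← RCLike.norm_conj (χ s - 1), map_sub, map_one]

lemma norm_zpow_apply_sub_one (χ : AddChar G ℂ) (s : G) {e : ℤ}
    (he : e ∈ ({-1, 0, 1} : Finset ℤ)) (he₀ : e ≠ 0) : ‖(χ ^ e) s - 1‖ = ‖χ s - 1‖ := by
  simp only [mem_insert, mem_singleton, he₀, false_or] at he
  obtain rfl | rfl := he
  · rw [zpow_neg_one, norm_inv_apply_sub_one]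
  · rw [zpow_one]

lemma norm_prod_zpow_apply_sub_one_le {e : AddChar G ℂ → ℤ} {s : G} {r : ℝ}
    (he : ∀ χ ∈ Λ, e χ ∈ ({-1, 0, 1} : Finset ℤ)) (hr : ∀ χ ∈ Λ, ‖χ s - 1‖ ≤ r) :
    ‖(∏ χ ∈ Λ, χ ^ e χ) s - 1‖ ≤ #Λ * r := by
  have factor_le (χ) (hχ : χ ∈ Λ) : ‖(χ ^ e χ) s - 1‖ ≤ r := by
    obtain h₀ | h₀ := eq_or_ne (e χ) 0
    · simpa [h₀] using (norm_nonneg _).trans (hr χ hχ)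
    · exact (norm_zpow_apply_sub_one χ s (he χ hχ) h₀).trans_le (hr χ hχ)
  calc ‖(∏ χ ∈ Λ, χ ^ e χ) s - 1‖ ≤ ∑ χ ∈ Λ, ‖(χ ^ e χ) s - 1‖ :=
        le_sum_of_subadditive (fun χ : AddChar G ℂ ↦ ‖χ s - 1‖) (by simp)
          (fun χ ψ ↦ norm_mul_apply_sub_one_le χ ψ s) _ _
    _ ≤ #Λ • r := sum_le_card_nsmul _ _ _ factor_le
    _ = #Λ * r := nsmul_eq_mul _ _

lemma Dissociated.norm_apply_sub_one_le_of_not_insert [DecidableEq (AddChar G ℂ)]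
    {ψ : AddChar G ℂ} {s : G} {r ε : ℝ} (h : Dissociated B Λ) (hψ : ψ ∉ Λ)
    (hψΛ : ¬ Dissociated B (insert ψ Λ)) (hB₀ : B.Nonempty) (hr : ∀ χ ∈ Λ, ‖χ s - 1‖ ≤ r)
    (hs : ∀ χ : AddChar G ℂ, ‖χ s - 1‖ * ‖charSum B χ‖ ≤ 2 * ε * #B) :
    ‖ψ s - 1‖ ≤ #Λ * r + 4 * ε := by
  have hB_pos : (0 : ℝ) < #B := mod_cast hB₀.card_pos
  unfold Dissociated at hψΛ
  push Not at hψΛ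
  obtain ⟨e, he, ⟨χ, hχ, heχ⟩, hbig⟩ := hψΛ
  rw [prod_insert hψ] at hbig
  have heΛ : ∀ χ ∈ Λ, e χ ∈ ({-1, 0, 1} : Finset ℤ) := fun χ hχ ↦ he χ (mem_insert_of_mem hχ)
  have heψ : e ψ ≠ 0 := by
    intro h₀
    rw [h₀, zpow_zero, one_mul] at hbig
    have hχΛ : χ ∈ Λ := mem_of_mem_insert_of_ne hχ fun hχψ ↦ heχ (hχψ ▸ h₀)
    exact hbig.not_ge (h e heΛ ⟨χ, hχΛ, heχ⟩)
  set Q := ∏ χ ∈ Λ, χ ^ e χ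
  have large_close : ‖(ψ ^ e ψ * Q) s - 1‖ ≤ 4 * ε := by
    have := hs (ψ ^ e ψ * Q)
    nlinarith [norm_nonneg ((ψ ^ e ψ * Q) s - 1)]
  calc ‖ψ s - 1‖ = ‖(ψ ^ e ψ) s - 1‖ :=
        (norm_zpow_apply_sub_one ψ s (he ψ (mem_insert_self _ _)) heψ).symm
    _ = ‖(ψ ^ e ψ * Q * Q⁻¹) s - 1‖ := by rw [mul_inv_cancel_right]
    _ ≤ ‖(ψ ^ e ψ * Q) s - 1‖ + ‖Q⁻¹ s - 1‖ := norm_mul_apply_sub_one_le _ _ _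
    _ ≤ 4 * ε + #Λ * r := by
        rw [norm_inv_apply_sub_one]
        exact add_le_add large_close (norm_prod_zpow_apply_sub_one_le heΛ hr)
    _ = #Λ * r + 4 * ε := add_comm _ _

/-- `Λ` controls the characters with a large character sum over `T`, at every point that is an
approximate period of the character sums over `B`. -/
def ControlsSpectrum (Λ : Finset (AddChar G ℂ)) (B T : Finset G) (M : ℕ) : Prop :=
  ∀ ⦃s : G⦄ ⦃r ε : ℝ⦄, 0 ≤ r → 0 ≤ ε → (∀ χ ∈ Λ, ‖χ s - 1‖ ≤ r) →
    (∀ χ : AddChar G ℂ, ‖χ s - 1‖ * ‖charSum B χ‖ ≤ 2 * ε * #B) →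
    ∀ ⦃ψ : AddChar G ℂ⦄, (#T : ℝ) / 2 ≤ ‖charSum T ψ‖ → ‖ψ s - 1‖ ≤ (M + 1) * r + 4 * ε

theorem exists_card_le_controlsSpectrum {M : ℕ} {τ : ℝ} (hB₀ : B.Nonempty) (hT₀ : T.Nonempty)
    (hX : ∀ x ∈ T, ∀ s : Fin (2 * (M + 1)) → G, (∀ j, s j ∈ B) → x + ∑ j, s j ∈ X)
    (hτ : τ * #X ≤ #T) (hM : 2 < τ * Real.exp ((M + 1) / 8)) :
    ∃ Λ : Finset (AddChar G ℂ), #Λ ≤ M ∧ ControlsSpectrum Λ B T M := by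
  classical
  have := Fintype.ofFinite (AddChar G ℂ)
  set 𝓕 : Finset (Finset (AddChar G ℂ)) :=
    {Λ | (∀ χ ∈ Λ, (#T : ℝ) / 2 ≤ ‖charSum T χ‖) ∧ #Λ ≤ M + 1 ∧ Dissociated B Λ} with h𝓕
  obtain ⟨Λ, hΛ, hmax⟩ := exists_max_image 𝓕 card
    ⟨∅, by simp [h𝓕, dissociated_empty]⟩
  obtain ⟨-, hΛT, hΛ_card, hdis⟩ := mem_filter.1 hΛ
  have card_le : #Λ ≤ M := hdis.card_le hΛ_card hΛT hB₀ hT₀ hX hτ hM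
  have card_le' : (#Λ : ℝ) ≤ M := mod_cast card_le
  refine ⟨Λ, card_le, fun s r ε hr₀ hε hr hs ψ hψ ↦ ?_⟩
  by_cases hψΛ : ψ ∈ Λ
  · nlinarith [hr ψ hψΛ, mul_nonneg (Nat.cast_nonneg (α := ℝ) M) hr₀]
  have not_dissociated : ¬ Dissociated B (insert ψ Λ) := by
    intro hd
    have hcard := card_insert_of_notMem hψΛ
    have := hmax (insert ψ Λ) (mem_filter.2 ⟨mem_univ _,
      forall_mem_insert _ _ _ |>.2 ⟨hψ, hΛT⟩, by lia, hd⟩)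
    lia
  have := hdis.norm_apply_sub_one_le_of_not_insert hψΛ not_dissociated hB₀ hr hs
  nlinarith

end Finite

lemma BohrRegular.norm_apply_sub_one_mul_norm_charSum_le [Fintype G] {Γ : Finset (AddChar G ℂ)}
    {ρ δ ε : ℝ} {s : G} (h : BohrRegular Γ ρ δ ε) (hδ : 0 ≤ δ) (hs : s ∈ bohrSet Γ δ)
    (χ : AddChar G ℂ) :
    ‖χ s - 1‖ * ‖charSum (bohrSet Γ ρ) χ‖ ≤ 2 * ε * #(bohrSet Γ ρ) := by
  classical
  set B := bohrSet Γ ρ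
  set B' := B.map (addRightEmbedding s)
  have norm_sum_char_le (Y : Finset G) : ‖∑ x ∈ Y, χ x‖ ≤ #Y := norm_charSum_le_card Y χ
  have shift : (χ s - 1) * charSum B χ = ∑ x ∈ B' \ B, χ x - ∑ x ∈ B \ B', χ x := by
    rw [sum_sdiff_sub_sum_sdiff, sub_mul, one_mul, charSum, sum_map, mul_sum]
    simp only [addRightEmbedding_apply, AddChar.map_add_eq_mul, mul_comm]
  have card_diff : (#(B' \ B) : ℝ) ≤ ε * #B := by
    refine le_trans (mod_cast card_le_card_of_injOn (· - s) (fun y hy ↦ ?_)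
      (sub_left_injective).injOn) (h.card_filter_add_notMem_le hδ hs)
    obtain ⟨hy', hy⟩ := mem_sdiff.1 hy
    obtain ⟨x, hx, rfl⟩ := mem_map.1 hy'
    rw [addRightEmbedding_apply] at hy ⊢
    exact mem_filter.2 ⟨by simpa only [add_sub_cancel_right], by rwa [sub_add_cancel]⟩
  rw [← norm_mul, shift]
  calc _ ≤ (#(B' \ B) : ℝ) + #(B \ B') :=
        (norm_sub_le _ _).trans (add_le_add (norm_sum_char_le _) (norm_sum_char_le _))
    _ = 2 * #(B' \ B) := by rw [card_sdiff_comm (card_map _).symm]; ring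
    _ ≤ 2 * ε * #B := by linarith

end LargeSpectrum

/-! ### Balanced functions -/

section Balanced

variable {G : Type*} {X B : Finset G} {ε : ℝ}

/-- The balanced function of `X` relative to `B`: the indicator of `X` minus its mean on `B`. -/
noncomputable def balanced (X B : Finset G) (z : G) : ℝ := ind X z - #X / #B * ind B z

lemma sum_ind [DecidableEq G] (X B : Finset G) (t : G → G) :
    ∑ z ∈ X, ind B (t z) = #{z ∈ X | t z ∈ B} := by
  simp only [ind_apply, sum_boole]

variable [Fintype G]

lemma sum_ind_mul (A : Finset G) (g : G → ℝ) : ∑ z, ind A z * g z = ∑ z ∈ A, g z := by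
  classical
  simp only [ind_apply, ite_mul, one_mul, zero_mul, sum_ite_mem, univ_inter]

lemma sum_ind_mul_ind_mem_Icc [DecidableEq G] (hX : X ⊆ B) {t : G → G}
    (ht : #{z ∈ B | t z ∉ B} ≤ ε * #B) :
    ∑ z, ind X z * ind B (t z) ∈ Set.Icc (#X - ε * #B) #X := by
  have h_split : (#{z ∈ X | t z ∈ B} + #{z ∈ X | t z ∉ B} : ℝ) = #X :=
    mod_cast card_filter_add_card_filter_not (s := X) fun z ↦ t z ∈ B
  have h_le : (#{z ∈ X | t z ∉ B} : ℝ) ≤ #{z ∈ B | t z ∉ B} :=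
    mod_cast card_le_card (filter_subset_filter _ hX)
  have h_nonneg : (0 : ℝ) ≤ #{z ∈ X | t z ∉ B} := Nat.cast_nonneg _
  rw [sum_ind_mul, sum_ind]
  constructor <;> linarith

lemma sum_balanced_mul_balanced (X B : Finset G) (σ : Equiv.Perm G) :
    ∑ z, balanced X B z * balanced X B (σ z) =
      ∑ z, ind X z * ind X (σ z) - #X / #B * ∑ z, ind X z * ind B (σ z) -
        #X / #B * ∑ z, ind X z * ind B (σ.symm z) +
          (#X / #B : ℝ) ^ 2 * ∑ z, ind B z * ind B (σ z) := by
  have h_symm : ∑ z, ind X z * ind B (σ.symm z) = ∑ z, ind X (σ z) * ind B z := by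
    rw [← Equiv.sum_comp σ]
    simp only [Equiv.symm_apply_apply]
  simp only [h_symm, balanced, mul_sum, ← sum_sub_distrib, ← sum_add_distrib]
  exact sum_congr rfl fun z _ ↦ by ring

lemma abs_sum_balanced_mul_balanced_sub_le [DecidableEq G] (hX : X ⊆ B) (hε : 0 ≤ ε)
    {σ : Equiv.Perm G} (hσ : #{z ∈ B | σ z ∉ B} ≤ ε * #B)
    (hσ' : #{z ∈ B | σ.symm z ∉ B} ≤ ε * #B) :
    |∑ z, balanced X B z * balanced X B (σ z) - (∑ z, ind X z * ind X (σ z) - #X ^ 2 / #B)| ≤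
      3 * ε * #X := by
  obtain rfl | hB := B.eq_empty_or_nonempty
  · obtain rfl := subset_empty.1 hX
    simp [balanced, ind]
  have hB_pos : (0 : ℝ) < #B := mod_cast hB.card_pos
  obtain ⟨hXB, hXB'⟩ := sum_ind_mul_ind_mem_Icc hX hσ
  obtain ⟨hXB_symm, hXB_symm'⟩ := sum_ind_mul_ind_mem_Icc hX hσ'
  obtain ⟨hBB, hBB'⟩ := sum_ind_mul_ind_mem_Icc Subset.rfl hσ
  rw [sum_balanced_mul_balanced]
  have ha : (0 : ℝ) ≤ #X / #B := by positivity
  have ha_one : (#X / #B : ℝ) ≤ 1 := div_le_one_of_le₀ (mod_cast card_le_card hX) hB_pos.le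
  have hXX : (#X ^ 2 / #B : ℝ) = (#X / #B) ^ 2 * #B := by field_simp
  have haB : #X = #X / #B * (#B : ℝ) := (div_mul_cancel₀ _ hB_pos.ne').symm
  generalize (#X / #B : ℝ) = a at *
  have hεB : a ^ 2 * (ε * #B) ≤ a * (ε * #B) := by
    gcongr
    exact pow_le_of_le_one ha ha_one two_ne_zero
  have hεB_nonneg : 0 ≤ a * (ε * #B) := by positivity
  rw [haB] at hXB hXB' hXB_symm hXB_symm'
  have := mul_le_mul_of_nonneg_left hXB ha
  have := mul_le_mul_of_nonneg_left hXB' ha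
  have := mul_le_mul_of_nonneg_left hXB_symm ha
  have := mul_le_mul_of_nonneg_left hXB_symm' ha
  have := mul_le_mul_of_nonneg_left hBB (sq_nonneg a)
  have := mul_le_mul_of_nonneg_left hBB' (sq_nonneg a)
  rw [hXX, haB, abs_le]
  constructor <;> linarith

variable [AddCommGroup G] {Γ : Finset (AddChar G ℂ)} {ρ δ : ℝ} {x : G}

lemma BohrRegular.abs_autocorr_balanced_sub_le (h : BohrRegular Γ ρ δ ε) (hε : 0 ≤ ε)
    (hX : X ⊆ bohrSet Γ ρ) (hδ : 0 ≤ δ) (hx : x ∈ bohrSet Γ δ) :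
    |autocorr (balanced X (bohrSet Γ ρ)) x - (autocorr (ind X) x - #X ^ 2 / #(bohrSet Γ ρ))| ≤
      3 * ε * #X := by
  classical
  exact abs_sum_balanced_mul_balanced_sub_le (σ := Equiv.addRight x) hX hε
    (h.card_filter_add_notMem_le hδ hx)
    (h.card_filter_add_notMem_le hδ (neg_mem_bohrSet.2 hx))

lemma BohrRegular.abs_selfConv_balanced_sub_le (h : BohrRegular Γ ρ δ ε) (hε : 0 ≤ ε)
    (hX : X ⊆ bohrSet Γ ρ) (hδ : 0 ≤ δ) (hx : x ∈ bohrSet Γ δ) :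
    |selfConv (balanced X (bohrSet Γ ρ)) x - (selfConv (ind X) x - #X ^ 2 / #(bohrSet Γ ρ))| ≤
      3 * ε * #X := by
  classical
  have h_reflect : #{z ∈ bohrSet Γ ρ | x - z ∉ bohrSet Γ ρ} ≤ ε * #(bohrSet Γ ρ) := by
    convert h.card_filter_add_notMem_le hδ (neg_mem_bohrSet.2 hx) using 5 with z
    rw [← neg_mem_bohrSet, neg_sub, sub_eq_add_neg]
  exact abs_sum_balanced_mul_balanced_sub_le (σ := Equiv.subLeft x) hX hε h_reflect
    (by simpa only [Equiv.subLeft_symm_apply, neg_add_eq_sub] using h_reflect)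

lemma autocorr_ind_nonneg (A : Finset G) (x : G) : 0 ≤ autocorr (ind A) x :=
  sum_nonneg fun _ _ ↦ mul_nonneg (ind_nonneg _ _) (ind_nonneg _ _)

lemma selfConv_ind_add_self_le_one {A : Finset G} (hA : ThreeAPFree (A : Set G)) (hX : X ⊆ A)
    {c : G} (hc : c ∈ A) : selfConv (ind X) (c + c) ≤ 1 := by
  classical
  have h_eq : ∀ z ∈ ({z ∈ X | c + c - z ∈ X} : Finset G), z = c := fun z hz ↦
    hA (hX (mem_filter.1 hz).1) hc (hX (mem_filter.1 hz).2) (add_sub_cancel _ _)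
  rw [selfConv, sum_ind_mul, sum_ind]
  exact mod_cast card_le_one.2 fun z hz z' hz' ↦ (h_eq z hz).trans (h_eq z' hz').symm

end Balanced

/-! ### From the absence of progressions to a set of popular differences -/

section SiftingStep

variable {G : Type*}

lemma three_mul_mul_card_le {X B : Finset G} {ε : ℝ} (hε : 300 * ε * #B ≤ #X) (hB : B.Nonempty) :
    3 * ε * #X ≤ #X ^ 2 / #B / 100 := by
  have hB_pos : (0 : ℝ) < #B := mod_cast hB.card_pos
  rw [div_div, le_div_iff₀ (by positivity)]
  calc 3 * ε * #X * (#B * 100) = 300 * ε * #B * #X := by ring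
    _ ≤ #X * #X := by gcongr
    _ = #X ^ 2 := (sq _).symm

variable [AddCommGroup G]

lemma exists_card_sq_mul_le_sum_sum {D E Z : Finset G} {F : G → ℝ} {L : ℝ} (hZ₀ : Z.Nonempty)
    (hZ : ∀ d ∈ D, ∀ b ∈ E, ∀ b' ∈ E, d - b + b' ∈ Z) (hF : ∀ x, 0 ≤ F x)
    (hL : #Z * L ≤ ∑ d ∈ D, F d) :
    ∃ z ∈ Z, #E ^ 2 * L ≤ ∑ b ∈ E, ∑ b' ∈ E, F (z + b - b') := by
  have h_translate : ∀ b ∈ E, ∀ b' ∈ E, ∑ d ∈ D, F d ≤ ∑ z ∈ Z, F (z + b - b') := by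
    intro b hb b' hb'
    calc ∑ d ∈ D, F d
        = ∑ z ∈ D.map (Equiv.addRight (b' - b)).toEmbedding, F (z + b - b') := by
          rw [sum_map]
          refine sum_congr rfl fun d _ ↦ congrArg F ?_
          simp only [Equiv.coe_toEmbedding, Equiv.coe_addRight]
          abel
      _ ≤ ∑ z ∈ Z, F (z + b - b') := by
          refine sum_le_sum_of_subset_of_nonneg (fun z hz ↦ ?_) fun _ _ _ ↦ hF _
          obtain ⟨d, hd, rfl⟩ := mem_map.1 hz
          convert hZ d hd b hb b' hb' using 1
          simp only [Equiv.coe_toEmbedding, Equiv.coe_addRight]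
          abel
  refine exists_le_of_sum_le hZ₀ ?_
  calc ∑ z ∈ Z, #E ^ 2 * L = ∑ b ∈ E, ∑ b' ∈ E, #Z * L := by
        simp only [sum_const, nsmul_eq_mul]
        ring
    _ ≤ ∑ b ∈ E, ∑ b' ∈ E, ∑ z ∈ Z, F (z + b - b') := by
        gcongr with b hb b' hb'
        exact hL.trans (h_translate b hb b' hb')
    _ = ∑ z ∈ Z, ∑ b ∈ E, ∑ b' ∈ E, F (z + b - b') := by
        rw [sum_comm (s := Z)]
        exact sum_congr rfl fun b _ ↦ sum_comm

variable [Fintype G]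

lemma card_sq_mul_pow_le_sum_autocorr_pow {f : G → ℝ} {D E Z : Finset G} {L : ℝ} {p : ℕ}
    (hp : Even p) (hL : 0 ≤ L) (hf : ∀ d ∈ D, L ≤ |selfConv f d|) (hE : ∀ x ∈ E, -x ∈ E)
    (hZ₀ : Z.Nonempty) (hZ : ∀ d ∈ D, ∀ b ∈ E, ∀ b' ∈ E, d - b + b' ∈ Z)
    (hD : (1 / 2 : ℝ) ^ p * #Z ≤ #D) :
    #E ^ 2 * (L / 2) ^ p ≤ ∑ b ∈ E, ∑ b' ∈ E, autocorr f (b - b') ^ p := by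
  have h_mean : #Z * (L / 2) ^ p ≤ ∑ d ∈ D, selfConv f d ^ p := by
    calc #Z * (L / 2) ^ p = (1 / 2) ^ p * #Z * L ^ p := by rw [div_pow, one_div_pow]; ring
      _ ≤ #D * L ^ p := by gcongr
      _ = ∑ d ∈ D, L ^ p := by rw [sum_const, nsmul_eq_mul]
      _ ≤ ∑ d ∈ D, selfConv f d ^ p := by
          refine sum_le_sum fun d hd ↦ ?_
          rw [← hp.pow_abs (selfConv f d)]
          exact pow_le_pow_left₀ hL (hf d hd) p
  obtain ⟨z, -, hz⟩ := exists_card_sq_mul_le_sum_sum hZ₀ hZ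
    (F := fun x ↦ selfConv f x ^ p) (fun _ ↦ hp.pow_nonneg _) h_mean
  exact hz.trans (sum_selfConv_pow_le_sum_autocorr_pow f hE p z)

lemma card_sq_mul_pow_le_sum_autocorr_pow_of_abs_sub_le {f g : G → ℝ} {E : Finset G} {M : ℝ}
    {p : ℕ} (hp : Even p) (hp₅ : 5 ≤ p) (hM : 0 < M) (hg : ∀ x, 0 ≤ autocorr g x)
    (hfg : ∀ b ∈ E, ∀ b' ∈ E, |autocorr f (b - b') - (autocorr g (b - b') - M)| ≤ M / 100)
    (hf : #E ^ 2 * (M / 4) ^ p ≤ ∑ b ∈ E, ∑ b' ∈ E, autocorr f (b - b') ^ p) :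
    #E ^ 2 * ((6 / 5) ^ (20 * p) * M ^ (20 * p)) ≤
      ∑ b ∈ E, ∑ b' ∈ E, autocorr g (b - b') ^ (20 * p) := by
  have h_sum : ∀ (h : G → ℝ) (k : ℕ), ∑ i ∈ E ×ˢ E, (autocorr h (i.1 - i.2) / M) ^ k =
      (∑ b ∈ E, ∑ b' ∈ E, autocorr h (b - b') ^ k) / M ^ k := fun h k ↦ by
    simp only [sum_product, div_pow, sum_div]
  have h_card : (#(E ×ˢ E) : ℝ) = #E ^ 2 := by rw [card_product, Nat.cast_mul, sq]
  have h_unbalanced := card_mul_le_sum_one_add_pow (E ×ˢ E)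
    (fun i ↦ autocorr f (i.1 - i.2) / M) hp (by lia) le_rfl
    (fun k ↦ by rw [h_sum]; exact div_nonneg (sum_autocorr_pow_nonneg f E k) (by positivity))
    (by
      rw [h_sum, h_card, le_div_iff₀ (by positivity), mul_assoc, ← mul_pow, one_div_mul_eq_div]
      exact hf)
  have h_close : ∀ i ∈ E ×ˢ E,
      |1 + autocorr f (i.1 - i.2) / M| ≤ autocorr g (i.1 - i.2) / M + 1 / 100 := fun i hi ↦ by
    obtain ⟨h_lower, h_upper⟩ :=
      abs_le.1 (hfg _ (mem_product.1 hi).1 _ (mem_product.1 hi).2)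
    have := hg (i.1 - i.2)
    rw [one_add_div hM.ne', abs_div, abs_of_pos hM, div_add' _ _ _ hM.ne',
      div_le_div_iff_of_pos_right hM, abs_le]
    constructor <;> linarith
  have h_moment := card_mul_pow_le_sum_pow_of_abs_one_add_le (E ×ˢ E) _ _ (by lia)
    (fun i _ ↦ div_nonneg (hg _) hM.le) h_close h_unbalanced
  rwa [h_sum, h_card, le_div_iff₀ (by positivity), mul_assoc] at h_moment

open scoped Classical in
/-- The indicator of the set of unpopular differences of `A`: those represented at most
`11 / 10 * M` times, where `M` stands for the expected number of representations. -/
noncomputable def unpopularWeight (A : Finset G) (M : ℝ) (x : G) : ℝ :=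
  if autocorr (ind A) x ≤ 11 / 10 * M then 1 else 0

lemma unpopularWeight_nonneg (A : Finset G) (M : ℝ) (x : G) : 0 ≤ unpopularWeight A M x := by
  unfold unpopularWeight
  split_ifs <;> norm_num

lemma unpopularWeight_mul_autocorr_pow_le (A : Finset G) {M : ℝ} (hM : 0 ≤ M) (q : ℕ) (x : G) :
    unpopularWeight A M x * autocorr (ind A) x ^ q ≤ (11 / 10 * M) ^ q := by
  unfold unpopularWeight
  split_ifs with h
  · rw [one_mul]
    exact pow_le_pow_left₀ (autocorr_ind_nonneg A x) h q
  · rw [zero_mul]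
    positivity

variable {A X C : Finset G} {Γ : Finset (AddChar G ℂ)} {ρ δ ε : ℝ}

lemma BohrRegular.le_abs_selfConv_balanced (h : BohrRegular Γ ρ δ ε) (hε : 0 ≤ ε)
    (hρ : 0 ≤ ρ) (hδ : 0 ≤ δ) (hεX : 300 * ε * #(bohrSet Γ ρ) ≤ #X)
    (hM : (4 : ℝ) ≤ #X ^ 2 / #(bohrSet Γ ρ)) (hA : ThreeAPFree (A : Set G)) (hXA : X ⊆ A)
    (hX : X ⊆ bohrSet Γ ρ) {c : G} (hc : c ∈ A) (hcδ : c + c ∈ bohrSet Γ δ) :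
    #X ^ 2 / #(bohrSet Γ ρ) / 2 ≤ |selfConv (balanced X (bohrSet Γ ρ)) (c + c)| := by
  have h_close := (abs_le.1 (h.abs_selfConv_balanced_sub_le hε hX hδ hcδ)).2
  have h_error := three_mul_mul_card_le hεX (bohrSet_nonempty Γ hρ)
  have h_free := selfConv_ind_add_self_le_one hA hXA hc
  exact le_abs.2 (.inr (by linarith))

variable {half : G →+ G} {ρ₂ ρ₃ : ℝ} {p : ℕ}

lemma BohrRegular.card_sq_mul_pow_le_sum_autocorr_balanced_pow
    (half_add_half : ∀ x, half x + half x = x) (h : BohrRegular Γ ρ δ ε)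
    (h₂ : BohrRegular Γ ρ₂ (2 * ρ₃) 1) (hε : 0 ≤ ε) (hρ : 0 ≤ ρ) (hδ : 0 ≤ δ)
    (hρ₂ : 0 ≤ ρ₂) (hρ₃ : 0 ≤ ρ₃) (hρ₂δ : 2 * ρ₂ ≤ δ)
    (hεX : 300 * ε * #(bohrSet Γ ρ) ≤ #X) (hM : (4 : ℝ) ≤ #X ^ 2 / #(bohrSet Γ ρ))
    (hA : ThreeAPFree (A : Set G)) (hXA : X ⊆ A) (hX : X ⊆ bohrSet Γ ρ) (hCA : C ⊆ A)
    (hC : C ⊆ bohrSet Γ ρ₂) (hp : Even p)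
    (hC_card : (1 / 2 : ℝ) ^ p * (2 * #(bohrSet Γ ρ₂)) ≤ #C) :
    #(bohrSet (precomp half Γ) ρ₃) ^ 2 * (#X ^ 2 / #(bohrSet Γ ρ) / 4) ^ p ≤
      ∑ b ∈ bohrSet (precomp half Γ) ρ₃, ∑ b' ∈ bohrSet (precomp half Γ) ρ₃,
        autocorr (balanced X (bohrSet Γ ρ)) (b - b') ^ p := by
  classical
  set D := C.image fun c ↦ c + c
  set Z := bohrSet (precomp half Γ) (ρ₂ + 2 * ρ₃)
  have hD : #D = #C := card_image_of_injective _
    (Function.LeftInverse.injective (half_add_self half_add_half))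
  have hZ_card : (#Z : ℝ) ≤ 2 * #(bohrSet Γ ρ₂) := by
    rw [card_bohrSet_precomp_half half_add_half]
    exact h₂.card_le_two_mul le_rfl le_rfl
  have hDZ : (1 / 2 : ℝ) ^ p * #Z ≤ #D := by
    rw [hD]
    exact le_trans (by gcongr) hC_card
  have h_large : ∀ d ∈ D, #X ^ 2 / #(bohrSet Γ ρ) / 2 ≤
      |selfConv (balanced X (bohrSet Γ ρ)) d| := by
    refine forall_mem_image.2 fun c hc ↦ h.le_abs_selfConv_balanced hε hρ hδ hεX hM hA hXA hX
      (hCA hc) (bohrSet_mono hρ₂δ ?_)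
    rw [two_mul]
    exact add_mem_bohrSet (hC hc) (hC hc)
  have hZ : ∀ d ∈ D, ∀ b ∈ bohrSet (precomp half Γ) ρ₃, ∀ b' ∈ bohrSet (precomp half Γ) ρ₃,
      d - b + b' ∈ Z := by
    refine forall_mem_image.2 fun c hc b hb b' hb' ↦ ?_
    have hcc : c + c ∈ bohrSet (precomp half Γ) ρ₂ := by
      rw [mem_bohrSet_precomp, half_add_self half_add_half]
      exact hC hc
    simpa only [Z, two_mul, add_assoc] using add_mem_bohrSet (sub_mem_bohrSet hcc hb) hb'
  have := card_sq_mul_pow_le_sum_autocorr_pow hp (by positivity) h_large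
    (fun x hx ↦ neg_mem_bohrSet.2 hx) (bohrSet_nonempty _ (by positivity)) hZ hDZ
  rwa [div_div, show (2 : ℝ) * 2 = 4 by norm_num] at this

lemma BohrRegular.exists_subset_sum_unpopularWeight_le
    (half_add_half : ∀ x, half x + half x = x) (h : BohrRegular Γ ρ δ ε)
    (h₂ : BohrRegular Γ ρ₂ (2 * ρ₃) 1) (hε : 0 ≤ ε) (hε_one : ε ≤ 1) (hρ : 0 ≤ ρ) (hδ : 0 ≤ δ)
    (hρ₂ : 0 ≤ ρ₂) (hρ₃ : 0 ≤ ρ₃) (hρ₂δ : 2 * ρ₂ ≤ δ) (hρ₃δ : 4 * ρ₃ ≤ δ)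
    (hεX : 300 * ε * #(bohrSet Γ ρ) ≤ #X) (hM : (4 : ℝ) ≤ #X ^ 2 / #(bohrSet Γ ρ))
    (hA : ThreeAPFree (A : Set G)) (hXA : X ⊆ A) (hX : X ⊆ bohrSet Γ ρ) (hCA : C ⊆ A)
    (hC : C ⊆ bohrSet Γ ρ₂) (hp : Even p) (hp₅ : 5 ≤ p)
    (hC_card : (1 / 2 : ℝ) ^ p * (2 * #(bohrSet Γ ρ₂)) ≤ #C) :
    ∃ A' ⊆ bohrSet (precomp half Γ) ρ₃,
      #(bohrSet (precomp half Γ) ρ₃) ^ 2 * ((#X / #(bohrSet Γ ρ)) ^ 2 / 2) ^ (20 * p) ≤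
        2 * (#A' : ℝ) ^ 2 ∧
      100 * ∑ b ∈ A', ∑ b' ∈ A', unpopularWeight X (#X ^ 2 / #(bohrSet Γ ρ)) (b - b') ≤
        (#A' : ℝ) ^ 2 := by
  set E := bohrSet (precomp half Γ) ρ₃
  set M : ℝ := #X ^ 2 / #(bohrSet Γ ρ) with hM_def
  have hM_pos : 0 < M := by linarith
  have hE : E ⊆ bohrSet Γ (2 * ρ₃) := bohrSet_precomp_half_subset half_add_half
  have h_close : ∀ b ∈ E, ∀ b' ∈ E, |autocorr (balanced X (bohrSet Γ ρ)) (b - b') -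
      (autocorr (ind X) (b - b') - M)| ≤ M / 100 := fun b hb b' hb' ↦
    (h.abs_autocorr_balanced_sub_le hε hX hδ
      (bohrSet_mono (by linarith) (sub_mem_bohrSet (hE hb) (hE hb')))).trans
      (three_mul_mul_card_le hεX (bohrSet_nonempty Γ hρ))
  have h_moment := card_sq_mul_pow_le_sum_autocorr_pow_of_abs_sub_le hp hp₅ hM_pos
    (autocorr_ind_nonneg X) h_close (h.card_sq_mul_pow_le_sum_autocorr_balanced_pow half_add_half
      h₂ hε hρ hδ hρ₂ hρ₃ hρ₂δ hεX hM hA hXA hX hCA hC hp hC_card)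
  have hXE : ∀ a ∈ X, ∀ b ∈ E, a - b ∈ bohrSet Γ (ρ + δ) := fun a ha b hb ↦
    bohrSet_mono (by linarith) (sub_mem_bohrSet (hX ha) (hE hb))
  obtain ⟨A', hA', h_size, h_weight⟩ := exists_subset_sum_le_card_sq hXE
    (bohrSet_nonempty Γ (by positivity)) (by lia) hM_pos.le (unpopularWeight_nonneg X M)
    (unpopularWeight_mul_autocorr_pow_le X hM_pos.le (20 * p)) h_moment
  refine ⟨A', hA', le_trans ?_ h_size, h_weight⟩
  have hB_pos := card_bohrSet_pos Γ hρ
  have hY_pos := card_bohrSet_pos Γ (add_nonneg hρ hδ)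
  refine mul_le_mul_of_nonneg_left (pow_le_pow_left₀ (by positivity) ?_ _) (by positivity)
  calc (#X / #(bohrSet Γ ρ) : ℝ) ^ 2 / 2 = M / (2 * #(bohrSet Γ ρ)) := by
        rw [hM_def]
        field_simp
    _ ≤ M / #(bohrSet Γ (ρ + δ)) := by
        gcongr
        exact h.card_le_two_mul hε_one le_rfl

end SiftingStep

/-! ### From popular differences to a denser Bohr set -/

section StructureStep

variable {G : Type*}

lemma card_pow_two_mul_mul_eq_sum (T : Finset G) (k : ℕ) (c : ℝ) :
    (#T : ℝ) ^ (2 * k) * c = ∑ _t ∈ Fintype.piFinset fun _ : Fin k ↦ T,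
      ∑ _t' ∈ Fintype.piFinset fun _ : Fin k ↦ T, c := by
  simp only [sum_const, nsmul_eq_mul, Fintype.card_piFinset_const, Nat.cast_pow]
  ring

lemma pow_mul_card_le_of_card_pow_mul_card_le {A B T W : Finset G} {σ : ℝ} {m : ℕ}
    (hW : W.Nonempty) (hσ : 0 ≤ σ) (hσA : σ * #W ≤ #A) (hT : (#A : ℝ) ^ m * #B ≤ 2 * #W ^ m * #T) :
    1 / 2 * σ ^ m * #B ≤ #T := by
  have hW_pos : (0 : ℝ) < #W := mod_cast hW.card_pos
  refine le_of_mul_le_mul_left ?_ (pow_pos hW_pos m)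
  calc (#W : ℝ) ^ m * (1 / 2 * σ ^ m * #B) = 1 / 2 * ((σ * #W) ^ m * #B) := by ring
    _ ≤ 1 / 2 * (#A ^ m * #B) := by gcongr
    _ ≤ 1 / 2 * (2 * #W ^ m * #T) := by gcongr
    _ = #W ^ m * #T := by ring

variable [AddCommGroup G]

/-- The number of points of `A` in the translate `x + B`, as a real number. -/
noncomputable def translateCount (A : Finset G) (x : G) (B : Finset G) : ℝ := ∑ b ∈ B, ind A (x + b)

variable {A₁ A₂ B S T X : Finset G} {k : ℕ} {c : ℝ}

lemma sum_avg_le (hA₂ : A₂.Nonempty) (hc : ∀ v, translateCount S v B ≤ c) (x : G) :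
    ∑ s ∈ B, avg A₂ (ind S) (x + s) ≤ c := by
  have hA₂_pos : (0 : ℝ) < #A₂ := mod_cast hA₂.card_pos
  simp only [avg, ← sum_div]
  rw [div_le_iff₀ hA₂_pos, sum_comm, mul_comm, ← nsmul_eq_mul]
  refine sum_le_card_nsmul _ _ _ fun a _ ↦ (hc (x - a)).trans' (le_of_eq ?_)
  simp only [translateCount, add_sub_right_comm]

lemma sum_shiftAvg_le (hA₁ : A₁.Nonempty) (hA₂ : A₂.Nonempty)
    (hc : ∀ v, translateCount S v B ≤ c) (u : G) :
    ∑ s ∈ B, shiftAvg A₁ A₂ (ind S) (u + s) ≤ c := by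
  have hA₁_pos : (0 : ℝ) < #A₁ := mod_cast hA₁.card_pos
  simp only [shiftAvg, ← sum_div, ← add_assoc]
  rw [div_le_iff₀ hA₁_pos, sum_comm, mul_comm, ← nsmul_eq_mul]
  exact sum_le_card_nsmul _ _ _ fun x _ ↦ sum_avg_le hA₂ hc (x + u)

lemma sum_smooth_le (hA₁ : A₁.Nonempty) (hA₂ : A₂.Nonempty) (T : Finset G) (k : ℕ)
    (hc : ∀ v, translateCount S v B ≤ c) :
    ∑ s ∈ B, smooth A₁ A₂ S T k s ≤ #T ^ (2 * k) * c := by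
  rw [card_pow_two_mul_mul_eq_sum]
  simp only [smooth]
  rw [sum_comm]
  refine sum_le_sum fun t _ ↦ ?_
  rw [sum_comm]
  exact sum_le_sum fun t' _ ↦ sum_shiftAvg_le hA₁ hA₂ hc _

lemma le_smooth_zero (hc : ∀ t t' : Fin k → G, (∀ i, t i ∈ T) → (∀ i, t' i ∈ T) →
      c ≤ shiftAvg A₁ A₂ (ind S) (∑ i, (t i - t' i))) :
    #T ^ (2 * k) * c ≤ smooth A₁ A₂ S T k 0 := by
  simp only [card_pow_two_mul_mul_eq_sum, smooth, add_zero]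
  exact sum_le_sum fun t ht ↦ sum_le_sum fun t' ht' ↦
    hc t t' (Fintype.mem_piFinset.1 ht) (Fintype.mem_piFinset.1 ht')

lemma exists_card_mul_le_translateCount [Finite G] (hA₁ : A₁.Nonempty) (hA₂ : A₂.Nonempty)
    (hT : T.Nonempty) (hc : ∀ s ∈ B, #T ^ (2 * k) * c ≤ smooth A₁ A₂ S T k s) :
    ∃ v, #B * c ≤ translateCount S v B := by
  have hT_pos : (0 : ℝ) < #T := mod_cast hT.card_pos
  obtain ⟨v, hv⟩ := Finite.exists_max fun v ↦ translateCount S v B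
  refine ⟨v, le_of_mul_le_mul_left ?_ (pow_pos hT_pos (2 * k))⟩
  calc #T ^ (2 * k) * (#B * c) = ∑ _s ∈ B, #T ^ (2 * k) * c := by
        rw [sum_const, nsmul_eq_mul, mul_left_comm]
    _ ≤ ∑ s ∈ B, smooth A₁ A₂ S T k s := sum_le_sum hc
    _ ≤ #T ^ (2 * k) * translateCount S v B := sum_smooth_le hA₁ hA₂ T k hv

lemma one_sub_le_shiftAvg_zero (hA₁ : A₁.Nonempty) (hA₂ : A₂.Nonempty) {φ w : G → ℝ}
    (hφ : ∀ x ∈ A₁, ∀ a ∈ A₂, φ (x - a) = 1 - w (x - a))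
    (hw : ∑ x ∈ A₁, ∑ a ∈ A₂, w (x - a) ≤ c * (#A₁ * #A₂)) :
    1 - c ≤ shiftAvg A₁ A₂ φ 0 := by
  have hA₁_pos : (0 : ℝ) < #A₁ := mod_cast hA₁.card_pos
  have hA₂_pos : (0 : ℝ) < #A₂ := mod_cast hA₂.card_pos
  simp only [shiftAvg, avg, add_zero, ← sum_div, div_div]
  rw [le_div_iff₀ (by positivity), sum_congr rfl fun x hx ↦ sum_congr rfl fun a ha ↦ hφ x hx a ha]
  simp only [sum_sub_distrib, sum_const, nsmul_eq_mul, mul_one]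
  linarith

lemma norm_apply_sub_one_mul_norm_charSum_pow_le [Finite G] {ψ : AddChar G ℂ} {s : G} {β : ℝ}
    (hψ : #T / 2 ≤ ‖charSum T ψ‖ → ‖ψ s - 1‖ ≤ β) (hk : 2 * (1 / 4) ^ k ≤ β) :
    ‖ψ s - 1‖ * ‖charSum T ψ‖ ^ (2 * k) ≤ β * #T ^ (2 * k) := by
  obtain h_large | h_small := le_or_gt ((#T : ℝ) / 2) ‖charSum T ψ‖
  · exact mul_le_mul (hψ h_large) (pow_le_pow_left₀ (norm_nonneg _) (norm_charSum_le_card T ψ) _)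
      (by positivity) ((norm_nonneg _).trans (hψ h_large))
  · have norm_le_two : ‖ψ s - 1‖ ≤ 2 :=
      (norm_sub_le _ _).trans (by rw [AddChar.norm_apply, norm_one, one_add_one_eq_two])
    calc ‖ψ s - 1‖ * ‖charSum T ψ‖ ^ (2 * k) ≤ 2 * (#T / 2) ^ (2 * k) := by gcongr
      _ = 2 * (1 / 4) ^ k * #T ^ (2 * k) := by
        rw [pow_mul, pow_mul, div_pow, div_eq_mul_one_div, mul_pow]
        ring
      _ ≤ β * #T ^ (2 * k) := by gcongr

lemma le_smooth_of_le_smooth_zero [Finite G] (hA₁ : A₁.Nonempty) (hA₂ : A₂.Nonempty) {s : G}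
    {σ : ℝ} (hσ : σ ≤ 1) (hS : σ * #S ≤ 2 * #A₁)
    (hψ : ∀ ψ : AddChar G ℂ, ‖ψ s - 1‖ * ‖charSum T ψ‖ ^ (2 * k) ≤ σ / 200 * #T ^ (2 * k))
    (h_zero : #T ^ (2 * k) * (96 / 100) ≤ smooth A₁ A₂ S T k 0) :
    #T ^ (2 * k) * (95 / 100) ≤ smooth A₁ A₂ S T k s := by
  have hA₁_pos : (0 : ℝ) < #A₁ := mod_cast hA₁.card_pos
  have h_mass : σ * ((#S + #A₁) / (2 * #A₁)) ≤ 2 := by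
    rw [← mul_div_assoc, div_le_iff₀ (by positivity)]
    nlinarith
  have h_error : σ / 200 * #T ^ (2 * k) * ((#S + #A₁) / (2 * #A₁)) ≤ #T ^ (2 * k) * (1 / 100) := by
    calc σ / 200 * #T ^ (2 * k) * ((#S + #A₁) / (2 * #A₁))
        = #T ^ (2 * k) * (σ * ((#S + #A₁) / (2 * #A₁)) / 200) := by ring
      _ ≤ #T ^ (2 * k) * (2 / 200) := by gcongr
      _ = #T ^ (2 * k) * (1 / 100) := by ring
  linarith [(abs_le.1 (abs_smooth_sub_smooth_zero_le hA₁ hA₂ S T hψ)).1]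

lemma mul_two_mul_add_le_one_div_fifty {k σ D A : ℝ} (hk : 0 < k) (hA : 0 < A)
    (hD : σ * D ≤ 2 * A) :
    k * (2 * (1 / (400 * k)) + 2 * (σ / (400 * k)) * D / A) ≤ 1 / 50 := by
  have h_ratio : σ * D / A ≤ 2 := (div_le_iff₀ hA).2 hD
  calc k * (2 * (1 / (400 * k)) + 2 * (σ / (400 * k)) * D / A)
      = 1 / 200 + σ * D / A / 200 := by
        field_simp
        ring
    _ ≤ 1 / 50 := by linarith

section Fintype

variable [Fintype G] {L : ℝ}

lemma exists_sum_autocorr_ind_le (X B : Finset G) (v : G) :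
    ∃ z, ∑ s ∈ B, autocorr (ind X) (v + s) ≤ #X * translateCount X z B := by
  obtain ⟨z, hz⟩ := Finite.exists_max fun z ↦ translateCount X z B
  refine ⟨z, ?_⟩
  simp only [autocorr, sum_ind_mul]
  rw [sum_comm, ← nsmul_eq_mul]
  refine sum_le_card_nsmul _ _ _ fun a _ ↦ (hz (a + v)).trans' (le_of_eq ?_)
  simp only [translateCount, add_assoc]

lemma exists_mul_translateCount_le (hS : ∀ x ∈ S, L ≤ autocorr (ind X) x) (v : G) (B : Finset G) :
    ∃ z, L * translateCount S v B ≤ #X * translateCount X z B := by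
  classical
  obtain ⟨z, hz⟩ := exists_sum_autocorr_ind_le X B v
  refine ⟨z, hz.trans' ?_⟩
  rw [translateCount, mul_sum]
  refine sum_le_sum fun s _ ↦ ?_
  rw [ind_apply]
  split_ifs with hs
  · simpa only [mul_one] using hS _ hs
  · simpa only [mul_zero] using autocorr_ind_nonneg X _

variable {A' : Finset G} {Δ Λ : Finset (AddChar G ℂ)} {ρ₃ ρ₄ ρ₅ ρ₆ ρ₇ ρ₈ σ ε M : ℝ} {m M₀ : ℕ}

lemma BohrRegular.exists_popular_set (h₃ : BohrRegular Δ ρ₃ ρ₄ 1) (hρ₄ : 0 ≤ ρ₄) (hσ : 0 < σ)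
    (hA'₀ : A'.Nonempty) (hA' : A' ⊆ bohrSet Δ ρ₃) (hA'_card : σ * #(bohrSet Δ ρ₃) ≤ #A')
    (hbad : 100 * ∑ b ∈ A', ∑ b' ∈ A', unpopularWeight X M (b - b') ≤ (#A' : ℝ) ^ 2) :
    ∃ (y : G) (A₂ S : Finset G), A₂.Nonempty ∧ (∀ a ∈ A₂, a - y ∈ bohrSet Δ ρ₄) ∧
      σ / 4 * #(bohrSet Δ ρ₄) ≤ #A₂ ∧ (#S : ℝ) ≤ 2 * #(bohrSet Δ ρ₃) ∧
      (∀ x ∈ S, 11 / 10 * M ≤ autocorr (ind X) x) ∧ 49 / 50 ≤ shiftAvg A' A₂ (ind S) 0 := by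
  classical
  have h_card : (#(bohrSet Δ (ρ₃ + ρ₄)) : ℝ) ≤ 2 * #(bohrSet Δ ρ₃) :=
    h₃.card_le_two_mul le_rfl le_rfl
  obtain ⟨y, A₂, -, hA₂y, hA₂_card, hA₂, hbad₂⟩ := exists_subset_translate_sum_le
    (fun a ha b hb ↦ sub_mem_bohrSet (hA' ha) hb) hA'₀ (bohrSet_nonempty Δ hρ₄)
    (unpopularWeight_nonneg X M) (half_pos hσ) (by nlinarith) hbad
  set S : Finset G := {x ∈ (bohrSet Δ (ρ₃ + ρ₄)).image (· - y) | 11 / 10 * M < autocorr (ind X) x}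
    with hS
  have ind_S : ∀ x ∈ A', ∀ a ∈ A₂, ind S (x - a) = 1 - unpopularWeight X M (x - a) := by
    intro x hx a ha
    have h_mem : x - a ∈ (bohrSet Δ (ρ₃ + ρ₄)).image (· - y) :=
      mem_image.2 ⟨x - (a - y), sub_mem_bohrSet (hA' hx) (hA₂y a ha), by abel⟩
    have mem_S : x - a ∈ S ↔ ¬autocorr (ind X) (x - a) ≤ 11 / 10 * M := by
      rw [hS, mem_filter, not_le, and_iff_right h_mem]
    simp only [ind_apply, unpopularWeight, mem_S, ite_not]
    split_ifs <;> norm_num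
  refine ⟨y, A₂, S, hA₂, hA₂y, by linarith, h_card.trans' ?_,
    fun x hx ↦ (mem_filter.1 hx).2.le, ?_⟩
  · exact mod_cast (card_filter_le _ _).trans card_image_le
  · calc (49 / 50 : ℝ) = 1 - 1 / 50 := by norm_num
      _ ≤ shiftAvg A' A₂ (ind S) 0 := one_sub_le_shiftAvg_zero hA'₀ hA₂ ind_S (by linarith)

lemma BohrRegular.exists_forall_approxTranslate_avg (h₄ : BohrRegular Δ ρ₄ ρ₅ 1) (hρ₄ : 0 ≤ ρ₄)
    (hρ₅ : 0 ≤ ρ₅) (hσ : 0 < σ) {y : G} (hA₂ : A₂.Nonempty) (hA₂y : ∀ a ∈ A₂, a - y ∈ bohrSet Δ ρ₄)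
    (hA₂_card : σ / 4 * #(bohrSet Δ ρ₄) ≤ #A₂) {φ : G → ℝ} (hφ : ∀ x, φ x ∈ Set.Icc 0 1)
    (D : Finset G) (hm : m ≠ 0) (hε : 0 ≤ ε) {κ : ℝ} (hκ₀ : 0 < κ)
    (hκ : 4 * Real.exp (-(m * ε ^ 2 / 2)) ≤ κ) :
    ∃ T ⊆ bohrSet Δ ρ₅, T.Nonempty ∧ 1 / 2 * (σ / 8) ^ m * #(bohrSet Δ ρ₅) ≤ #T ∧
      ∃ H : G → ℝ, ∀ t ∈ T, ApproxTranslate (avg A₂ φ) H D ε κ t := by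
  classical
  set W := (bohrSet Δ (ρ₄ + ρ₅)).image (· + y)
  have hW : ∀ a ∈ A₂, ∀ t ∈ bohrSet Δ ρ₅, a + t ∈ W := fun a ha t ht ↦
    mem_image.2 ⟨a - y + t, add_mem_bohrSet (hA₂y a ha) ht, by abel⟩
  have hW₀ : W.Nonempty := (bohrSet_nonempty Δ (add_nonneg hρ₄ hρ₅)).image _
  have hW_card : σ / 8 * #W ≤ #A₂ := by
    have : (#W : ℝ) ≤ 2 * #(bohrSet Δ ρ₄) :=
      (h₄.card_le_two_mul le_rfl le_rfl).trans' (mod_cast card_image_le)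
    nlinarith
  obtain ⟨T, hT, hT_card, h_approx⟩ :=
    exists_large_forall_approxTranslate_avg hφ hA₂ hW hW₀ D hm hε hκ₀ hκ
  have hT_large : 1 / 2 * (σ / 8) ^ m * #(bohrSet Δ ρ₅) ≤ #T :=
    pow_mul_card_le_of_card_pow_mul_card_le hW₀ (by positivity) hW_card hT_card
  have hT_pos : (0 : ℝ) < #T :=
    hT_large.trans_lt' (mul_pos (by positivity) (card_bohrSet_pos Δ hρ₅))
  exact ⟨T, hT, card_pos.1 (mod_cast hT_pos), hT_large, h_approx⟩

lemma add_sum_sub_mem_bohrSet (hρ₅ : 0 ≤ ρ₅) (hT : T ⊆ bohrSet Δ ρ₅) {x : G}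
    (hx : x ∈ bohrSet Δ ρ₃) {j : ℕ} (hj : j ≤ k) {t t' : Fin j → G} (ht : ∀ i, t i ∈ T)
    (ht' : ∀ i, t' i ∈ T) : x + ∑ i, (t i - t' i) ∈ bohrSet Δ (ρ₃ + k * (2 * ρ₅)) := by
  have h_sum : ∑ i, (t i - t' i) ∈ bohrSet Δ (j * (2 * ρ₅)) := sum_mem_bohrSet fun i ↦
    two_mul ρ₅ ▸ sub_mem_bohrSet (hT (ht i)) (hT (ht' i))
  exact bohrSet_mono (by gcongr) (add_mem_bohrSet hx h_sum)

lemma BohrRegular.exists_le_smooth_zero (h₃ : BohrRegular Δ ρ₃ (k * (2 * ρ₅)) 1)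
    (h₄ : BohrRegular Δ ρ₄ ρ₅ 1) (hρ₄ : 0 ≤ ρ₄) (hρ₅ : 0 ≤ ρ₅) (hσ : 0 < σ) (hA'₀ : A'.Nonempty)
    (hA' : A' ⊆ bohrSet Δ ρ₃) (hA'_card : σ * #(bohrSet Δ ρ₃) ≤ #A') {y : G} (hA₂ : A₂.Nonempty)
    (hA₂y : ∀ a ∈ A₂, a - y ∈ bohrSet Δ ρ₄) (hA₂_card : σ / 4 * #(bohrSet Δ ρ₄) ≤ #A₂)
    (h_popular : 49 / 50 ≤ shiftAvg A' A₂ (ind S) 0) (hk : k ≠ 0) (hm : m ≠ 0)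
    (hmσ : 4 * Real.exp (-(m * (1 / (400 * k) : ℝ) ^ 2 / 2)) ≤ σ / (400 * k)) :
    ∃ T ⊆ bohrSet Δ ρ₅, T.Nonempty ∧ 1 / 2 * (σ / 8) ^ m * #(bohrSet Δ ρ₅) ≤ #T ∧
      #T ^ (2 * k) * (96 / 100) ≤ smooth A' A₂ S T k 0 := by
  have hk_pos : (0 : ℝ) < k := mod_cast hk.bot_lt
  have hA'_pos : (0 : ℝ) < #A' := mod_cast hA'₀.card_pos
  have h_ind (x : G) : ind S x ∈ Set.Icc 0 1 := ⟨ind_nonneg S x, ind_le_one S x⟩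
  set D := bohrSet Δ (ρ₃ + k * (2 * ρ₅))
  obtain ⟨T, hT, hT₀, hT_card, H, hH⟩ := h₄.exists_forall_approxTranslate_avg hρ₄ hρ₅ hσ hA₂ hA₂y
    hA₂_card h_ind D hm (by positivity) (by positivity) hmσ
  refine ⟨T, hT, hT₀, hT_card, le_smooth_zero fun t t' ht ht' ↦ ?_⟩
  have h_shift := le_shiftAvg_sum_sub h_ind hA'₀ (by positivity) hH (k := k)
    (fun j hj t t' ht ht' x hx ↦ add_sum_sub_mem_bohrSet hρ₅ hT (hA' hx) hj ht ht') ht ht'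
  have hD : σ * #D ≤ 2 * #A' := by
    calc σ * #D ≤ σ * (2 * #(bohrSet Δ ρ₃)) := by
          gcongr
          exact h₃.card_le_two_mul le_rfl le_rfl
      _ ≤ 2 * #A' := by linarith
  linarith [mul_two_mul_add_le_one_div_fifty hk_pos hA'_pos hD]

lemma BohrRegular.exists_controlsSpectrum {τ : ℝ}
    (h₅ : BohrRegular Δ ρ₅ ((2 * (M₀ + 1) : ℕ) * ρ₇) 1) (hρ₇ : 0 ≤ ρ₇) (hT : T ⊆ bohrSet Δ ρ₅)
    (hT₀ : T.Nonempty) (hτ : 0 ≤ τ) (hT_card : τ * #(bohrSet Δ ρ₅) ≤ #T)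
    (hM₀ : 4 < τ * Real.exp ((M₀ + 1) / 8)) :
    ∃ Λ : Finset (AddChar G ℂ), #Λ ≤ M₀ ∧ ControlsSpectrum Λ (bohrSet Δ ρ₇) T M₀ := by
  refine exists_card_le_controlsSpectrum (τ := τ / 2) (bohrSet_nonempty Δ hρ₇) hT₀
    (fun x hx s hs ↦ add_mem_bohrSet (hT hx) (sum_mem_bohrSet hs)) ?_ (by linarith)
  calc τ / 2 * #(bohrSet Δ (ρ₅ + (2 * (M₀ + 1) : ℕ) * ρ₇))
      ≤ τ / 2 * (2 * #(bohrSet Δ ρ₅)) := by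
        gcongr
        exact h₅.card_le_two_mul le_rfl le_rfl
    _ = τ * #(bohrSet Δ ρ₅) := by ring
    _ ≤ #T := hT_card

lemma ControlsSpectrum.norm_apply_sub_one_le [DecidableEq (AddChar G ℂ)]
    (hΛ : ControlsSpectrum Λ (bohrSet Δ ρ₇) T M₀) (h₇ : BohrRegular Δ ρ₇ ρ₈ ε) (hε : 0 ≤ ε)
    (hεσ : 4 * ε ≤ σ / 400) (hρ₆ : 0 ≤ ρ₆) (hρ₆ρ₈ : ρ₆ ≤ ρ₈) (hρ₆σ : (M₀ + 1) * ρ₆ ≤ σ / 400)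
    {s : G} (hs : s ∈ bohrSet (Δ ∪ Λ) ρ₆) {ψ : AddChar G ℂ} (hψ : #T / 2 ≤ ‖charSum T ψ‖) :
    ‖ψ s - 1‖ ≤ σ / 200 := by
  have hsΔ : s ∈ bohrSet Δ ρ₈ := bohrSet_mono hρ₆ρ₈ (bohrSet_anti subset_union_left hs)
  have hsΛ : ∀ χ ∈ Λ, ‖χ s - 1‖ ≤ ρ₆ := mem_bohrSet.1 (bohrSet_anti subset_union_right hs)
  linarith [hΛ hρ₆ hε hsΛ
    (h₇.norm_apply_sub_one_mul_norm_charSum_le (hρ₆.trans hρ₆ρ₈) hsΔ) hψ]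

theorem exists_forall_exists_le_translateCount [DecidableEq (AddChar G ℂ)]
    (h₃ : BohrRegular Δ ρ₃ ρ₄ 1) (h₃' : BohrRegular Δ ρ₃ (k * (2 * ρ₅)) 1)
    (h₄ : BohrRegular Δ ρ₄ ρ₅ 1) (h₅ : BohrRegular Δ ρ₅ ((2 * (M₀ + 1) : ℕ) * ρ₇) 1)
    (h₇ : BohrRegular Δ ρ₇ ρ₈ ε) (hρ₃ : 0 ≤ ρ₃) (hρ₄ : 0 ≤ ρ₄) (hρ₅ : 0 ≤ ρ₅) (hρ₇ : 0 ≤ ρ₇)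
    (hε : 0 ≤ ε) (hM : 0 ≤ M) (hσ : 0 < σ) (hσ_one : σ ≤ 1) (hεσ : 4 * ε ≤ σ / 400)
    (hA' : A' ⊆ bohrSet Δ ρ₃) (hA'_card : σ * #(bohrSet Δ ρ₃) ≤ #A')
    (hbad : 100 * ∑ b ∈ A', ∑ b' ∈ A', unpopularWeight X M (b - b') ≤ (#A' : ℝ) ^ 2)
    (hk : k ≠ 0) (hm : m ≠ 0) (hkσ : 2 * (1 / 4) ^ k ≤ σ / 200)
    (hmσ : 4 * Real.exp (-(m * (1 / (400 * k) : ℝ) ^ 2 / 2)) ≤ σ / (400 * k))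
    (hM₀ : 4 < 1 / 2 * (σ / 8) ^ m * Real.exp ((M₀ + 1) / 8)) :
    ∃ Λ : Finset (AddChar G ℂ), #Λ ≤ M₀ ∧ ∀ ρ₆, 0 ≤ ρ₆ → ρ₆ ≤ ρ₈ → (M₀ + 1) * ρ₆ ≤ σ / 400 →
      ∃ z, 209 / 200 * M * #(bohrSet (Δ ∪ Λ) ρ₆) ≤
        #X * translateCount X z (bohrSet (Δ ∪ Λ) ρ₆) := by
  have hA'_pos : (0 : ℝ) < #A' := hA'_card.trans_lt' (mul_pos hσ (card_bohrSet_pos Δ hρ₃))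
  have hA'₀ : A'.Nonempty := card_pos.1 (mod_cast hA'_pos)
  obtain ⟨y, A₂, S, hA₂, hA₂y, hA₂_card, hS_card, hS, h_popular⟩ :=
    h₃.exists_popular_set hρ₄ hσ hA'₀ hA' hA'_card hbad
  obtain ⟨T, hT, hT₀, hT_card, h_zero⟩ := h₃'.exists_le_smooth_zero h₄ hρ₄ hρ₅ hσ hA'₀ hA' hA'_card
    hA₂ hA₂y hA₂_card h_popular hk hm hmσ
  obtain ⟨Λ, hΛ_card, hΛ⟩ := h₅.exists_controlsSpectrum hρ₇ hT hT₀ (by positivity) hT_card hM₀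
  refine ⟨Λ, hΛ_card, fun ρ₆ hρ₆ hρ₆ρ₈ hρ₆σ ↦ ?_⟩
  have h_smooth : ∀ s ∈ bohrSet (Δ ∪ Λ) ρ₆, #T ^ (2 * k) * (95 / 100) ≤ smooth A' A₂ S T k s :=
    fun s hs ↦ le_smooth_of_le_smooth_zero hA'₀ hA₂ hσ_one (by nlinarith)
      (fun ψ ↦ norm_apply_sub_one_mul_norm_charSum_pow_le
        (hΛ.norm_apply_sub_one_le h₇ hε hεσ hρ₆ hρ₆ρ₈ hρ₆σ hs) hkσ) h_zero
  obtain ⟨v, hv⟩ := exists_card_mul_le_translateCount hA'₀ hA₂ hT₀ h_smooth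
  obtain ⟨z, hz⟩ := exists_mul_translateCount_le hS v (bohrSet (Δ ∪ Λ) ρ₆)
  refine ⟨z, hz.trans' ?_⟩
  calc 209 / 200 * M * #(bohrSet (Δ ∪ Λ) ρ₆)
      = 11 / 10 * M * (#(bohrSet (Δ ∪ Λ) ρ₆) * (95 / 100)) := by ring
    _ ≤ 11 / 10 * M * translateCount S v (bohrSet (Δ ∪ Λ) ρ₆) := by gcongr

end Fintype

end StructureStep

/-! ### The density increment -/

section DensityIncrement

variable {G : Type*}

lemma card_le_two_pow_of_card_sq_div_lt {B X : Finset G} {n : ℕ}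
    (hX : (1 / 2 : ℝ) ^ (n + 1) * #B ≤ #X) (hXB : (#X : ℝ) ^ 2 / #B < 4) :
    #B ≤ 2 ^ (2 * n + 4) := by
  obtain rfl | hB := B.eq_empty_or_nonempty
  · simp
  have hB_pos : (0 : ℝ) < #B := mod_cast hB.card_pos
  rw [div_lt_iff₀ hB_pos] at hXB
  have h_sq : (1 / 2 : ℝ) ^ (2 * n + 2) * #B ≤ 4 := by
    refine le_of_mul_le_mul_right ?_ hB_pos
    calc (1 / 2 : ℝ) ^ (2 * n + 2) * #B * #B = ((1 / 2) ^ (n + 1) * #B) ^ 2 := by ring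
      _ ≤ #X ^ 2 := by gcongr
      _ ≤ 4 * #B := hXB.le
  have h_real : (#B : ℝ) ≤ 2 ^ (2 * n + 4) := by
    calc (#B : ℝ) = 2 ^ (2 * n + 2) * ((1 / 2) ^ (2 * n + 2) * #B) := by
          rw [← mul_assoc, ← mul_pow]
          norm_num
      _ ≤ 2 ^ (2 * n + 2) * 4 := by gcongr
      _ = 2 ^ (2 * n + 4) := by ring
  exact mod_cast h_real

lemma mul_le_of_sq_div_mul_le {a b t x y : ℝ} (hb : 0 < b) (ha : 0 < a) (hy : 0 ≤ y)
    (hx : 97 / 100 * a * b ≤ x) (h : 209 / 200 * (x ^ 2 / b) * y ≤ x * t) :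
    101 / 100 * a * y ≤ t := by
  have hx_pos : 0 < x := hx.trans_lt' (by positivity)
  have ha_le : 97 / 100 * a ≤ x / b := by rwa [le_div_iff₀ hb]
  refine le_of_mul_le_mul_left ?_ hx_pos
  calc x * (101 / 100 * a * y) ≤ x * (209 / 200 * (x / b) * y) := by
        gcongr ?_ * (?_ * y)
        linarith
    _ = 209 / 200 * (x ^ 2 / b) * y := by ring
    _ ≤ x * t := h

variable [AddCommGroup G] {A B X : Finset G} {x y : G}

lemma translateCount_le_card (A : Finset G) (x : G) (B : Finset G) : translateCount A x B ≤ #B := by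
  simpa [translateCount] using sum_le_card_nsmul B _ 1 fun b _ ↦ ind_le_one A (x + b)

lemma translateCount_mono {X A : Finset G} (h : X ⊆ A) (x : G) (B : Finset G) :
    translateCount X x B ≤ translateCount A x B :=
  sum_le_sum fun _ _ ↦ Set.indicator_le_indicator_of_subset (coe_subset.2 h)
    (fun _ ↦ zero_le_one) _

lemma translateCount_zero [DecidableEq G] (A B : Finset G) : translateCount A 0 B = #(A ∩ B) := by
  simp only [translateCount, zero_add]
  rw [sum_ind, filter_mem_eq_inter, inter_comm]

open scoped Pointwise in
lemma translateCount_neg_vadd [DecidableEq G] (A B : Finset G) (x y : G) :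
    translateCount (-x +ᵥ A) y B = translateCount A (x + y) B := by
  simp only [translateCount, ind_apply, mem_neg_vadd_finset_iff, vadd_eq_add, add_assoc]

section Averaging

variable [Fintype G] {Γ : Finset (AddChar G ℂ)} {ρ δ ε α : ℝ} {B₁ B₂ : Finset G}

lemma BohrRegular.translateCount_sub_le (h : BohrRegular Γ ρ δ ε) (hδ : 0 ≤ δ)
    (hy : y ∈ bohrSet Γ δ) (A : Finset G) (x : G) :
    translateCount A x (bohrSet Γ ρ) - ε * #(bohrSet Γ ρ) ≤
      translateCount A (x + y) (bohrSet Γ ρ) := by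
  classical
  set B := bohrSet Γ ρ
  have h_inside : ∑ u ∈ B with u + -y ∈ B, ind A (x + u) ≤ translateCount A (x + y) B := by
    calc ∑ u ∈ B with u + -y ∈ B, ind A (x + u)
        = ∑ v ∈ B with v + y ∈ B, ind A (x + y + v) := by
          refine sum_nbij' (· + -y) (· + y) ?_ ?_ ?_ ?_ ?_ <;> simp +contextual [add_assoc]
      _ ≤ translateCount A (x + y) B :=
          sum_le_sum_of_subset_of_nonneg (filter_subset _ _) fun _ _ _ ↦ ind_nonneg A _
  have h_outside : ∑ u ∈ B with u + -y ∉ B, ind A (x + u) ≤ ε * #B :=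
    (translateCount_le_card A x _).trans
      (h.card_filter_add_notMem_le hδ (neg_mem_bohrSet.2 hy))
  have h_split := sum_filter_add_sum_filter_not B (fun u ↦ u + -y ∈ B) fun u ↦ ind A (x + u)
  rw [translateCount, ← h_split]
  linarith

lemma BohrRegular.card_mul_le_sum_translateCount_div (h : BohrRegular Γ ρ δ ε) (hδ : 0 ≤ δ)
    (hε : ε ≤ α / 100) (hB₁ : B₁.Nonempty) (hB₁δ : B₁ ⊆ bohrSet Γ δ)
    (hα : α * #(bohrSet Γ ρ) ≤ translateCount A x (bohrSet Γ ρ)) :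
    #(bohrSet Γ ρ) * (99 / 100 * α) ≤ ∑ u ∈ bohrSet Γ ρ, translateCount A (x + u) B₁ / #B₁ := by
  have hB₁_pos : (0 : ℝ) < #B₁ := mod_cast hB₁.card_pos
  rw [← sum_div, le_div_iff₀ hB₁_pos, mul_comm _ (#B₁ : ℝ), ← nsmul_eq_mul]
  calc #B₁ • (#(bohrSet Γ ρ) * (99 / 100 * α))
      ≤ ∑ y ∈ B₁, translateCount A (x + y) (bohrSet Γ ρ) := by
        refine card_nsmul_le_sum _ _ _ fun y hy ↦ ?_
        refine (h.translateCount_sub_le hδ (hB₁δ hy) A x).trans' ?_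
        nlinarith [Nat.cast_nonneg (α := ℝ) #(bohrSet Γ ρ)]
    _ = ∑ u ∈ bohrSet Γ ρ, translateCount A (x + u) B₁ := by
        simp only [translateCount]
        rw [sum_comm]
        simp only [add_right_comm]

lemma BohrRegular.exists_translateCount_dichotomy (h : BohrRegular Γ ρ δ ε) (hρ : 0 ≤ ρ)
    (hδ : 0 ≤ δ) (hε : ε ≤ α / 100) (hB₁ : B₁.Nonempty) (hB₁δ : B₁ ⊆ bohrSet Γ δ)
    (hB₂ : B₂.Nonempty) (hB₂δ : B₂ ⊆ bohrSet Γ δ)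
    (hα : α * #(bohrSet Γ ρ) ≤ translateCount A x (bohrSet Γ ρ)) :
    ∃ z, 101 / 100 * α * #B₁ ≤ translateCount A z B₁ ∨
      101 / 100 * α * #B₂ ≤ translateCount A z B₂ ∨
      (97 / 100 * α * #B₁ ≤ translateCount A z B₁ ∧
        97 / 100 * α * #B₂ ≤ translateCount A z B₂) := by
  have hB₁_pos : (0 : ℝ) < #B₁ := mod_cast hB₁.card_pos
  have hB₂_pos : (0 : ℝ) < #B₂ := mod_cast hB₂.card_pos
  have h_average : ∑ _u ∈ bohrSet Γ ρ, 198 / 100 * α ≤ ∑ u ∈ bohrSet Γ ρ,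
      (translateCount A (x + u) B₁ / #B₁ + translateCount A (x + u) B₂ / #B₂) := by
    rw [sum_add_distrib, sum_const, nsmul_eq_mul]
    linarith [h.card_mul_le_sum_translateCount_div hδ hε hB₁ hB₁δ hα,
      h.card_mul_le_sum_translateCount_div hδ hε hB₂ hB₂δ hα]
  obtain ⟨u, -, hu⟩ := exists_le_of_sum_le (bohrSet_nonempty Γ hρ) h_average
  refine ⟨x + u, ?_⟩
  simp only [← le_div_iff₀ hB₁_pos, ← le_div_iff₀ hB₂_pos]
  by_contra! h_sparse
  obtain ⟨h₁, h₂, h₃⟩ := h_sparse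
  linarith [h₃ (by linarith)]

end Averaging

end DensityIncrement

/-! ### Iterating the density increment -/

section Iteration

variable {G : Type*} [AddCommGroup G] [Fintype G]

/-- The numerical constraints on the parameters of one density increment step for a set of density
at least `(1 / 2) ^ n`. The Bohr sets involved are `(η, ε)`-regular and their radii decrease by
factors of about `ν`; the sifted set has density at least `σ`; `m` and `k` are the numbers of
samples and of iterated differences in the Croot–Sisask argument; each step adds at most `M₀`
characters. -/
structure IncrementParams (n k m M₀ : ℕ) (η ν ε σ : ℝ) : Prop where
  two_le_n : 2 ≤ n
  k_ne_zero : k ≠ 0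
  m_ne_zero : m ≠ 0
  η_pos : 0 < η
  η_le_one : η ≤ 1
  ν_pos : 0 < ν
  four_mul_ν_le : 4 * ν ≤ η
  two_mul_k_mul_ν_le : 2 * k * ν ≤ η
  two_mul_M₀_mul_ν_le : 2 * (M₀ + 1) * ν ≤ η
  M₀_mul_ν_le : (M₀ + 1) * ν ≤ σ / 400
  ε_nonneg : 0 ≤ ε
  four_mul_ε_le : 4 * ε ≤ σ / 400
  ε_le : ε ≤ (1 / 2) ^ n / 1000
  σ_pos : 0 < σ
  σ_le_one : σ ≤ 1
  two_mul_σ_sq_le : 2 * σ ^ 2 ≤ ((1 / 2) ^ (2 * n + 3)) ^ (80 * n)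
  four_mul_exp_le : 4 * Real.exp (-(m * (1 / (400 * k) : ℝ) ^ 2 / 2)) ≤ σ / (400 * k)
  two_mul_pow_le : 2 * (1 / 4) ^ k ≤ σ / 200
  four_lt_mul_exp : 4 < 1 / 2 * (σ / 8) ^ m * Real.exp ((M₀ + 1) / 8)

/-- At every scale, each set of at most `d` characters has a radius at which its Bohr set is
`(η, ε)`-regular. -/
def HasRegularRadii (G : Type*) [AddCommGroup G] [Fintype G] (d : ℕ) (η ε : ℝ) : Prop :=
  ∀ Γ : Finset (AddChar G ℂ), #Γ ≤ d → ∀ r, 0 < r →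
    ∃ ρ, r / 2 ≤ ρ ∧ ρ ≤ r ∧ BohrRegular Γ ρ (η * ρ) ε

/-- `ρ'` is a radius comparable to `ν * ρ` at which the Bohr set of `Γ` is `(η, ε)`-regular. -/
structure RegularSubradius (η ν ε : ℝ) (Γ : Finset (AddChar G ℂ)) (ρ ρ' : ℝ) : Prop where
  half_mul_le : ν / 2 * ρ ≤ ρ'
  le_mul : ρ' ≤ ν * ρ
  regular : BohrRegular Γ ρ' (η * ρ') ε

/-- The outcome of a stage of the density increment: `A` has density at least `α` on a translate of
an `(η, ε)`-regular Bohr set of rank at most `d` and radius between `r` and `1`. -/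
def HasDenseBohrSet (A : Finset G) (η ε : ℝ) (d : ℕ) (r α : ℝ) : Prop :=
  ∃ (Γ : Finset (AddChar G ℂ)) (ρ : ℝ) (x : G), #Γ ≤ d ∧ r ≤ ρ ∧ ρ ≤ 1 ∧
    BohrRegular Γ ρ (η * ρ) ε ∧ α * #(bohrSet Γ ρ) ≤ translateCount A x (bohrSet Γ ρ)

/-- Some Bohr set of rank at most `d` and radius at least `r` has at most `N` elements. -/
def HasSmallBohrSet (G : Type*) [AddCommGroup G] [Fintype G] (d : ℕ) (r : ℝ) (N : ℕ) : Prop :=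
  ∃ (Γ : Finset (AddChar G ℂ)) (ρ : ℝ), #Γ ≤ d ∧ r ≤ ρ ∧ #(bohrSet Γ ρ) ≤ N

variable {A A' C X : Finset G} {Γ Δ : Finset (AddChar G ℂ)} {half : G →+ G} {d d' n k m M₀ N : ℕ}
  {η ν ε σ ρ ρ' ρ₁ ρ₂ ρ₃ r r' α M c : ℝ}

lemma HasRegularRadii.exists_regularSubradius (h : HasRegularRadii G d η ε) (hΓ : #Γ ≤ d)
    (hν : 0 < ν) (hρ : 0 < ρ) : ∃ ρ', 0 < ρ' ∧ RegularSubradius η ν ε Γ ρ ρ' := by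
  obtain ⟨ρ', h_lower, h_upper, h_regular⟩ := h Γ hΓ (ν * ρ) (by positivity)
  exact ⟨ρ', h_lower.trans_lt' (by positivity), by linarith, h_upper, h_regular⟩

lemma RegularSubradius.mul_le (h : RegularSubradius η ν ε Γ ρ ρ') (hc : 0 ≤ c) (hcν : c * ν ≤ η)
    (hρ : 0 ≤ ρ) : c * ρ' ≤ η * ρ :=
  calc c * ρ' ≤ c * (ν * ρ) := by gcongr; exact h.le_mul
    _ = c * ν * ρ := by ring
    _ ≤ η * ρ := by gcongr

lemma RegularSubradius.le (h : RegularSubradius η ν ε Γ ρ ρ') (hν : ν ≤ 1) (hρ : 0 ≤ ρ) :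
    ρ' ≤ ρ :=
  h.le_mul.trans (mul_le_of_le_one_left hρ hν)

lemma RegularSubradius.pow_succ_mul_le (h : RegularSubradius η ν ε Γ ρ ρ') (hν : 0 ≤ ν) {i : ℕ}
    (hr : (ν / 2) ^ i * r ≤ ρ) : (ν / 2) ^ (i + 1) * r ≤ ρ' :=
  calc (ν / 2) ^ (i + 1) * r = ν / 2 * ((ν / 2) ^ i * r) := by ring
    _ ≤ ν / 2 * ρ := by gcongr
    _ ≤ ρ' := h.half_mul_le

lemma HasSmallBohrSet.mono (h : HasSmallBohrSet G d r N) (hd : d ≤ d') (hr : r' ≤ r) :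
    HasSmallBohrSet G d' r' N := by
  obtain ⟨Γ, ρ, hΓ, hρ, h_card⟩ := h
  exact ⟨Γ, ρ, hΓ.trans hd, hr.trans hρ, h_card⟩

lemma HasDenseBohrSet.mono (h : HasDenseBohrSet A η ε d r α) (hd : d ≤ d') (hr : r' ≤ r) :
    HasDenseBohrSet A η ε d' r' α := by
  obtain ⟨Γ, ρ, x, hΓ, hρ, h⟩ := h
  exact ⟨Γ, ρ, x, hΓ.trans hd, hr.trans hρ, h⟩

open scoped Pointwise in
lemma HasDenseBohrSet.of_neg_vadd [DecidableEq G] {x : G}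
    (h : HasDenseBohrSet (-x +ᵥ A) η ε d r α) : HasDenseBohrSet A η ε d r α := by
  obtain ⟨Γ, ρ, y, hΓ, hρ, hρ_one, h_regular, h_dense⟩ := h
  exact ⟨Γ, ρ, x + y, hΓ, hρ, hρ_one, h_regular, translateCount_neg_vadd A _ x y ▸ h_dense⟩

lemma hasDenseBohrSet_one (hε : 0 ≤ ε) (hA : α * Fintype.card G ≤ #A) :
    HasDenseBohrSet A η ε 0 1 α := by
  classical
  have bohrSet_empty (ρ : ℝ) : bohrSet (∅ : Finset (AddChar G ℂ)) ρ = univ := by ext; simp [bohrSet]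
  refine ⟨∅, 1, 0, by simp, le_rfl, le_rfl, ?_, by simpa [bohrSet_empty, translateCount_zero]⟩
  rw [BohrRegular, bohrSet_empty, bohrSet_empty]
  nlinarith

namespace IncrementParams

lemma ν_le_η (P : IncrementParams n k m M₀ η ν ε σ) : ν ≤ η := by
  linarith [P.four_mul_ν_le, P.ν_pos]

lemma ν_le_one (P : IncrementParams n k m M₀ η ν ε σ) : ν ≤ 1 := P.ν_le_η.trans P.η_le_one

lemma ε_le_one (P : IncrementParams n k m M₀ η ν ε σ) : ε ≤ 1 := by
  linarith [P.ε_le, pow_le_one₀ (n := n) (one_half_pos (α := ℝ)).le one_half_lt_one.le]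

lemma mul_le_of_sq_mul_le {a δ : ℝ} (P : IncrementParams n k m M₀ η ν ε σ)
    (hδ : (1 / 2) ^ (n + 1) ≤ δ) (ha : 0 ≤ a)
    (h : c ^ 2 * (δ ^ 2 / 2) ^ (20 * (4 * n)) ≤ 2 * a ^ 2) : σ * c ≤ a := by
  have h_density : (1 / 2) ^ (2 * n + 3) ≤ δ ^ 2 / 2 :=
    calc (1 / 2 : ℝ) ^ (2 * n + 3) = ((1 / 2) ^ (n + 1)) ^ 2 / 2 := by ring
      _ ≤ δ ^ 2 / 2 := by gcongr
  refine le_of_sq_le_sq ?_ ha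
  suffices 2 * (σ * c) ^ 2 ≤ 2 * a ^ 2 by linarith
  calc 2 * (σ * c) ^ 2 = c ^ 2 * (2 * σ ^ 2) := by ring
    _ ≤ c ^ 2 * ((1 / 2) ^ (2 * n + 3)) ^ (80 * n) := by gcongr; exact P.two_mul_σ_sq_le
    _ = c ^ 2 * ((1 / 2) ^ (2 * n + 3)) ^ (20 * (4 * n)) := by rw [← mul_assoc 20 4]; norm_num only
    _ ≤ c ^ 2 * (δ ^ 2 / 2) ^ (20 * (4 * n)) := by gcongr
    _ ≤ 2 * a ^ 2 := h

lemma exists_sifted_subset (P : IncrementParams n k m M₀ η ν ε σ)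
    (half_add_half : ∀ x, half x + half x = x) (hA : ThreeAPFree (A : Set G)) (hρ₁ : 0 < ρ₁)
    (hρ₂ : 0 < ρ₂) (hρ₃ : 0 < ρ₃) (h₁ : BohrRegular Γ ρ₁ (η * ρ₁) ε)
    (h₂ : RegularSubradius η ν ε Γ ρ₁ ρ₂) (h₃ : RegularSubradius η ν ε (precomp half Γ) ρ₂ ρ₃)
    (hXA : X ⊆ A) (hX : X ⊆ bohrSet Γ ρ₁) (hX_card : (1 / 2) ^ (n + 1) * #(bohrSet Γ ρ₁) ≤ (#X : ℝ))
    (hM : 4 ≤ (#X : ℝ) ^ 2 / #(bohrSet Γ ρ₁)) (hCA : C ⊆ A) (hC : C ⊆ bohrSet Γ ρ₂)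
    (hC_card : (1 / 2) ^ (n + 1) * #(bohrSet Γ ρ₂) ≤ (#C : ℝ)) :
    ∃ A' ⊆ bohrSet (precomp half Γ) ρ₃, σ * #(bohrSet (precomp half Γ) ρ₃) ≤ #A' ∧
      100 * ∑ b ∈ A', ∑ b' ∈ A', unpopularWeight X (#X ^ 2 / #(bohrSet Γ ρ₁)) (b - b') ≤
        (#A' : ℝ) ^ 2 := by
  have two_le_n := P.two_le_n
  have hν := P.four_mul_ν_le
  have h₂₃ : BohrRegular Γ ρ₂ (2 * ρ₃) 1 :=
    h₂.regular.mono (h₃.mul_le zero_le_two (by linarith [P.ν_pos]) hρ₂.le) P.ε_le_one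
  have hεX : 300 * ε * #(bohrSet Γ ρ₁) ≤ #X := hX_card.trans' <| by
    gcongr
    rw [pow_succ]
    linarith [P.ε_le, pow_pos (one_half_pos (α := ℝ)) n]
  have hpC : (1 / 2) ^ (4 * n) * (2 * #(bohrSet Γ ρ₂)) ≤ (#C : ℝ) := hC_card.trans' <| by
    rw [← mul_assoc]
    gcongr
    calc (1 / 2 : ℝ) ^ (4 * n) * 2 ≤ (1 / 2) ^ (n + 2) * 2 := by
          gcongr ?_ * 2
          exact pow_le_pow_of_le_one one_half_pos.le one_half_lt_one.le (by lia)
      _ = (1 / 2) ^ (n + 1) := by ring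
  obtain ⟨A', hA', hA'_card, hbad⟩ := h₁.exists_subset_sum_unpopularWeight_le half_add_half h₂₃
    P.ε_nonneg P.ε_le_one hρ₁.le (mul_pos P.η_pos hρ₁).le hρ₂.le hρ₃.le
    (h₂.mul_le zero_le_two (by linarith [P.ν_pos]) hρ₁.le)
    ((h₂.mul_le zero_le_four hν hρ₁.le).trans' (by linarith [h₃.le P.ν_le_one hρ₂.le]))
    hεX hM hA hXA hX hCA hC (p := 4 * n) ⟨2 * n, by ring⟩ (by lia) hpC
  have h_density : (1 / 2) ^ (n + 1) ≤ (#X / #(bohrSet Γ ρ₁) : ℝ) := by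
    rwa [le_div_iff₀ (mod_cast card_bohrSet_pos Γ hρ₁.le)]
  exact ⟨A', hA', P.mul_le_of_sq_mul_le h_density (Nat.cast_nonneg _) hA'_card, hbad⟩

lemma exists_bohrRegular_le_translateCount (P : IncrementParams n k m M₀ η ν ε σ)
    (h_radii : HasRegularRadii G d η ε) (hΔ : #Δ + M₀ ≤ d) (hρ₃ : 0 < ρ₃) (hρ₃_one : ρ₃ ≤ 1)
    (h₃ : BohrRegular Δ ρ₃ (η * ρ₃) ε) (hM : 0 ≤ M) (hA' : A' ⊆ bohrSet Δ ρ₃)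
    (hA'_card : σ * #(bohrSet Δ ρ₃) ≤ #A')
    (hbad : 100 * ∑ b ∈ A', ∑ b' ∈ A', unpopularWeight X M (b - b') ≤ (#A' : ℝ) ^ 2) :
    ∃ (Δ' : Finset (AddChar G ℂ)) (ρ₆ : ℝ) (z : G), #Δ' ≤ #Δ + M₀ ∧ (ν / 2) ^ 4 * ρ₃ ≤ ρ₆ ∧
      ρ₆ ≤ 1 ∧ BohrRegular Δ' ρ₆ (η * ρ₆) ε ∧
      209 / 200 * M * #(bohrSet Δ' ρ₆) ≤ #X * translateCount X z (bohrSet Δ' ρ₆) := by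
  classical
  have hν := P.ν_pos
  have hνη : 1 * ν ≤ η := by linarith [P.ν_le_η]
  have hε := P.ε_le_one
  obtain ⟨ρ₄, hρ₄, h₄⟩ := h_radii.exists_regularSubradius (Γ := Δ) (by lia) hν hρ₃
  obtain ⟨ρ₅, hρ₅, h₅⟩ := h_radii.exists_regularSubradius (Γ := Δ) (by lia) hν hρ₄
  obtain ⟨ρ₇, hρ₇, h₇⟩ := h_radii.exists_regularSubradius (Γ := Δ) (by lia) hν hρ₅
  have h₃₄ : BohrRegular Δ ρ₃ ρ₄ 1 :=
    h₃.mono (by simpa using h₄.mul_le zero_le_one hνη hρ₃.le) hε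
  have h₃₅ : BohrRegular Δ ρ₃ (k * (2 * ρ₅)) 1 := h₃.mono (le_trans (by
    nlinarith [h₅.le P.ν_le_one hρ₄.le]) (h₄.mul_le (by positivity) P.two_mul_k_mul_ν_le hρ₃.le)) hε
  have h₄₅ : BohrRegular Δ ρ₄ ρ₅ 1 :=
    h₄.regular.mono (by simpa using h₅.mul_le zero_le_one hνη hρ₄.le) hε
  have h₅₇ : BohrRegular Δ ρ₅ ((2 * (M₀ + 1) : ℕ) * ρ₇) 1 := h₅.regular.mono
    (h₇.mul_le (by positivity) (mod_cast P.two_mul_M₀_mul_ν_le) hρ₅.le) hε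
  obtain ⟨Λ, hΛ, h_dense⟩ := exists_forall_exists_le_translateCount h₃₄ h₃₅ h₄₅ h₅₇ h₇.regular
    hρ₃.le hρ₄.le hρ₅.le hρ₇.le P.ε_nonneg hM P.σ_pos P.σ_le_one P.four_mul_ε_le hA' hA'_card hbad
    P.k_ne_zero P.m_ne_zero P.two_mul_pow_le P.four_mul_exp_le P.four_lt_mul_exp
  have h_rank : #(Δ ∪ Λ) ≤ #Δ + M₀ := (card_union_le _ _).trans (by gcongr)
  obtain ⟨ρ₆, hρ₆, h₆⟩ := h_radii.exists_regularSubradius (h_rank.trans hΔ) hν hρ₇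
  have hρ₇_one : ρ₇ ≤ 1 := by
    linarith [h₇.le P.ν_le_one hρ₅.le, h₅.le P.ν_le_one hρ₄.le, h₄.le P.ν_le_one hρ₃.le]
  have h_radius : (M₀ + 1) * ρ₆ ≤ σ / 400 :=
    calc (M₀ + 1) * ρ₆ ≤ (M₀ + 1) * (ν * ρ₇) := by gcongr; exact h₆.le_mul
      _ ≤ (M₀ + 1) * ν := by gcongr; exact mul_le_of_le_one_right hν.le hρ₇_one
      _ ≤ σ / 400 := P.M₀_mul_ν_le
  obtain ⟨z, hz⟩ := h_dense ρ₆ hρ₆.le (by simpa using h₆.mul_le zero_le_one hνη hρ₇.le) h_radius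
  exact ⟨Δ ∪ Λ, ρ₆, z, h_rank,
    h₆.pow_succ_mul_le hν.le (h₇.pow_succ_mul_le hν.le (h₅.pow_succ_mul_le hν.le (by
      simpa using h₄.half_mul_le))), (h₆.le P.ν_le_one hρ₇.le).trans hρ₇_one, h₆.regular, hz⟩

lemma card_bohrSet_le_or_hasDenseBohrSet (P : IncrementParams n k m M₀ η ν ε σ)
    (half_add_half : ∀ x, half x + half x = x) (h_radii : HasRegularRadii G d η ε)
    (hA : ThreeAPFree (A : Set G)) (hΓ : #Γ + M₀ ≤ d) (hρ₁ : 0 < ρ₁) (hρ₁_one : ρ₁ ≤ 1)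
    (hρ₂ : 0 < ρ₂) (h₁ : BohrRegular Γ ρ₁ (η * ρ₁) ε) (h₂ : RegularSubradius η ν ε Γ ρ₁ ρ₂)
    (hα : (1 / 2) ^ n ≤ α)
    (hA₁ : 97 / 100 * α * #(bohrSet Γ ρ₁) ≤ translateCount A 0 (bohrSet Γ ρ₁))
    (hA₂ : 97 / 100 * α * #(bohrSet Γ ρ₂) ≤ translateCount A 0 (bohrSet Γ ρ₂)) :
    #(bohrSet Γ ρ₁) ≤ 2 ^ (2 * n + 4) ∨
      HasDenseBohrSet A η ε (#Γ + M₀) ((ν / 2) ^ 6 * ρ₁) (101 / 100 * α) := by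
  classical
  rw [translateCount_zero] at hA₁ hA₂
  have hα_pos : 0 < α := hα.trans_lt' (by positivity)
  have h_density : (1 / 2) ^ (n + 1) ≤ 97 / 100 * α := by rw [pow_succ]; linarith
  have hX_card := (mul_le_mul_of_nonneg_right h_density (Nat.cast_nonneg _)).trans hA₁
  have hC_card := (mul_le_mul_of_nonneg_right h_density (Nat.cast_nonneg _)).trans hA₂
  refine (lt_or_ge _ 4).imp (card_le_two_pow_of_card_sq_div_lt hX_card) fun hM ↦ ?_
  have h_rank : #(precomp half Γ) ≤ #Γ := card_precomp_le ..
  obtain ⟨ρ₃, hρ₃, h₃⟩ := h_radii.exists_regularSubradius (h_rank.trans (by lia)) P.ν_pos hρ₂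
  have hρ₃_one : ρ₃ ≤ 1 := by linarith [h₂.le P.ν_le_one hρ₁.le, h₃.le P.ν_le_one hρ₂.le]
  obtain ⟨A', hA', hA'_card, hbad⟩ := P.exists_sifted_subset half_add_half hA hρ₁ hρ₂ hρ₃ h₁ h₂ h₃
    inter_subset_left inter_subset_right hX_card hM inter_subset_left inter_subset_right hC_card
  obtain ⟨Δ, ρ, z, hΔ, hρ, hρ_one, h_regular, hz⟩ := P.exists_bohrRegular_le_translateCount h_radii
    (by lia) hρ₃ hρ₃_one h₃.regular (by positivity) hA' hA'_card hbad
  refine ⟨Δ, ρ, z, by lia, ?_, hρ_one, h_regular, ?_⟩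
  · have hν := P.ν_pos
    calc (ν / 2) ^ 6 * ρ₁ = (ν / 2) ^ 4 * ((ν / 2) ^ 2 * ρ₁) := by ring
      _ ≤ (ν / 2) ^ 4 * ρ₃ := by
        gcongr
        exact h₃.pow_succ_mul_le hν.le (by simpa using h₂.half_mul_le)
      _ ≤ ρ := hρ
  · have hB₁ : (0 : ℝ) < #(bohrSet Γ ρ₁) := mod_cast card_bohrSet_pos Γ hρ₁.le
    exact (mul_le_of_sq_div_mul_le hB₁ hα_pos (Nat.cast_nonneg _) hA₁ hz).trans
      (translateCount_mono inter_subset_left z _)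

open scoped Pointwise in
lemma hasSmallBohrSet_or_hasDenseBohrSet_succ (P : IncrementParams n k m M₀ η ν ε σ)
    (half_add_half : ∀ x, half x + half x = x) (h_radii : HasRegularRadii G d η ε)
    (hA : ThreeAPFree (A : Set G)) (hd : d' + M₀ ≤ d) (hr : 0 < r) (hα : (1 / 2) ^ n ≤ α)
    (h : HasDenseBohrSet A η ε d' r α) :
    HasSmallBohrSet G d' (ν / 2 * r) (2 ^ (2 * n + 4)) ∨
      HasDenseBohrSet A η ε (d' + M₀) ((ν / 2) ^ 7 * r) (101 / 100 * α) := by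
  classical
  obtain ⟨Γ, ρ, x, hΓ, hrρ, hρ_one, h₀, h_dense⟩ := h
  have hν := P.ν_pos
  have hν_half : ν / 2 ≤ 1 := by linarith [P.ν_le_one]
  have hρ : 0 < ρ := hr.trans_le hrρ
  obtain ⟨ρ₁, hρ₁, h₁⟩ := h_radii.exists_regularSubradius (Γ := Γ) (by lia) hν hρ
  obtain ⟨ρ₂, hρ₂, h₂⟩ := h_radii.exists_regularSubradius (Γ := Γ) (by lia) hν hρ₁
  have hρ₁_lower : (ν / 2) ^ 1 * r ≤ ρ₁ := h₁.pow_succ_mul_le hν.le (by simpa)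
  have hρ₂_lower : (ν / 2) ^ 2 * r ≤ ρ₂ := h₂.pow_succ_mul_le hν.le hρ₁_lower
  have hρ₁_upper : ρ₁ ≤ η * ρ := h₁.le_mul.trans (by gcongr; exact P.ν_le_η)
  have hρ₁_one : ρ₁ ≤ 1 := (h₁.le P.ν_le_one hρ.le).trans hρ_one
  have hρ₂_one : ρ₂ ≤ 1 := (h₂.le P.ν_le_one hρ₁.le).trans hρ₁_one
  have h_pow {i : ℕ} (hi : i ≤ 7) : (ν / 2) ^ 7 * r ≤ (ν / 2) ^ i * r := by
    gcongr ?_ * r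
    exact pow_le_pow_of_le_one (by positivity) hν_half hi
  obtain ⟨z, hz | hz | ⟨hz₁, hz₂⟩⟩ := h₀.exists_translateCount_dichotomy hρ.le
    (mul_pos P.η_pos hρ).le (by linarith [P.ε_le, pow_pos (one_half_pos (α := ℝ)) n])
    (bohrSet_nonempty Γ hρ₁.le) (bohrSet_mono hρ₁_upper)
    (bohrSet_nonempty Γ hρ₂.le)
    (bohrSet_mono ((h₂.le P.ν_le_one hρ₁.le).trans hρ₁_upper)) h_dense
  · exact .inr ⟨Γ, ρ₁, z, by lia, (h_pow (by simp)).trans hρ₁_lower, hρ₁_one, h₁.regular, hz⟩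
  · exact .inr ⟨Γ, ρ₂, z, by lia, (h_pow (by simp)).trans hρ₂_lower, hρ₂_one, h₂.regular, hz⟩
  · have hA_vadd : ThreeAPFree ((-z +ᵥ A : Finset G) : Set G) := by
      simpa using hA.vadd_set
    refine (P.card_bohrSet_le_or_hasDenseBohrSet half_add_half h_radii hA_vadd (by lia) hρ₁
      hρ₁_one hρ₂ h₁.regular h₂ hα ?_ ?_).imp (fun h ↦ ⟨Γ, ρ₁, hΓ, by simpa using hρ₁_lower, h⟩)
      fun h ↦ h.of_neg_vadd.mono (by lia) ?_
    · simpa [translateCount_neg_vadd] using hz₁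
    · simpa [translateCount_neg_vadd] using hz₂
    · calc (ν / 2) ^ 7 * r = (ν / 2) ^ 6 * ((ν / 2) ^ 1 * r) := by ring
        _ ≤ (ν / 2) ^ 6 * ρ₁ := by gcongr

lemma hasSmallBohrSet_or_hasDenseBohrSet_pow (P : IncrementParams n k m M₀ η ν ε σ) {J : ℕ}
    (half_add_half : ∀ x, half x + half x = x) (h_radii : HasRegularRadii G (J * M₀) η ε)
    (hA : ThreeAPFree (A : Set G)) (hA_card : (1 / 2 : ℝ) ^ n * Fintype.card G ≤ #A) :
    ∀ j ≤ J, HasSmallBohrSet G (J * M₀) ((ν / 2) ^ (7 * J + 1)) (2 ^ (2 * n + 4)) ∨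
      HasDenseBohrSet A η ε (j * M₀) ((ν / 2) ^ (7 * j)) ((101 / 100) ^ j * (1 / 2) ^ n) := by
  have hν := P.ν_pos
  have hν_half : ν / 2 ≤ 1 := by linarith [P.ν_le_one]
  intro j hj
  induction j with
  | zero => exact .inr (by simpa using hasDenseBohrSet_one P.ε_nonneg hA_card)
  | succ j ih =>
    obtain h_small | h_dense := ih (by lia)
    · exact .inl h_small
    have h_rank : j * M₀ + M₀ ≤ J * M₀ := by rw [← Nat.succ_mul]; gcongr
    have hα : (1 / 2 : ℝ) ^ n ≤ (101 / 100) ^ j * (1 / 2) ^ n :=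
      le_mul_of_one_le_left (by positivity) (one_le_pow₀ (by norm_num))
    obtain h_small | h_dense := P.hasSmallBohrSet_or_hasDenseBohrSet_succ half_add_half h_radii hA
      h_rank (by positivity) hα h_dense
    · refine .inl (h_small.mono (by lia) ?_)
      rw [← pow_succ']
      exact pow_le_pow_of_le_one (by positivity) hν_half (by lia)
    · rw [← Nat.succ_mul, ← pow_add, add_comm 7, ← Nat.mul_succ, ← mul_assoc, ← pow_succ']
        at h_dense
      exact .inr h_dense

lemma card_le_of_threeAPFree (P : IncrementParams n k m M₀ η ν ε σ)
    (half_add_half : ∀ x, half x + half x = x) (h_radii : HasRegularRadii G (100 * n * M₀) η ε)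
    (hA : ThreeAPFree (A : Set G)) (hA_card : (1 / 2 : ℝ) ^ n * Fintype.card G ≤ #A) {i : ℕ}
    (hi : (1 / 2 : ℝ) ^ i ≤ (ν / 2) ^ (7 * (100 * n) + 1)) :
    Fintype.card G ≤ 81 ^ (100 * n * M₀ * (i + 1)) * 2 ^ (2 * n + 4) := by
  have hν := P.ν_pos
  obtain ⟨Γ, ρ, hΓ, hρ, h_card⟩ | ⟨Γ, ρ, x, -, hρ, -, -, h_dense⟩ :=
    P.hasSmallBohrSet_or_hasDenseBohrSet_pow half_add_half h_radii hA hA_card (100 * n) le_rfl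
  · calc Fintype.card G ≤ 81 ^ (#Γ * (i + 1)) * #(bohrSet Γ ((1 / 2) ^ i)) :=
          card_le_mul_card_bohrSet_half_pow Γ i
      _ ≤ 81 ^ (100 * n * M₀ * (i + 1)) * #(bohrSet Γ ρ) := by
        gcongr
        · simp
        · exact bohrSet_mono (hi.trans hρ)
      _ ≤ 81 ^ (100 * n * M₀ * (i + 1)) * 2 ^ (2 * n + 4) := by gcongr
  · have hB : (0 : ℝ) < #(bohrSet Γ ρ) :=
      mod_cast card_bohrSet_pos Γ (hρ.trans' (by positivity))
    have h_le_one : (101 / 100 : ℝ) ^ (100 * n) * (1 / 2) ^ n ≤ 1 :=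
      le_of_mul_le_mul_right
        (by simpa using h_dense.trans (translateCount_le_card A x _)) hB
    refine absurd h_le_one (not_le.2 ?_)
    rw [pow_mul, ← mul_pow]
    exact one_lt_pow₀ (by norm_num) (by have := P.two_le_n; lia)

end IncrementParams

end Iteration

/-! ### Choice of parameters -/

section Parameters

variable {n : ℕ}

/-- The number `k` of iterated differences used for sets of density at least `(1 / 2) ^ n`. -/
def iterationCount (n : ℕ) : ℕ := 200 * n ^ 2

/-- The number `m` of Croot–Sisask samples used for sets of density at least `(1 / 2) ^ n`, chosen
so that `m * (1 / (400 * k)) ^ 2 / 2 = 300 * n ^ 2` where `k = iterationCount n`. -/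
def sampleCount (n : ℕ) : ℕ := 600 * 80000 ^ 2 * n ^ 6

/-- The number of characters added in one density increment step for sets of density at least
`(1 / 2) ^ n`. -/
def rankStep (n : ℕ) : ℕ := 1680 * n ^ 2 * sampleCount n

/-- The rank reached after the `100 * n` steps which push the density from `(1 / 2) ^ n` above
`1`. -/
def maxRank (n : ℕ) : ℕ := 100 * n * rankStep n

/-- The relative width `η` at which regular Bohr sets are required, as supplied by
`exists_bohrRegular` for rank `maxRank n` and tolerance `1 / 2 ^ (300 * n ^ 2)`. -/
noncomputable def regularityWidth (n : ℕ) : ℝ := 1 / (14 * (maxRank n + 1) * 2 ^ (300 * n ^ 2))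

/-- The factor `ν` by which radii shrink from one Bohr set to the next. -/
noncomputable def radiusRatio (n : ℕ) : ℝ :=
  regularityWidth n / (4 * iterationCount n * (rankStep n + 1))

lemma two_pow_le_exp (j : ℕ) : (2 : ℝ) ^ j ≤ Real.exp j := by
  have h : (2 : ℝ) ≤ Real.exp 1 := by linarith [Real.add_one_le_exp 1]
  calc (2 : ℝ) ^ j ≤ Real.exp 1 ^ j := by gcongr
    _ = Real.exp j := by rw [← Real.exp_nat_mul, mul_one]

lemma one_div_two_pow_le_div {a b : ℕ} {c : ℝ} (hc : 0 < c) (h : c ≤ 2 ^ (b - a)) (hab : a ≤ b) :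
    1 / 2 ^ b ≤ (1 / 2 : ℝ) ^ a / c := by
  rw [one_div_pow, div_div]
  gcongr
  calc (2 : ℝ) ^ a * c ≤ 2 ^ a * 2 ^ (b - a) := by gcongr
    _ = 2 ^ b := by rw [← pow_add, Nat.add_sub_cancel' hab]

lemma regularityWidth_pos (n : ℕ) : 0 < regularityWidth n := by
  rw [regularityWidth]
  positivity

lemma regularityWidth_le (n : ℕ) : regularityWidth n ≤ 1 / 2 ^ (300 * n ^ 2) := by
  rw [regularityWidth]
  gcongr
  exact le_mul_of_one_le_left (by positivity) (by linarith [(maxRank n).cast_nonneg (α := ℝ)])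

lemma radiusRatio_pos (hn : n ≠ 0) : 0 < radiusRatio n := by
  have hk : 0 < iterationCount n := by rw [iterationCount]; positivity
  have hη := regularityWidth_pos n
  rw [radiusRatio]
  positivity

lemma mul_radiusRatio_le {a : ℝ} (ha : a ≤ 4 * iterationCount n * (rankStep n + 1)) :
    a * radiusRatio n ≤ regularityWidth n := by
  rw [radiusRatio, mul_div_left_comm]
  exact mul_le_of_le_one_right (regularityWidth_pos n).le (div_le_one_of_le₀ ha (by positivity))

lemma sixteen_hundred_mul_iterationCount_le (hn : n ≠ 0) :
    1600 * (iterationCount n : ℝ) ≤ 2 ^ (100 * n ^ 2) := by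
  have hn_sq : 0 < n ^ 2 := by positivity
  have h_two_pow : n ^ 2 ≤ 2 ^ n ^ 2 := Nat.lt_two_pow_self.le
  rw [iterationCount]
  norm_cast
  calc 1600 * (200 * n ^ 2) ≤ 2 ^ 19 * 2 ^ n ^ 2 := by lia
    _ = 2 ^ (19 + n ^ 2) := (pow_add ..).symm
    _ ≤ 2 ^ (100 * n ^ 2) := Nat.pow_le_pow_right two_pos (by lia)

lemma four_mul_exp_neg_sampleCount_le (hn : n ≠ 0) :
    4 * Real.exp (-(sampleCount n * (1 / (400 * iterationCount n) : ℝ) ^ 2 / 2)) ≤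
      (1 / 2) ^ (200 * n ^ 2) / (400 * iterationCount n) := by
  have h_exponent : sampleCount n * (1 / (400 * iterationCount n) : ℝ) ^ 2 / 2 =
      ((300 * n ^ 2 : ℕ) : ℝ) := by
    rw [sampleCount, iterationCount]
    push_cast
    field_simp
    norm_num
  have hk : 0 < (iterationCount n : ℝ) := by rw [iterationCount]; positivity
  have h_two_pow : 1 / 2 ^ (300 * n ^ 2) ≤
      (1 / 2 : ℝ) ^ (200 * n ^ 2) / (1600 * iterationCount n) := by
    refine one_div_two_pow_le_div (by positivity) ?_ (Nat.mul_le_mul_right _ (by norm_num))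
    rw [← Nat.sub_mul]
    exact sixteen_hundred_mul_iterationCount_le hn
  rw [h_exponent, Real.exp_neg, ← div_eq_mul_inv]
  calc 4 / Real.exp ((300 * n ^ 2 : ℕ) : ℝ) ≤ 4 * (1 / 2 ^ (300 * n ^ 2)) := by
        rw [mul_one_div]
        gcongr
        exact two_pow_le_exp _
    _ ≤ 4 * ((1 / 2) ^ (200 * n ^ 2) / (1600 * iterationCount n)) :=
        mul_le_mul_of_nonneg_left h_two_pow zero_le_four
    _ = (1 / 2) ^ (200 * n ^ 2) / (400 * iterationCount n) := by field_simp; norm_num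

lemma two_mul_one_fourth_pow_iterationCount_le (hn : n ≠ 0) :
    2 * (1 / 4 : ℝ) ^ iterationCount n ≤ (1 / 2) ^ (200 * n ^ 2) / 200 := by
  have hn_sq : 0 < n ^ 2 := by positivity
  have h_half : (1 / 2 : ℝ) ^ (200 * n ^ 2) ≤ (1 / 2) ^ 10 :=
    pow_le_pow_of_le_one (by norm_num) (by norm_num) (by lia)
  calc 2 * (1 / 4 : ℝ) ^ iterationCount n
      = 2 * ((1 / 2) ^ (200 * n ^ 2) * (1 / 2) ^ (200 * n ^ 2)) := by
        rw [iterationCount, ← mul_pow]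
        norm_num
    _ ≤ 2 * ((1 / 2) ^ (200 * n ^ 2) * (1 / 2) ^ 10) := by gcongr
    _ ≤ (1 / 2) ^ (200 * n ^ 2) / 200 := by
        linarith [pow_pos (one_half_pos (α := ℝ)) (200 * n ^ 2)]

lemma four_lt_mul_exp_rankStep (hn : n ≠ 0) :
    4 < 1 / 2 * ((1 / 2 : ℝ) ^ (200 * n ^ 2) / 8) ^ sampleCount n *
      Real.exp ((rankStep n + 1) / 8) := by
  have hm : sampleCount n ≠ 0 := by rw [sampleCount]; positivity
  have hn_sq : 0 < n ^ 2 := by positivity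
  have h_rank : 8 * ((200 * n ^ 2 + 10) * sampleCount n) ≤ rankStep n := by
    rw [rankStep, ← mul_assoc]
    exact Nat.mul_le_mul_right _ (by lia)
  have h_exp : (2 : ℝ) ^ ((200 * n ^ 2 + 10) * sampleCount n) ≤
      Real.exp ((rankStep n + 1) / 8) := by
    refine (two_pow_le_exp _).trans (Real.exp_le_exp.2 ?_)
    rify at h_rank
    push_cast
    linarith
  have h_base : (1 / 2 : ℝ) ^ (200 * n ^ 2) / 8 * 2 ^ (200 * n ^ 2 + 10) = 128 := by
    rw [one_div_pow, pow_add]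
    field_simp
    norm_num
  calc (4 : ℝ) < 1 / 2 * 128 ^ sampleCount n := by
        linarith [le_self_pow₀ (show (1 : ℝ) ≤ 128 by norm_num) hm]
    _ = 1 / 2 * ((1 / 2 : ℝ) ^ (200 * n ^ 2) / 8) ^ sampleCount n *
          2 ^ ((200 * n ^ 2 + 10) * sampleCount n) := by
        rw [mul_assoc, pow_mul _ (200 * n ^ 2 + 10), ← mul_pow, h_base]
    _ ≤ 1 / 2 * ((1 / 2 : ℝ) ^ (200 * n ^ 2) / 8) ^ sampleCount n *
          Real.exp ((rankStep n + 1) / 8) := by gcongr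

lemma two_mul_half_pow_sq_le (hn : 2 ≤ n) :
    2 * ((1 / 2 : ℝ) ^ (200 * n ^ 2)) ^ 2 ≤ ((1 / 2) ^ (2 * n + 3)) ^ (80 * n) := by
  have h_exponent : (2 * n + 3) * (80 * n) + 1 ≤ 200 * n ^ 2 * 2 := by nlinarith
  rw [← pow_mul, ← pow_mul]
  calc 2 * (1 / 2 : ℝ) ^ (200 * n ^ 2 * 2) ≤ 2 * (1 / 2) ^ ((2 * n + 3) * (80 * n) + 1) := by
        gcongr 2 * ?_
        exact pow_le_pow_of_le_one (by norm_num) (by norm_num) h_exponent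
    _ = (1 / 2) ^ ((2 * n + 3) * (80 * n)) := by rw [pow_succ]; ring

lemma incrementParams (hn : 2 ≤ n) :
    IncrementParams n (iterationCount n) (sampleCount n) (rankStep n) (regularityWidth n)
      (radiusRatio n) (1 / 2 ^ (300 * n ^ 2)) ((1 / 2) ^ (200 * n ^ 2)) := by
  have hn_ne : n ≠ 0 := by lia
  have hn_sq : 2 * n ≤ n ^ 2 := by nlinarith
  have hk : (1 : ℝ) ≤ iterationCount n := by
    exact_mod_cast show 1 ≤ 200 * n ^ 2 by lia
  have hM₀ : (0 : ℝ) ≤ rankStep n := Nat.cast_nonneg _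
  have h_two_pow {a : ℕ} (ha : a ≤ 200 * n ^ 2) {c : ℝ} (hc : 0 < c) (hc_le : c ≤ 2 ^ 100) :
      1 / 2 ^ (300 * n ^ 2) ≤ (1 / 2 : ℝ) ^ a / c :=
    one_div_two_pow_le_div hc (hc_le.trans (pow_le_pow_right₀ one_le_two (by lia))) (by lia)
  exact {
    two_le_n := hn
    k_ne_zero := by rw [iterationCount]; positivity
    m_ne_zero := by rw [sampleCount]; positivity
    η_pos := regularityWidth_pos n
    η_le_one := (regularityWidth_le n).trans
      (div_le_one_of_le₀ (one_le_pow₀ one_le_two) (by positivity))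
    ν_pos := radiusRatio_pos hn_ne
    four_mul_ν_le := mul_radiusRatio_le (by nlinarith)
    two_mul_k_mul_ν_le := mul_radiusRatio_le (by nlinarith)
    two_mul_M₀_mul_ν_le := mul_radiusRatio_le (by nlinarith)
    M₀_mul_ν_le := (mul_radiusRatio_le (by nlinarith)).trans
      ((regularityWidth_le n).trans (h_two_pow le_rfl (by norm_num) (by norm_num)))
    ε_nonneg := by positivity
    four_mul_ε_le := by linarith [h_two_pow le_rfl (c := 1600) (by norm_num) (by norm_num)]
    ε_le := h_two_pow (by lia) (by norm_num) (by norm_num)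
    σ_pos := by positivity
    σ_le_one := pow_le_one₀ (by norm_num) (by norm_num)
    two_mul_σ_sq_le := two_mul_half_pow_sq_le hn
    four_mul_exp_le := four_mul_exp_neg_sampleCount_le hn_ne
    two_mul_pow_le := two_mul_one_fourth_pow_iterationCount_le hn_ne
    four_lt_mul_exp := four_lt_mul_exp_rankStep hn_ne }

/-- The dyadic logarithm of a lower bound for `radiusRatio n / 2`, up to sign. -/
def radiusExponent (n : ℕ) : ℕ :=
  7 + (maxRank n + 1) + iterationCount n + (rankStep n + 1) + 300 * n ^ 2

lemma half_pow_radiusExponent_le (hn : n ≠ 0) : (1 / 2) ^ radiusExponent n ≤ radiusRatio n / 2 := by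
  have hk : 0 < (iterationCount n : ℝ) := by rw [iterationCount]; positivity
  have natCast_le_two_pow (j : ℕ) : (j : ℝ) ≤ 2 ^ j := mod_cast Nat.lt_two_pow_self.le
  have h_rank := natCast_le_two_pow (maxRank n + 1)
  have h_step := natCast_le_two_pow (rankStep n + 1)
  push_cast at h_rank h_step
  calc (1 / 2 : ℝ) ^ radiusExponent n
      = 1 / (2 ^ 7 * 2 ^ (maxRank n + 1) * 2 ^ iterationCount n * 2 ^ (rankStep n + 1) *
          2 ^ (300 * n ^ 2)) := by
        rw [one_div_pow, radiusExponent, pow_add _ _ (300 * n ^ 2), pow_add _ _ (rankStep n + 1),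
          pow_add _ _ (iterationCount n), pow_add _ 7]
    _ ≤ 1 / (112 * (maxRank n + 1) * iterationCount n * (rankStep n + 1) * 2 ^ (300 * n ^ 2)) := by
        gcongr
        · norm_num
        · exact natCast_le_two_pow _
    _ = radiusRatio n / 2 := by
        rw [radiusRatio, regularityWidth]
        field_simp
        norm_num

lemma exists_forall_exponent_le : ∃ C : ℕ, C ≠ 0 ∧ ∀ n ≠ 0,
    7 * (maxRank n * (radiusExponent n * (7 * (100 * n) + 1) + 1)) + (2 * n + 4) ≤ C * n ^ 19 := by
  obtain ⟨c, hc⟩ : ∃ c, ∀ n, rankStep n = c * n ^ 8 :=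
    ⟨1680 * (600 * 80000 ^ 2), fun n ↦ by rw [rankStep, sampleCount]; ring⟩
  refine ⟨700 * c * ((509 + 101 * c) * 701 + 1) + 6, by lia, fun n hn ↦ ?_⟩
  have one_le (a : ℕ) : 1 ≤ n ^ a := Nat.one_le_pow _ _ (by lia)
  have pow_le {a b : ℕ} (h : a ≤ b) : n ^ a ≤ n ^ b := Nat.pow_le_pow_right (by lia) h
  have h_rank : maxRank n = 100 * c * n ^ 9 := by rw [maxRank, hc]; ring
  have h_radius : radiusExponent n ≤ (509 + 101 * c) * n ^ 9 := by
    rw [radiusExponent, h_rank, hc, iterationCount]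
    nlinarith [one_le 9, pow_le (show 2 ≤ 9 by simp),
      Nat.mul_le_mul_left c (pow_le (show 8 ≤ 9 by simp))]
  have h_steps : radiusExponent n * (7 * (100 * n) + 1) + 1 ≤
      ((509 + 101 * c) * 701 + 1) * n ^ 10 :=
    calc radiusExponent n * (7 * (100 * n) + 1) + 1
        ≤ (509 + 101 * c) * n ^ 9 * (701 * n) + n ^ 10 :=
          add_le_add (Nat.mul_le_mul h_radius (by lia)) (one_le 10)
      _ = ((509 + 101 * c) * 701 + 1) * n ^ 10 := by ring
  calc 7 * (maxRank n * (radiusExponent n * (7 * (100 * n) + 1) + 1)) + (2 * n + 4)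
      ≤ 7 * (100 * c * n ^ 9 * (((509 + 101 * c) * 701 + 1) * n ^ 10)) + 6 * n ^ 19 := by
        gcongr ?_ + ?_
        · rw [h_rank]
          gcongr
        · have := pow_le (show 1 ≤ 19 by simp)
          lia
    _ = (700 * c * ((509 + 101 * c) * 701 + 1) + 6) * n ^ 19 := by ring

end Parameters

/-! ### Roth numbers -/

section RothNumber

variable {G : Type*} [AddCommGroup G] [Fintype G]

lemma hasRegularRadii (n : ℕ) :
    HasRegularRadii G (maxRank n) (regularityWidth n) (1 / 2 ^ (300 * n ^ 2)) := by
  intro Γ hΓ r hr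
  simpa [regularityWidth] using exists_bohrRegular hΓ (pow_ne_zero (300 * n ^ 2) two_ne_zero) hr

lemma exists_half_add_half (hG : Odd (Fintype.card G)) :
    ∃ half : G →+ G, ∀ x, half x + half x = x := by
  obtain ⟨q, hq⟩ := hG
  refine ⟨nsmulAddMonoidHom (q + 1), fun x ↦ ?_⟩
  calc (q + 1) • x + (q + 1) • x = Fintype.card G • x + x := by
        rw [← add_nsmul, ← succ_nsmul, hq]
        congr 1
        ring
    _ = x := by rw [card_nsmul_eq_zero, zero_add]

lemma card_le_two_pow_of_threeAPFree (hG : Odd (Fintype.card G)) {A : Finset G}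
    (hA : ThreeAPFree (A : Set G)) {n : ℕ} (hn : 2 ≤ n)
    (hA_card : (1 / 2 : ℝ) ^ n * Fintype.card G ≤ #A) :
    Fintype.card G ≤
      2 ^ (7 * (maxRank n * (radiusExponent n * (7 * (100 * n) + 1) + 1)) + (2 * n + 4)) := by
  obtain ⟨half, half_add_half⟩ := exists_half_add_half hG
  have h_radius : (1 / 2 : ℝ) ^ (radiusExponent n * (7 * (100 * n) + 1)) ≤
      (radiusRatio n / 2) ^ (7 * (100 * n) + 1) := by
    rw [pow_mul]
    gcongr
    exact half_pow_radiusExponent_le (by lia)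
  calc Fintype.card G
      ≤ 81 ^ (maxRank n * (radiusExponent n * (7 * (100 * n) + 1) + 1)) * 2 ^ (2 * n + 4) :=
        (incrementParams hn).card_le_of_threeAPFree half_add_half (hasRegularRadii n) hA hA_card
          h_radius
    _ ≤ (2 ^ 7) ^ (maxRank n * (radiusExponent n * (7 * (100 * n) + 1) + 1)) * 2 ^ (2 * n + 4) := by
        gcongr
        norm_num
    _ = 2 ^ (7 * (maxRank n * (radiusExponent n * (7 * (100 * n) + 1) + 1)) + (2 * n + 4)) := by
        rw [← pow_mul, ← pow_add]

lemma exists_log_card_le_of_threeAPFree : ∃ C : ℝ, 0 < C ∧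
    ∀ (G : Type*) [AddCommGroup G] [Fintype G], Odd (Fintype.card G) →
      ∀ (A : Finset G), ThreeAPFree (A : Set G) → ∀ n : ℕ, 2 ≤ n →
        (1 / 2 : ℝ) ^ n * Fintype.card G ≤ #A → Real.log (Fintype.card G) ≤ C * n ^ 19 := by
  obtain ⟨C, hC, h_exponent⟩ := exists_forall_exponent_le
  refine ⟨C, by positivity, fun G _ _ hG A hA n hn hA_card ↦ ?_⟩
  have h_card : (Fintype.card G : ℝ) ≤ 2 ^ (C * n ^ 19) :=
    mod_cast (card_le_two_pow_of_threeAPFree hG hA hn hA_card).trans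
      (Nat.pow_le_pow_right two_pos (h_exponent n (by lia)))
  calc Real.log (Fintype.card G) ≤ Real.log (2 ^ (C * n ^ 19)) :=
        Real.log_le_log (mod_cast hG.pos) h_card
    _ = C * n ^ 19 * Real.log 2 := by rw [Real.log_pow]; push_cast; ring
    _ ≤ C * n ^ 19 := mul_le_of_le_one_right (by positivity) (by linarith [Real.log_two_lt_d9])

lemma le_four_mul_exp_of_le_half_pow {n : ℕ} {a C x : ℝ} (hC : 0 < C) (ha : a ≤ (1 / 2) ^ n)
    (hx : 0 ≤ x) (hx_le : x ≤ C * ((n + 2 : ℕ) : ℝ) ^ 19) :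
    a ≤ 4 * Real.exp (-(Real.log 2 / C ^ (1 / 19 : ℝ) * x ^ (1 / 19 : ℝ))) := by
  have h_root : x ^ (1 / 19 : ℝ) / C ^ (1 / 19 : ℝ) ≤ (n + 2 : ℕ) := by
    rw [← Real.div_rpow hx hC.le, one_div,
      Real.rpow_inv_le_iff_of_pos (by positivity) (by positivity) (by norm_num)]
    rw [div_le_iff₀' hC]
    exact_mod_cast hx_le
  have h_log : 0 < Real.log 2 := Real.log_pos one_lt_two
  calc a ≤ (1 / 2) ^ n := ha
    _ = 4 * Real.exp (-(Real.log 2 * (n + 2 : ℕ))) := by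
        rw [Real.exp_neg, Real.exp_mul, Real.exp_log two_pos, Real.rpow_natCast, one_div_pow,
          pow_add]
        field_simp
        norm_num
    _ ≤ 4 * Real.exp (-(Real.log 2 * (x ^ (1 / 19 : ℝ) / C ^ (1 / 19 : ℝ)))) := by gcongr
    _ = 4 * Real.exp (-(Real.log 2 / C ^ (1 / 19 : ℝ) * x ^ (1 / 19 : ℝ))) := by
        rw [div_mul_eq_mul_div, mul_div_assoc]

lemma exists_addRothNumber_univ_le : ∃ c C : ℝ, 0 < c ∧ 0 < C ∧
    ∀ (G : Type*) [AddCommGroup G] [Fintype G] [DecidableEq G], Odd (Fintype.card G) →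
      (addRothNumber (univ : Finset G) : ℝ) ≤
        C * Fintype.card G * Real.exp (-(c * Real.log (Fintype.card G) ^ (1 / 19 : ℝ))) := by
  obtain ⟨C, hC, h_log⟩ := exists_log_card_le_of_threeAPFree
  refine ⟨Real.log 2 / C ^ (1 / 19 : ℝ), 4, div_pos (Real.log_pos one_lt_two) (by positivity),
    four_pos, fun G _ _ _ hG ↦ ?_⟩
  obtain ⟨A, -, hA_card, hA⟩ := addRothNumber_spec (univ : Finset G)
  have hG_pos : (0 : ℝ) < Fintype.card G := mod_cast hG.pos
  rw [← hA_card]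
  rcases A.eq_empty_or_nonempty with rfl | hA_nonempty
  · rw [card_empty, Nat.cast_zero]
    positivity
  have hA_pos : (0 : ℝ) < #A := mod_cast hA_nonempty.card_pos
  have hA_le : (#A : ℝ) / Fintype.card G ≤ 1 :=
    div_le_one_of_le₀ (mod_cast card_le_univ A) hG_pos.le
  obtain ⟨n, h_lt, h_le⟩ := exists_nat_pow_near_of_lt_one (div_pos hA_pos hG_pos) hA_le
    one_half_pos one_half_lt_one
  have h_dense : (1 / 2 : ℝ) ^ (n + 2) * Fintype.card G ≤ #A := by
    rw [← le_div_iff₀ hG_pos]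
    exact (pow_le_pow_of_le_one (by norm_num) (by norm_num) (by lia)).trans h_lt.le
  have h_exp := le_four_mul_exp_of_le_half_pow hC h_le
    (Real.log_nonneg (mod_cast hG.pos)) (h_log G hG A hA (n + 2) (by lia) h_dense)
  rw [div_le_iff₀ hG_pos] at h_exp
  linarith

lemma exp_neg_mul_rpow_le {c r s x : ℝ} (hc : 0 < c) (hr : 0 < r) (hs : 0 < s) (hx : 0 < x) :
    Real.exp (-(c * x ^ r)) ≤ (s / r / c) ^ (s / r) / x ^ s := by
  set t := s / r with ht_def
  have ht : 0 < t := div_pos hs hr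
  have h_rpow : x ^ s = (x ^ r) ^ t := by
    rw [← Real.rpow_mul hx.le, ht_def, mul_div_cancel₀ _ hr.ne']
  rw [Real.exp_neg, inv_le_comm₀ (by positivity) (by positivity), inv_div]
  calc x ^ s / (t / c) ^ t = (c * x ^ r / t) ^ t := by
        rw [h_rpow, ← Real.div_rpow (by positivity) (by positivity), div_div_eq_mul_div, mul_comm c]
    _ ≤ Real.exp (c * x ^ r / t) ^ t := by
        gcongr
        linarith [Real.add_one_le_exp (c * x ^ r / t)]
    _ = Real.exp (c * x ^ r) := by rw [← Real.exp_mul, div_mul_cancel₀ _ ht.ne']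

lemma rothNumberNat_le_addRothNumber_fin (N : ℕ) :
    rothNumberNat N ≤ addRothNumber (univ : Finset (Fin (2 * N + 1))) := by
  have hN : N < 2 * N + 1 := by lia
  rw [← Fin.addRothNumber_eq_rothNumberNat (n := 2 * N) (k := ⟨N, hN⟩) le_rfl]
  exact addRothNumber.mono (subset_univ _)

lemma card_le_rothNumberNat {A : Finset ℕ} {N : ℕ} (hA_mem : ∀ a ∈ A, 1 ≤ a ∧ a ≤ N)
    (hA : ∀ x ∈ A, ∀ y ∈ A, ∀ z ∈ A, x + y = 2 * z → x = y) : #A ≤ rothNumberNat N := by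
  have hA_free : ThreeAPFree (A : Set ℕ) := fun x hx z hz y hy h ↦ by
    have := hA x hx y hy z hz (by lia)
    lia
  have hA_sub : A ⊆ Ico 1 (N + 1) := fun a ha ↦ by
    have := hA_mem a ha
    rw [mem_Ico]
    lia
  calc #A ≤ addRothNumber (Ico 1 (N + 1)) := hA_free.le_addRothNumber hA_sub
    _ = rothNumberNat N := by rw [addRothNumber_Ico, Nat.add_sub_cancel]

end RothNumber

end KelleyMeka

theorem roth_power_saving_general :
    ∃ c C : ℝ, 0 < c ∧ 0 < C ∧ ∀ N : ℕ,
      (rothNumberNat N : ℝ) ≤ C * N * Real.exp (-(c * Real.log N ^ (1 / 19 : ℝ))) := by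
  obtain ⟨c, C, hc, hC, h⟩ := KelleyMeka.exists_addRothNumber_univ_le
  refine ⟨c, 3 * C, hc, by positivity, fun N ↦ ?_⟩
  rcases N.eq_zero_or_pos with rfl | hN
  · rw [rothNumberNat_zero, Nat.cast_zero, mul_zero, zero_mul]
  have hN_real : (1 : ℝ) ≤ N := mod_cast hN
  have h_fin := h (Fin (2 * N + 1)) (by rw [Fintype.card_fin]; exact odd_two_mul_add_one N)
  rw [Fintype.card_fin] at h_fin
  push_cast at h_fin
  calc (rothNumberNat N : ℝ) ≤ addRothNumber (univ : Finset (Fin (2 * N + 1))) :=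
        mod_cast KelleyMeka.rothNumberNat_le_addRothNumber_fin N
    _ ≤ C * (2 * N + 1) * Real.exp (-(c * Real.log (2 * N + 1) ^ (1 / 19 : ℝ))) := h_fin
    _ ≤ C * (3 * N) * Real.exp (-(c * Real.log N ^ (1 / 19 : ℝ))) := by
        gcongr <;> linarith
    _ = 3 * C * N * Real.exp (-(c * Real.log N ^ (1 / 19 : ℝ))) := by ring

/-- **Roth's theorem with a power saving** (Bloom–Sisask, Theorem 1.1).
If `A ⊆ {1, …, N}` contains no non-trivial three-term arithmetic progression
(no `x, y, z ∈ A` with `x + y = 2z` and `x ≠ y`), then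
`|A| ≤ C · N / (log N)^(1 + c)` for absolute constants `c, C > 0`. -/
theorem roth_power_saving :
    ∃ c C : ℝ, 0 < c ∧ 0 < C ∧
      ∀ N : ℕ, 2 ≤ N → ∀ A : Finset ℕ,
        (∀ a ∈ A, 1 ≤ a ∧ a ≤ N) →
        (∀ x ∈ A, ∀ y ∈ A, ∀ z ∈ A, x + y = 2 * z → x = y) →
        (A.card : ℝ) ≤ C * N / Real.log N ^ ((1 : ℝ) + c) := by
  obtain ⟨c, C, hc, hC, h⟩ := roth_power_saving_general
  obtain ⟨K, hK, h_exp⟩ : ∃ K > 0, ∀ x > 0,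
      Real.exp (-(c * x ^ (1 / 19 : ℝ))) ≤ K / x ^ (1 + 1 : ℝ) :=
    ⟨_, by positivity, fun x hx ↦
      KelleyMeka.exp_neg_mul_rpow_le hc (by norm_num) (by norm_num) hx⟩
  refine ⟨1, C * K, one_pos, by positivity, fun N hN A hA_mem hA ↦ ?_⟩
  calc (#A : ℝ) ≤ rothNumberNat N := mod_cast KelleyMeka.card_le_rothNumberNat hA_mem hA
    _ ≤ C * N * Real.exp (-(c * Real.log N ^ (1 / 19 : ℝ))) := h N
    _ ≤ C * N * (K / Real.log N ^ (1 + 1 : ℝ)) := by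
        gcongr
        exact h_exp _ (Real.log_pos (mod_cast hN))
    _ = C * K * N / Real.log N ^ (1 + 1 : ℝ) := by ring
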